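/- Let (U_N)_{N≥1} satisfy Hypothesis (Γ) for a function Γ, and let (γ,σ) be a Lévy pair such that σ has compact support. For each N let M_N be an N×N random Hermitian matrix whose law satisfies E[exp(i·Tr(A·M_N))] = exp( N · E[ Ψ_{γ,σ}( (U_N)* A U_N / N ) ] ) for every N×N Hermitian matrix A. Then the mean spectral distributions of M_N converge weakly, as N → ∞, to a probability measure Λ on ℝ which has finite exponential moments of all orders, i.e. ∫ e^{θ|x|} dΛ(x) < ∞ for every θ > 0; in particular Λ is determined by its moments. -/

import Mathlib

/-!
The proof computes the limits of all moments of the mean spectral distributions and shows that they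
grow slowly enough for the method of moments.

Since `σ` has compact support, the exponent `Ψ` is smooth and its `n`-th derivative is bounded by
`C ^ (n + 1) * (1 + ξ ^ 2)` (`exists_norm_levyPsi_le`). Together with the moments of `U_N` this makes the
Fourier transform of `M_N` smooth along lines, so the entries of `M_N` have all moments (`allMom_trM`).
Differentiating the Fourier transform repeatedly expresses the joint moments of the linear statistics
`Tr(B_j M_N)` as a sum over set partitions `p` of products of cumulants (`moment_cumulant`).

Expand `Tr M_N ^ k` along closed walks and group these by the partition `q` of `{0, …, k-1}` into level
sets. By exchangeability only `q` matters, and the number of walks with level sets `q` is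
`N (N - 1) ⋯ (N - |q| + 1)`, so `E[Tr M_N ^ k]` becomes a sum over pairs `(p, q)`
(`HypGamma.trace_moments`). A pair gives rise to the closed walk `q 0, p 0, q 1, p 1, …` on a bipartite
graph. A connected graph has at most one vertex more than it has edges (`card_reps_le`), and by the
moment bound in Hypothesis (Γ) only the pairs for which equality holds, those whose graph is a tree,
survive division by `N`. A closed walk on a tree crosses each edge equally often in both directions
(`IsTreePair.balanced`), so for tree pairs the moments of `U_N` which occur are expectations of products
of `|U_N(i)| ^ (2 n)`; they converge by Hypothesis (Γ), and the limiting contribution of a pair is at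
most `B ^ k` (`HypGamma.pairTerm_lim`).

There are at most `16 ^ k * ∑ m ≤ k, m ^ (k - m)` tree pairs (`card_treePairs`). This is small compared
with `k!`: the limiting moments `m_k` satisfy `∑ |m_k| θ ^ k / k! < ∞` for all `θ` (`summable_growth`,
`HypGamma.moments_lim`). Hence the characteristic functions converge to an entire function, which is
the characteristic function of a law with all exponential moments (`method_of_moments`).
-/

open MeasureTheory ProbabilityTheory Matrix Filter Topology
open scoped ENNReal

noncomputable section

instance matrixMeasurableSpace {m n α : Type*} [MeasurableSpace α] :
    MeasurableSpace (Matrix m n α) :=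
  inferInstanceAs (MeasurableSpace (m → n → α))

/-- The integrand of the Lévy–Khintchine formula. -/
def levyKernel (t ξ : ℝ) : ℂ :=
  if t = 0 then -(ξ : ℂ) ^ 2 / 2
  else (Complex.exp (Complex.I * t * ξ) - 1 - Complex.I * t * ξ / (1 + (t : ℂ) ^ 2)) *
      ((1 + (t : ℂ) ^ 2) / (t : ℂ) ^ 2)

/-- The Lévy exponent `Ψ_{γ,σ}` of the Lévy pair `(γ, σ)`. -/
def levyExponent (γ : ℝ) (σ : Measure ℝ) (ξ : ℝ) : ℂ :=
  Complex.I * γ * ξ + ∫ t, levyKernel t ξ ∂σ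

/-- The `i`-th entry (`0`-indexed) of the vector `U N ω`, extended by `0`. -/
def entry {Ω : Type*} (U : (N : ℕ) → Ω → Fin N → ℂ) (N : ℕ) (ω : Ω) (i : ℕ) : ℂ :=
  if h : i < N then U N ω ⟨i, h⟩ else 0

/-- Hypothesis (Γ): the entries of `U N` are exchangeable with all moments finite,
the joint moments are `O(N^{p-d})`, and the normalized absolute moments converge to `Γ`,
which is moreover bounded by `C^{n₁+⋯+n_k}`. -/
structure HypGamma {Ω : Type*} [MeasurableSpace Ω] (P : Measure Ω)
    (U : (N : ℕ) → Ω → Fin N → ℂ)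
    (Γ : (k : ℕ) → (Fin k → ℕ) → ℝ) : Prop where
  meas : ∀ N, Measurable (U N)
  exchangeable : ∀ N (e : Equiv.Perm (Fin N)),
    Measure.map (fun ω => fun i => U N ω (e i)) P = Measure.map (U N) P
  moments : ∀ N (i : Fin N) (k : ℕ), Integrable (fun ω => ‖U N ω i‖ ^ k) P
  momBound : ∀ p : ℕ, 1 ≤ p → ∀ idx₁ idx₂ : Fin p → ℕ, ∃ C : ℝ, ∀ᶠ N in atTop,
    ‖∫ ω, (∏ j : Fin p, entry U N ω (idx₁ j)) *
        ∏ j : Fin p, (starRingEnd ℂ) (entry U N ω (idx₂ j)) ∂P‖ ≤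
      C * (N : ℝ) ^ ((p : ℤ) - ((Finset.univ.image idx₁ ∪ Finset.univ.image idx₂).card : ℤ))
  gammaLim : ∀ k : ℕ, 1 ≤ k → ∀ n : Fin k → ℕ, (∀ j, 1 ≤ n j) →
    Tendsto (fun N => ∫ ω, ∏ j : Fin k,
        (‖entry U N ω j‖ ^ (2 * n j) / (N : ℝ) ^ (n j - 1)) ∂P) atTop (𝓝 (Γ k n))
  gammaSymm : ∀ k (n : Fin k → ℕ) (e : Equiv.Perm (Fin k)), Γ k (n ∘ e) = Γ k n
  gammaBound : ∃ C : ℝ, ∀ k : ℕ, 1 ≤ k → ∀ n : Fin k → ℕ, (∀ j, 1 ≤ n j) →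
    Γ k n ≤ C ^ (∑ j, n j)

/-- The empirical spectral distribution of a Hermitian matrix. -/
def ESD {N : ℕ} {M : Matrix (Fin N) (Fin N) ℂ} (hM : M.IsHermitian) : Measure ℝ :=
  (N : ℝ≥0∞)⁻¹ • ∑ i : Fin N, Measure.dirac (hM.eigenvalues i)

/-- Weak convergence of a sequence of measures on `ℝ`, tested against bounded
continuous functions. -/
def TendstoWeakly (μs : ℕ → Measure ℝ) (μ : Measure ℝ) : Prop :=
  ∀ f : BoundedContinuousFunction ℝ ℝ,
    Tendsto (fun n => ∫ x, f x ∂(μs n)) atTop (𝓝 (∫ x, f x ∂μ))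

/-- The law of `M N` is `P_{U_N}^{(μ)}` where `μ` has Lévy pair `(γ, σ)`: the Fourier
transform of `M N` is `A ↦ exp(N E[Ψ_{γ,σ}(U_N* A U_N / N)])`. -/
def HasMatrixLaw {Ω : Type*} [MeasurableSpace Ω] (P : Measure Ω) (γ : ℝ) (σ : Measure ℝ)
    (U : (N : ℕ) → Ω → Fin N → ℂ)
    (M : (N : ℕ) → Ω → Matrix (Fin N) (Fin N) ℂ) : Prop :=
  ∀ N, 1 ≤ N → ∀ A : Matrix (Fin N) (Fin N) ℂ, A.IsHermitian →
    ∫ ω, Complex.exp (Complex.I * (A * M N ω).trace) ∂P =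
      Complex.exp ((N : ℂ) *
        ∫ ω, levyExponent γ σ ((star (U N ω) ⬝ᵥ A.mulVec (U N ω)).re / N) ∂P)

/-! ### The method of moments -/

/-- Taylor estimate for the imaginary exponential, uniform in the real argument. -/
lemma norm_expI_sub_taylor_le (n : ℕ) : ∀ x : ℝ, 0 ≤ x →
    ‖Complex.exp (x * Complex.I) - ∑ j ∈ Finset.range n, (x * Complex.I) ^ j / (j.factorial : ℂ)‖
      ≤ x ^ n / n.factorial := by
  induction n with
  | zero => intro x _; simp [Complex.norm_exp_ofReal_mul_I]
  | succ n ih =>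
    intro x hx
    have hder : ∀ y : ℝ, HasDerivAt (fun y : ℝ => Complex.exp (y * Complex.I) -
        ∑ j ∈ Finset.range (n + 1), (y * Complex.I) ^ j / (j.factorial : ℂ))
        (Complex.I * (Complex.exp (y * Complex.I) -
          ∑ j ∈ Finset.range n, (y * Complex.I) ^ j / (j.factorial : ℂ))) y := by
      intro y
      have h0 : HasDerivAt (fun y : ℝ => (y : ℂ) * Complex.I) Complex.I y := by
        simpa using (Complex.ofRealCLM.hasDerivAt (x := y)).mul_const Complex.I
      have h1 := h0.cexp
      have h2 : HasDerivAt (fun y : ℝ => ∑ j ∈ Finset.range (n + 1),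
          (y * Complex.I) ^ j / (j.factorial : ℂ))
          (∑ j ∈ Finset.range (n + 1), ((j : ℂ) * (y * Complex.I) ^ (j - 1) * Complex.I)
            / (j.factorial : ℂ)) y :=
        HasDerivAt.fun_sum fun j _ => (h0.pow j).div_const _
      refine (h1.sub h2).congr_deriv (Eq.symm ?_)
      rw [Finset.sum_range_succ', mul_sub, Finset.mul_sum]
      simp only [Nat.cast_zero, zero_mul, zero_div, add_zero, Nat.add_sub_cancel]
      congr 1
      · ring
      · refine Finset.sum_congr rfl fun j _ => ?_
        rw [Nat.factorial_succ]
        have : (j.factorial : ℂ) ≠ 0 := by exact_mod_cast j.factorial_ne_zero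
        have : ((j : ℂ) + 1) ≠ 0 := by exact_mod_cast j.succ_ne_zero
        push_cast
        field_simp
    have hB : ∀ y : ℝ, HasDerivAt (fun y : ℝ => y ^ (n + 1) / ((n + 1).factorial : ℝ))
        (y ^ n / n.factorial) y := by
      intro y
      refine ((hasDerivAt_pow (n + 1) y).div_const _).congr_deriv (Eq.symm ?_)
      rw [Nat.factorial_succ]
      have : (n.factorial : ℝ) ≠ 0 := by exact_mod_cast n.factorial_ne_zero
      have : ((n : ℝ) + 1) ≠ 0 := by exact_mod_cast n.succ_ne_zero
      push_cast
      field_simp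
    refine image_norm_le_of_norm_deriv_right_le_deriv_boundary' (a := 0) (b := x)
      (fun y _ => (hder y).continuousAt.continuousWithinAt)
      (fun y _ => (hder y).hasDerivWithinAt) ?_
      (fun y _ => (hB y).continuousAt.continuousWithinAt)
      (fun y _ => (hB y).hasDerivWithinAt) ?_ ⟨hx, le_rfl⟩
    · rw [Finset.sum_range_succ']
      simp
    · intro y hy
      simpa using ih y hy.1

lemma norm_expI_sub_taylor_le' (n : ℕ) (x : ℝ) :
    ‖Complex.exp (x * Complex.I) - ∑ j ∈ Finset.range n, (x * Complex.I) ^ j / (j.factorial : ℂ)‖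
      ≤ |x| ^ n / n.factorial := by
  rcases le_total 0 x with hx | hx
  · rw [abs_of_nonneg hx]; exact norm_expI_sub_taylor_le n x hx
  · have h := norm_expI_sub_taylor_le n (-x) (by linarith)
    rw [abs_of_nonpos hx]
    refine le_trans (le_of_eq ?_) h
    rw [← RCLike.norm_conj]
    simp [← Complex.exp_conj]

lemma charFun_taylor_le (ν : Measure ℝ) [IsProbabilityMeasure ν]
    (hint : ∀ k : ℕ, Integrable (fun x : ℝ => x ^ k) ν) (n : ℕ) (t : ℝ) :
    ‖charFun ν t - ∑ j ∈ Finset.range (2 * n), (t * Complex.I) ^ j / (j.factorial : ℂ)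
        * ((∫ x, x ^ j ∂ν : ℝ) : ℂ)‖ ≤ |t| ^ (2 * n) / (2 * n).factorial * ∫ x, x ^ (2 * n) ∂ν := by
  have hi : ∀ j : ℕ, Integrable (fun x : ℝ => ((t * Complex.I) ^ j / (j.factorial : ℂ))
      * ((x ^ j : ℝ) : ℂ)) ν := fun j => (hint j).ofReal.const_mul _
  have h1 : Integrable (fun x : ℝ => Complex.exp (t * x * Complex.I)) ν := by
    refine (integrable_const (1 : ℝ)).mono' (by fun_prop) (ae_of_all _ fun x => ?_)
    rw [← Complex.ofReal_mul, Complex.norm_exp_ofReal_mul_I]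
  have h2 : charFun ν t - ∑ j ∈ Finset.range (2 * n), (t * Complex.I) ^ j / (j.factorial : ℂ)
        * ((∫ x, x ^ j ∂ν : ℝ) : ℂ) = ∫ x : ℝ, (Complex.exp (t * x * Complex.I) -
        ∑ j ∈ Finset.range (2 * n), ((t * Complex.I) ^ j / (j.factorial : ℂ))
          * ((x ^ j : ℝ) : ℂ)) ∂ν := by
    rw [integral_sub h1 (integrable_finsetSum _ fun j _ => hi j),
      integral_finsetSum _ fun j _ => hi j, charFun_apply_real]
    congr 1
    refine Finset.sum_congr rfl fun j _ => ?_
    rw [integral_const_mul, ← integral_complex_ofReal]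
  rw [h2, ← integral_const_mul]
  refine norm_integral_le_of_norm_le ((hint _).const_mul _) (ae_of_all _ fun x => ?_)
  have := norm_expI_sub_taylor_le' (2 * n) (t * x)
  convert this using 1
  · congr 1
    push_cast
    congr 1
    refine Finset.sum_congr rfl fun j _ => ?_
    ring
  · rw [abs_mul, mul_pow, ← Even.pow_abs (even_two_mul n) x]; ring

/-- Under `∑ |m_k| θ^k / k! < ∞` for all `θ`, convergence of all moments to `m` forces pointwise
convergence of characteristic functions to the entire function with Taylor coefficients `m`. -/
lemma tendsto_charFun_of_moments (μ : ℕ → Measure ℝ) [∀ N, IsProbabilityMeasure (μ N)]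
    (hint : ∀ N k, Integrable (fun x : ℝ => x ^ k) (μ N)) (m : ℕ → ℝ)
    (hm : ∀ k, Tendsto (fun N => ∫ x, x ^ k ∂(μ N)) atTop (𝓝 (m k)))
    (hsum : ∀ θ : ℝ, 0 ≤ θ → Summable fun k : ℕ => |m k| * θ ^ k / k.factorial) (t : ℝ) :
    Tendsto (fun N => charFun (μ N) t) atTop
      (𝓝 (∑' j : ℕ, (t * Complex.I) ^ j / (j.factorial : ℂ) * (m j : ℂ))) := by
  set a : ℕ → ℂ := fun j => (t * Complex.I) ^ j / (j.factorial : ℂ) * (m j : ℂ) with ha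
  have hna : ∀ j, ‖a j‖ = |m j| * |t| ^ j / j.factorial := by
    intro j; simp [ha]; ring
  have hsa : Summable a := by
    refine Summable.of_norm ?_
    simpa only [hna] using hsum |t| (abs_nonneg t)
  have hT := (hsa.hasSum.tendsto_sum_nat).comp (tendsto_id.const_mul_atTop' (two_pos : 0 < 2))
  have hz : Tendsto (fun n : ℕ => |m (2 * n)| * |t| ^ (2 * n) / (2 * n).factorial) atTop (𝓝 0) :=
    (hsum |t| (abs_nonneg t)).tendsto_atTop_zero.comp (tendsto_id.const_mul_atTop' (two_pos : 0 < 2))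
  rw [Metric.tendsto_atTop]
  intro ε hε
  have e1 := (Metric.tendsto_atTop.1 hT (ε / 4) (by positivity))
  obtain ⟨n1, hn1⟩ := e1
  obtain ⟨n2, hn2⟩ := (Metric.tendsto_atTop.1 hz (ε / 4) (by positivity))
  set n := max n1 n2
  have h1 := hn1 n (le_max_left _ _)
  have h2 := hn2 n (le_max_right _ _)
  have hA : Tendsto (fun N => ∑ j ∈ Finset.range (2 * n), (t * Complex.I) ^ j / (j.factorial : ℂ)
        * ((∫ x, x ^ j ∂(μ N) : ℝ) : ℂ)) atTop (𝓝 (∑ j ∈ Finset.range (2 * n), a j)) :=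
    tendsto_finsetSum _ fun j _ => ((Complex.continuous_ofReal.tendsto _).comp (hm j)).const_mul _
  have hB : Tendsto (fun N => |t| ^ (2 * n) / (2 * n).factorial * ∫ x, x ^ (2 * n) ∂(μ N)) atTop
      (𝓝 (|t| ^ (2 * n) / (2 * n).factorial * m (2 * n))) := (hm _).const_mul _
  obtain ⟨N1, hN1⟩ := Metric.tendsto_atTop.1 hA (ε / 4) (by positivity)
  obtain ⟨N2, hN2⟩ := Metric.tendsto_atTop.1 hB (ε / 4) (by positivity)
  refine ⟨max N1 N2, fun N hN => ?_⟩
  have h3 := hN1 N (le_trans (le_max_left _ _) hN)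
  have h4 := hN2 N (le_trans (le_max_right _ _) hN)
  have h5 := charFun_taylor_le (μ N) (hint N) n t
  rw [dist_eq_norm] at h1 h2 h3 h4 ⊢
  simp only [Function.comp, id, sub_zero, Real.norm_eq_abs] at h1 h2 h4
  have h4' := (abs_lt.1 h4).2
  have h2' : |t| ^ (2 * n) / (2 * n).factorial * m (2 * n) < ε / 4 := by
    refine lt_of_le_of_lt (le_trans ?_ (le_abs_self _)) h2
    rw [mul_comm, ← mul_div_assoc]
    gcongr
    exact le_abs_self _
  have h5' : ‖charFun (μ N) t - ∑ j ∈ Finset.range (2 * n), (t * Complex.I) ^ j / (j.factorial : ℂ)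
        * ((∫ x, x ^ j ∂(μ N) : ℝ) : ℂ)‖ < ε / 2 := by linarith
  calc _ = ‖(charFun (μ N) t - ∑ j ∈ Finset.range (2 * n), (t * Complex.I) ^ j / (j.factorial : ℂ)
        * ((∫ x, x ^ j ∂(μ N) : ℝ) : ℂ)) + ((∑ j ∈ Finset.range (2 * n), (t * Complex.I) ^ j / (j.factorial : ℂ)
        * ((∫ x, x ^ j ∂(μ N) : ℝ) : ℂ)) - ∑ j ∈ Finset.range (2 * n), a j)
        + ((∑ j ∈ Finset.range (2 * n), a j) - ∑' j, a j)‖ := by congr 1; ring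
    _ ≤ _ := norm_add₃_le
    _ < ε := by linarith

/-- The method of moments: if the moments converge to `m` and `∑ |m_k| θ^k / k! < ∞` for all `θ`,
then there is weak convergence, and the limit has all exponential moments and is determined by
its moments. -/
theorem method_of_moments (μ : ℕ → Measure ℝ) [∀ N, IsProbabilityMeasure (μ N)]
    (hint : ∀ N k, Integrable (fun x : ℝ => x ^ k) (μ N)) (m : ℕ → ℝ)
    (hm : ∀ k, Tendsto (fun N => ∫ x, x ^ k ∂(μ N)) atTop (𝓝 (m k)))
    (hsum : ∀ θ : ℝ, 0 ≤ θ → Summable fun k : ℕ => |m k| * θ ^ k / k.factorial) :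
    ∃ Λ : Measure ℝ, IsProbabilityMeasure Λ ∧
      (∀ θ : ℝ, 0 < θ → Integrable (fun x => Real.exp (θ * |x|)) Λ) ∧
      (∀ Λ' : Measure ℝ, IsProbabilityMeasure Λ' →
        (∀ k : ℕ, Integrable (fun x => x ^ k) Λ') →
        (∀ k : ℕ, ∫ x, x ^ k ∂Λ' = ∫ x, x ^ k ∂Λ) → Λ' = Λ) ∧
      ∀ f : BoundedContinuousFunction ℝ ℝ,
        Tendsto (fun N => ∫ x, f x ∂(μ N)) atTop (𝓝 (∫ x, f x ∂Λ)) := by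
  set φ : ℝ → ℂ := fun t => ∑' j : ℕ, (t * Complex.I) ^ j / (j.factorial : ℂ) * (m j : ℂ) with hφ
  have hch : ∀ t, Tendsto (fun N => charFun (μ N) t) atTop (𝓝 (φ t)) :=
    tendsto_charFun_of_moments μ hint m hm hsum
  have hφc : ContinuousAt φ 0 := by
    have : ContinuousOn φ (Set.Icc (-1) 1) := by
      refine continuousOn_tsum (fun j => by fun_prop) (hsum 1 zero_le_one) fun j t ht => ?_
      have : |t| ≤ 1 := abs_le.2 ht
      simp only [norm_mul, norm_div, norm_pow, Complex.norm_I, mul_one, Complex.norm_real,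
        Real.norm_eq_abs, Complex.norm_natCast, one_pow]
      rw [div_mul_eq_mul_div, mul_comm]
      gcongr
      exact mul_le_of_le_one_right (abs_nonneg _) (pow_le_one₀ (abs_nonneg _) this)
    exact this.continuousAt (Icc_mem_nhds (by norm_num) (by norm_num))
  have htight := isTightMeasureSet_of_tendsto_charFun hφc hch
  set ν : ℕ → ProbabilityMeasure ℝ := fun N => ⟨μ N, inferInstance⟩ with hν
  have hcomp : IsCompact (closure (Set.range ν)) := by
    refine isCompact_closure_of_isTightMeasureSet ?_
    convert htight using 1
    ext κ
    constructor
    · rintro ⟨_, ⟨N, rfl⟩, rfl⟩; exact ⟨N, rfl⟩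
    · rintro ⟨N, rfl⟩; exact ⟨ν N, ⟨N, rfl⟩, rfl⟩
  obtain ⟨Λ, -, s, hs, hΛ⟩ := hcomp.tendsto_subseq (x := ν)
    (fun n => subset_closure (Set.mem_range_self n))
  have hΛφ : ∀ t, charFun (Λ : Measure ℝ) t = φ t := by
    intro t
    have h1 := ProbabilityMeasure.tendsto_iff_tendsto_charFun.1 hΛ t
    exact tendsto_nhds_unique h1 ((hch t).comp hs.tendsto_atTop)
  have hconv : Tendsto ν atTop (𝓝 Λ) := by
    refine ProbabilityMeasure.tendsto_iff_tendsto_charFun.2 fun t => ?_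
    rw [hΛφ]; exact hch t
  have hweak := ProbabilityMeasure.tendsto_iff_forall_integral_tendsto.1 hconv
  -- Even moments of the limit are bounded by truncation.
  have hmom : ∀ n : ℕ, ∫⁻ x, ENNReal.ofReal (x ^ (2 * n)) ∂(Λ : Measure ℝ)
      ≤ ENNReal.ofReal (m (2 * n)) := by
    intro n
    have htr : ∀ R : ℕ, ∫⁻ x, ENNReal.ofReal (min (x ^ (2 * n)) R) ∂(Λ : Measure ℝ)
        ≤ ENNReal.ofReal (m (2 * n)) := by
      intro R
      have hnn : ∀ x : ℝ, 0 ≤ min (x ^ (2 * n)) (R : ℝ) := fun x =>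
        le_min ((even_two_mul n).pow_nonneg x) R.cast_nonneg
      let f : BoundedContinuousFunction ℝ ℝ := BoundedContinuousFunction.ofNormedAddCommGroup
        (fun x => min (x ^ (2 * n)) (R : ℝ)) (by fun_prop) R (fun x => by
          rw [Real.norm_eq_abs, abs_of_nonneg (hnn x)]; exact min_le_right _ _)
      have h1 := hweak f
      have h2 : ∫ x, f x ∂(Λ : Measure ℝ) ≤ m (2 * n) :=
        le_of_tendsto_of_tendsto' h1 (hm (2 * n)) fun N =>
          integral_mono (f.integrable _) (hint N _) fun x => min_le_left _ _
      have h3 := ofReal_integral_eq_lintegral_ofReal (f.integrable (Λ : Measure ℝ)) (ae_of_all _ hnn)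
      exact h3.symm.le.trans (ENNReal.ofReal_le_ofReal h2)
    have hlim : ∀ x : ℝ, ENNReal.ofReal (x ^ (2 * n)) ≤
        liminf (fun R : ℕ => ENNReal.ofReal (min (x ^ (2 * n)) R)) atTop := by
      intro x
      refine le_of_eq (Tendsto.liminf_eq ?_).symm
      refine tendsto_const_nhds.congr' ?_
      filter_upwards [eventually_ge_atTop ⌈x ^ (2 * n)⌉₊] with R hR
      rw [min_eq_left ((Nat.le_ceil _).trans (by exact_mod_cast hR))]
    calc _ ≤ ∫⁻ x, liminf (fun R : ℕ => ENNReal.ofReal (min (x ^ (2 * n)) R)) atTop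
          ∂(Λ : Measure ℝ) := lintegral_mono hlim
      _ ≤ _ := lintegral_liminf_le (fun R => by fun_prop)
      _ ≤ ENNReal.ofReal (m (2 * n)) :=
        (liminf_le_liminf (Eventually.of_forall htr)).trans (by simp)
  have hexp : ∀ θ : ℝ, 0 < θ → Integrable (fun x => Real.exp (θ * |x|)) (Λ : Measure ℝ) := by
    intro θ hθ
    refine ⟨by fun_prop, ?_⟩
    rw [hasFiniteIntegral_iff_norm]
    have hS : Summable fun n : ℕ => |m (2 * n)| * θ ^ (2 * n) / (2 * n).factorial :=
      (hsum θ hθ.le).comp_injective (i := fun n : ℕ => 2 * n) (fun a b h => by simpa using h)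
    -- `exp (θ|x|) ≤ 2 cosh (θ x)`, and `cosh` only involves even moments.
    have hb : ∀ x : ℝ, ENNReal.ofReal ‖Real.exp (θ * |x|)‖ ≤
        2 * ∑' n : ℕ, ENNReal.ofReal (θ ^ (2 * n) / (2 * n).factorial) *
          ENNReal.ofReal (x ^ (2 * n)) := by
      intro x
      have hc := Real.hasSum_cosh (θ * x)
      have h1 : ∑' n : ℕ, ENNReal.ofReal (θ ^ (2 * n) / (2 * n).factorial) *
          ENNReal.ofReal (x ^ (2 * n)) = ENNReal.ofReal (Real.cosh (θ * x)) := by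
        rw [← hc.tsum_eq, ENNReal.ofReal_tsum_of_nonneg _ hc.summable]
        · refine tsum_congr fun n => ?_
          rw [← ENNReal.ofReal_mul (by positivity), mul_pow]
          congr 1; ring
        · intro n
          exact div_nonneg ((even_two_mul n).pow_nonneg _) (by positivity)
      rw [h1, show (2 : ℝ≥0∞) = ENNReal.ofReal 2 by simp, ← ENNReal.ofReal_mul (by norm_num)]
      refine ENNReal.ofReal_le_ofReal ?_
      rw [Real.norm_eq_abs, Real.abs_exp, ← Real.cosh_abs, abs_mul, abs_of_pos hθ, Real.cosh_eq]
      have := Real.exp_pos (-(θ * |x|))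
      linarith
    calc _ ≤ ∫⁻ x, 2 * ∑' n : ℕ, ENNReal.ofReal (θ ^ (2 * n) / (2 * n).factorial) *
          ENNReal.ofReal (x ^ (2 * n)) ∂(Λ : Measure ℝ) := lintegral_mono hb
      _ = 2 * ∑' n : ℕ, ENNReal.ofReal (θ ^ (2 * n) / (2 * n).factorial) *
          ∫⁻ x, ENNReal.ofReal (x ^ (2 * n)) ∂(Λ : Measure ℝ) := by
        rw [lintegral_const_mul _ (by fun_prop), lintegral_tsum (fun n => by fun_prop)]
        congr 1
        refine tsum_congr fun n => ?_
        rw [lintegral_const_mul _ (by fun_prop)]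
      _ ≤ 2 * ∑' n : ℕ, ENNReal.ofReal (|m (2 * n)| * θ ^ (2 * n) / (2 * n).factorial) := by
        gcongr with n
        refine (mul_le_mul_right (hmom n) _).trans ?_
        rw [← ENNReal.ofReal_mul (by positivity)]
        refine ENNReal.ofReal_le_ofReal ?_
        rw [mul_comm, ← mul_div_assoc]
        gcongr
        exact le_abs_self _
      _ < ∞ := by
        rw [← ENNReal.ofReal_tsum_of_nonneg (fun n => by positivity) hS]
        exact ENNReal.mul_lt_top (by simp) ENNReal.ofReal_lt_top
  refine ⟨Λ, inferInstance, hexp, ?_, fun f => hweak f⟩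
  intro Λ' hΛ' hint' hmom'
  have hintΛ : ∀ k : ℕ, Integrable (fun x : ℝ => x ^ k) (Λ : Measure ℝ) := by
    intro k
    refine ((hexp 1 one_pos).const_mul (k.factorial : ℝ)).mono' (by fun_prop)
      (ae_of_all _ fun x => ?_)
    have := Real.pow_div_factorial_le_exp |x| (abs_nonneg x) k
    rw [div_le_iff₀ (by positivity)] at this
    rw [norm_pow, Real.norm_eq_abs, one_mul, mul_comm]
    exact this
  -- Both characteristic functions are the limit of the same Taylor polynomials.
  have hsumΛ : ∀ θ : ℝ, 0 ≤ θ → Summable fun k : ℕ =>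
      |∫ x, x ^ k ∂(Λ : Measure ℝ)| * θ ^ k / k.factorial := by
    intro θ hθ
    have hE := hexp (θ + 1) (by linarith)
    refine summable_of_sum_range_le (c := ∫ x, Real.exp ((θ + 1) * |x|) ∂(Λ : Measure ℝ))
      (fun k => by positivity) fun n => ?_
    have hik : ∀ k : ℕ, Integrable (fun x : ℝ => |x| ^ k * θ ^ k / k.factorial) (Λ : Measure ℝ) :=
      fun k => by
        have := (hintΛ k).abs
        simp only [abs_pow] at this
        exact (this.mul_const _).div_const _
    calc _ ≤ ∑ k ∈ Finset.range n, ∫ x, |x| ^ k * θ ^ k / k.factorial ∂(Λ : Measure ℝ) := by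
          refine Finset.sum_le_sum fun k _ => ?_
          rw [integral_div, integral_mul_const]
          gcongr
          refine abs_integral_le_integral_abs.trans (le_of_eq ?_)
          simp only [abs_pow]
      _ = ∫ x, ∑ k ∈ Finset.range n, |x| ^ k * θ ^ k / k.factorial ∂(Λ : Measure ℝ) :=
          (integral_finsetSum _ fun k _ => hik k).symm
      _ ≤ _ := by
          refine integral_mono (integrable_finsetSum _ fun k _ => hik k) hE fun x => ?_
          calc _ = ∑ k ∈ Finset.range n, (θ * |x|) ^ k / k.factorial := by
                refine Finset.sum_congr rfl fun k _ => ?_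
                rw [mul_pow]; ring
            _ ≤ Real.exp (θ * |x|) := Real.sum_le_exp_of_nonneg (by positivity) n
            _ ≤ _ := by
                gcongr
                linarith
  have key := fun (ρ : Measure ℝ) (_ : IsProbabilityMeasure ρ)
    (hρ : ∀ k : ℕ, Integrable (fun x => x ^ k) ρ)
    (hρm : ∀ k : ℕ, ∫ x, x ^ k ∂ρ = ∫ x, x ^ k ∂(Λ : Measure ℝ)) (t : ℝ) =>
    tendsto_nhds_unique tendsto_const_nhds
      (tendsto_charFun_of_moments (fun _ => ρ) (fun _ => hρ) (fun k => ∫ x, x ^ k ∂(Λ : Measure ℝ))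
        (fun k => by rw [hρm k]; exact tendsto_const_nhds) hsumΛ t)
  refine Measure.ext_of_charFun (funext fun t => ?_)
  rw [key Λ' hΛ' hint' hmom' t, key Λ inferInstance hintΛ (fun _ => rfl) t]

/-! ### Moments from smoothness of the Fourier transform -/

/-- Differentiation of a weighted characteristic function under the integral sign. -/
lemma hasDerivAt_weighted_charFun {Ω : Type*} [MeasurableSpace Ω] {P : Measure Ω}
    {X : Ω → ℝ} (hX : AEMeasurable X P) {w : Ω → ℂ} (hw : Integrable w P)
    (hwX : Integrable (fun ω => w ω * X ω) P) (s : ℝ) :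
    HasDerivAt (fun s : ℝ => ∫ ω, w ω * Complex.exp (Complex.I * (s * X ω)) ∂P)
      (∫ ω, (Complex.I * (w ω * X ω)) * Complex.exp (Complex.I * (s * X ω)) ∂P) s := by
  have hn : ∀ (s : ℝ) ω, ‖Complex.exp (Complex.I * (s * X ω))‖ = 1 := fun s ω => by
    rw [mul_comm, ← Complex.ofReal_mul, Complex.norm_exp_ofReal_mul_I]
  have hm : ∀ s : ℝ, AEStronglyMeasurable (fun ω => Complex.exp (Complex.I * (s * X ω))) P :=
    fun s => AEMeasurable.aestronglyMeasurable (by fun_prop)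
  refine (hasDerivAt_integral_of_dominated_loc_of_deriv_le (μ := P)
    (F := fun (s : ℝ) ω => w ω * Complex.exp (Complex.I * (s * X ω)))
    (F' := fun (s : ℝ) ω => (Complex.I * (w ω * X ω)) * Complex.exp (Complex.I * (s * X ω)))
    (bound := fun ω => ‖w ω * X ω‖) (s := Set.univ) (x₀ := s) Filter.univ_mem ?_ ?_ ?_ ?_ ?_ ?_).2
  · exact Eventually.of_forall fun s => hw.aestronglyMeasurable.mul (hm s)
  · refine hw.norm.mono' (hw.aestronglyMeasurable.mul (hm s)) (ae_of_all _ fun ω => ?_)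
    rw [norm_mul, hn, mul_one]
  · exact (hwX.aestronglyMeasurable.const_mul _).mul (hm s)
  · refine ae_of_all _ fun ω s _ => ?_
    rw [norm_mul, hn, mul_one, norm_mul, Complex.norm_I, one_mul]
  · exact hwX.norm
  · refine ae_of_all _ fun ω s _ => ?_
    have h0 : HasDerivAt (fun s : ℝ => Complex.I * ((s : ℂ) * X ω)) (Complex.I * (1 * X ω)) s :=
      ((Complex.ofRealCLM.hasDerivAt (x := s)).mul_const _).const_mul _
    exact (h0.cexp.const_mul (w ω)).congr_deriv (by ring)

/-- Symmetric second differences of a smooth function are `O(h²)`. -/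
lemma exists_second_diff_bound {f : ℝ → ℂ} (hf : ContDiff ℝ ((⊤ : ℕ∞) : WithTop ℕ∞) f) :
    ∃ C : ℝ, ∀ h ∈ Set.Icc (0 : ℝ) 1, ‖f h + f (-h) - 2 * f 0‖ ≤ C * h ^ 2 := by
  have hd : Differentiable ℝ f := hf.differentiable (by simp)
  have hf1 : ContDiff ℝ ((⊤ : ℕ∞) : WithTop ℕ∞) (deriv f) := (contDiff_infty_iff_deriv.1 hf).2
  have hd1 : Differentiable ℝ (deriv f) := hf1.differentiable (by simp)
  have hc2 : Continuous (deriv (deriv f)) := (contDiff_infty_iff_deriv.1 hf1).2.continuous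
  obtain ⟨K, hK⟩ := (isCompact_Icc (a := (-1 : ℝ)) (b := 1)).exists_bound_of_continuousOn
    hc2.continuousOn
  have hlip : ∀ x ∈ Set.Icc (-1 : ℝ) 1, ∀ y ∈ Set.Icc (-1 : ℝ) 1,
      ‖deriv f x - deriv f y‖ ≤ K * ‖x - y‖ := fun x hx y hy =>
    (convex_Icc (-1 : ℝ) 1).norm_image_sub_le_of_norm_deriv_le (fun z _ => hd1 z) hK hy hx
  refine ⟨K, fun h hh => ?_⟩
  have hder : ∀ y : ℝ, HasDerivAt (fun y => f y + f (-y) - 2 * f 0) (deriv f y - deriv f (-y)) y := by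
    intro y
    have h1 := (hd y).hasDerivAt
    have h2 : HasDerivAt (fun y => f (-y)) (-deriv f (-y)) y := by
      exact ((hd (-y)).hasDerivAt.scomp y (hasDerivAt_neg y)).congr_deriv (by simp)
    exact ((h1.add h2).sub_const _).congr_deriv (by ring)
  have hB : ∀ y : ℝ, HasDerivAt (fun y => K * y ^ 2) (K * (2 * y)) y := by
    intro y
    exact ((hasDerivAt_pow 2 y).const_mul K).congr_deriv (by simp)
  refine image_norm_le_of_norm_deriv_right_le_deriv_boundary' (a := 0) (b := 1)
      (fun y _ => (hder y).continuousAt.continuousWithinAt)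
      (fun y _ => (hder y).hasDerivWithinAt) ?_
      (fun y _ => (hB y).continuousAt.continuousWithinAt)
      (fun y _ => (hB y).hasDerivWithinAt) ?_ hh
  · simp; ring_nf
  · intro y hy
    have hy0 := hy.1
    have hy1 := hy.2
    have := hlip y ⟨by linarith, by linarith⟩ (-y) ⟨by linarith, by linarith⟩
    rwa [Real.norm_eq_abs, show y - -y = 2 * y by ring, abs_of_nonneg (by linarith)] at this

/-- If the Fourier transform `s ↦ E[w exp(i s X)]` of a weight `w ≥ 0` is smooth, then `X ^ 2` is
integrable against `w`. The expectation of `w (2 - 2 cos (h X)) / h ^ 2` is minus a second difference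
quotient, hence bounded, and Fatou's lemma applies as `h → 0`. -/
lemma integrable_mul_sq_of_contDiff {Ω : Type*} [MeasurableSpace Ω] {P : Measure Ω}
    {X : Ω → ℝ} (hX : Measurable X) {w : Ω → ℝ} (hwm : Measurable w) (hw0 : ∀ ω, 0 ≤ w ω)
    (hw : Integrable w P)
    (hf : ContDiff ℝ ((⊤ : ℕ∞) : WithTop ℕ∞) (fun s : ℝ => ∫ ω, (w ω : ℂ) * Complex.exp (Complex.I * (s * X ω)) ∂P)) :
    Integrable (fun ω => w ω * X ω ^ 2) P := by
  set f := fun s : ℝ => ∫ ω, (w ω : ℂ) * Complex.exp (Complex.I * (s * X ω)) ∂P with hfdef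
  obtain ⟨C, hC⟩ := exists_second_diff_bound hf
  set h : ℕ → ℝ := fun n => 1 / ((n : ℝ) + 1) with hh
  have hpos : ∀ n, 0 < h n := fun n => by positivity
  have hle : ∀ n, h n ≤ 1 := fun n => by
    rw [hh]; simp only; rw [div_le_one (by positivity)]; linarith [n.cast_nonneg (α := ℝ)]
  have hlim0 : Tendsto h atTop (𝓝 0) := tendsto_one_div_add_atTop_nhds_zero_nat
  set G : ℕ → Ω → ℝ := fun n ω => w ω * ((2 - 2 * Real.cos (h n * X ω)) / h n ^ 2) with hG
  have hG0 : ∀ n ω, 0 ≤ G n ω := fun n ω =>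
    mul_nonneg (hw0 ω) (div_nonneg (by linarith [Real.cos_le_one (h n * X ω)]) (by positivity))
  have hGm : ∀ n, Measurable (G n) := fun n => by
    simp only [hG]; fun_prop
  have hci : ∀ s : ℝ, Integrable (fun ω => (w ω : ℂ) * Complex.exp (Complex.I * (s * X ω))) P := by
    intro s
    refine hw.norm.mono' (AEMeasurable.aestronglyMeasurable (by fun_prop)) (ae_of_all _ fun ω => ?_)
    rw [norm_mul, mul_comm Complex.I, ← Complex.ofReal_mul, Complex.norm_exp_ofReal_mul_I, mul_one,
      Complex.norm_real]
  have hGi : ∀ n, Integrable (G n) P := by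
    intro n
    refine (hw.const_mul (4 / h n ^ 2)).mono' (hGm n).aestronglyMeasurable (ae_of_all _ fun ω => ?_)
    rw [Real.norm_eq_abs, abs_of_nonneg (hG0 n ω)]
    simp only [hG]
    rw [mul_comm]
    have := hw0 ω
    gcongr
    linarith [Real.neg_one_le_cos (h n * X ω)]
  have hGint : ∀ n, ∫ ω, G n ω ∂P ≤ C := by
    intro n
    have h1 : ((∫ ω, G n ω ∂P : ℝ) : ℂ) = -(f (h n) + f (-(h n)) - 2 * f 0) / (h n : ℂ) ^ 2 := by
      rw [← integral_complex_ofReal]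
      simp only [hfdef]
      have i12 : Integrable (fun ω => (w ω : ℂ) * Complex.exp (Complex.I * ((h n : ℝ) * X ω)) +
          (w ω : ℂ) * Complex.exp (Complex.I * ((-h n : ℝ) * X ω))) P := (hci (h n)).add (hci (-h n))
      rw [← integral_const_mul, ← integral_add (hci _) (hci _), ← integral_sub i12
        ((hci _).const_mul _), ← integral_neg, ← integral_div]
      refine integral_congr_ae (ae_of_all _ fun ω => ?_)
      simp only [hG]
      push_cast
      rw [Complex.cos]
      have : (h n : ℂ) ≠ 0 := by exact_mod_cast (hpos n).ne'
      field_simp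
      simp
      ring_nf
    have h2 : ‖((∫ ω, G n ω ∂P : ℝ) : ℂ)‖ ≤ C := by
      rw [h1, norm_div, norm_neg, norm_pow, Complex.norm_real, Real.norm_eq_abs,
        abs_of_pos (hpos n), div_le_iff₀ (by have := hpos n; positivity)]
      exact hC _ ⟨(hpos n).le, hle n⟩
    rw [Complex.norm_real] at h2
    exact (le_abs_self _).trans h2
  have hptw : ∀ ω, Tendsto (fun n => G n ω) atTop (𝓝 (w ω * X ω ^ 2)) := by
    intro ω
    refine Tendsto.const_mul _ ?_
    have hd : HasDerivAt (fun y : ℝ => Real.sin (y * (X ω / 2))) (X ω / 2) 0 := by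
      have := ((hasDerivAt_id (0 : ℝ)).mul_const (X ω / 2)).sin
      simpa using this
    have hs := (hasDerivAt_iff_tendsto_slope.1 hd)
    have hh' : Tendsto h atTop (𝓝[≠] 0) :=
      tendsto_nhdsWithin_of_tendsto_nhds_of_eventually_within _ hlim0
        (Eventually.of_forall fun n => (hpos n).ne')
    have h3 := ((hs.comp hh').pow 2).const_mul 4
    have h4 : (4 : ℝ) * (X ω / 2) ^ 2 = X ω ^ 2 := by ring
    rw [h4] at h3
    refine h3.congr fun n => ?_
    simp only [Function.comp, slope_def_field, zero_mul, Real.sin_zero, sub_zero]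
    have : h n * X ω = 2 * (h n * (X ω / 2)) := by ring
    rw [this, Real.cos_two_mul, Real.cos_sq']
    ring
  refine ⟨by fun_prop, ?_⟩
  rw [hasFiniteIntegral_iff_ofReal (ae_of_all _ fun ω => mul_nonneg (hw0 ω) (sq_nonneg _))]
  calc ∫⁻ ω, ENNReal.ofReal (w ω * X ω ^ 2) ∂P
      = ∫⁻ ω, liminf (fun n => ENNReal.ofReal (G n ω)) atTop ∂P := by
        refine lintegral_congr fun ω => ?_
        exact ((ENNReal.continuous_ofReal.tendsto _).comp (hptw ω)).liminf_eq.symm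
    _ ≤ liminf (fun n => ∫⁻ ω, ENNReal.ofReal (G n ω) ∂P) atTop :=
        lintegral_liminf_le fun n => (hGm n).ennreal_ofReal
    _ ≤ ENNReal.ofReal C := by
        refine (liminf_le_liminf (v := fun _ => ENNReal.ofReal C)
          (Eventually.of_forall fun n => ?_)).trans (by simp)
        rw [← ofReal_integral_eq_lintegral_ofReal (hGi n) (ae_of_all _ (hG0 n))]
        exact ENNReal.ofReal_le_ofReal (hGint n)
    _ < ∞ := ENNReal.ofReal_lt_top

/-- By induction: the Fourier transform of the weight `w X ^ 2` is minus the second derivative of that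
of `w`, so it is smooth again. -/
lemma integrable_mul_pow_of_contDiff {Ω : Type*} [MeasurableSpace Ω] {P : Measure Ω}
    {X : Ω → ℝ} (hX : Measurable X) (n : ℕ) : ∀ {w : Ω → ℝ} (_ : Measurable w) (_ : ∀ ω, 0 ≤ w ω)
    (_ : Integrable w P)
    (_ : ContDiff ℝ ((⊤ : ℕ∞) : WithTop ℕ∞) (fun s : ℝ => ∫ ω, (w ω : ℂ) * Complex.exp (Complex.I * (s * X ω)) ∂P)),
    Integrable (fun ω => w ω * X ω ^ (2 * n)) P := by
  induction n with
  | zero => intro w _ _ hw _; simpa using hw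
  | succ n ih =>
    intro w hwm hw0 hw hf
    have h2 := integrable_mul_sq_of_contDiff hX hwm hw0 hw hf
    have h1 : Integrable (fun ω => w ω * X ω) P := by
      refine (hw.add h2).mono' (by fun_prop) (ae_of_all _ fun ω => ?_)
      rw [norm_mul, Real.norm_eq_abs, abs_of_nonneg (hw0 ω), Real.norm_eq_abs]
      have : |X ω| ≤ 1 + X ω ^ 2 := by
        rw [← sq_abs]; nlinarith [sq_nonneg (|X ω| - 1), abs_nonneg (X ω)]
      calc w ω * |X ω| ≤ w ω * (1 + X ω ^ 2) := mul_le_mul_of_nonneg_left this (hw0 ω)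
        _ = _ := by simp; ring
    have hwc : Integrable (fun ω => (w ω : ℂ)) P := hw.ofReal
    have h1c : Integrable (fun ω => (w ω : ℂ) * X ω) P := by
      simpa using h1.ofReal (𝕜 := ℂ)
    have h2c : Integrable (fun ω => (w ω : ℂ) * X ω * X ω) P := by
      have := h2.ofReal (𝕜 := ℂ)
      simpa [pow_two, mul_assoc] using this
    have hd1 := fun s => hasDerivAt_weighted_charFun hX.aemeasurable hwc h1c s
    have hd2 := fun s => hasDerivAt_weighted_charFun (w := fun ω => Complex.I * (w ω * X ω))
      hX.aemeasurable (h1c.const_mul _) (by simpa [mul_assoc] using h2c.const_mul Complex.I) s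
    have e1 := funext fun s => (hd1 s).deriv
    have e2 := funext fun s => (hd2 s).deriv
    have c1 := (contDiff_infty_iff_deriv.1 hf).2
    rw [e1] at c1
    have c2 := (contDiff_infty_iff_deriv.1 c1).2
    rw [e2] at c2
    have c3 := c2.neg
    have := ih (w := fun ω => w ω * X ω ^ 2) (by fun_prop)
      (fun ω => mul_nonneg (hw0 ω) (sq_nonneg _)) h2 (by
        have heq : (fun s : ℝ => ∫ ω, ((w ω * X ω ^ 2 : ℝ) : ℂ) *
            Complex.exp (Complex.I * (s * X ω)) ∂P) = fun s : ℝ =>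
            -∫ ω, Complex.I * (Complex.I * ((w ω : ℂ) * X ω) * X ω) *
              Complex.exp (Complex.I * (s * X ω)) ∂P := by
          funext s
          rw [← integral_neg]
          refine integral_congr_ae (ae_of_all _ fun ω => ?_)
          simp only
          push_cast
          linear_combination (w ω * X ω ^ 2 * Complex.exp (Complex.I * (s * X ω))) * Complex.I_sq
        rw [heq]
        exact c3)
    refine this.congr (ae_of_all _ fun ω => ?_)
    simp only
    ring

/-! ### Derivatives of the Lévy exponent -/

/-- The `n`-th derivative in `ξ` of the Lévy–Khintchine integrand. -/
def levyKer : ℕ → ℝ → ℝ → ℂ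
  | 0, t, ξ => levyKernel t ξ
  | 1, t, ξ => if t = 0 then -(ξ : ℂ)
      else Complex.I * (Complex.exp (Complex.I * t * ξ) * (1 + (t : ℂ) ^ 2) - 1) / t
  | n + 2, t, ξ => Complex.I ^ (n + 2) * (t : ℂ) ^ n * (1 + (t : ℂ) ^ 2) *
      Complex.exp (Complex.I * t * ξ)

lemma hasDerivAt_levyKer (n : ℕ) (t ξ : ℝ) :
    HasDerivAt (fun ξ => levyKer n t ξ) (levyKer (n + 1) t ξ) ξ := by
  have hid : HasDerivAt (fun ξ : ℝ => (ξ : ℂ)) 1 ξ := Complex.ofRealCLM.hasDerivAt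
  have hlin : HasDerivAt (fun ξ : ℝ => Complex.I * t * (ξ : ℂ)) (Complex.I * t * 1) ξ :=
    hid.const_mul _
  have hexp := hlin.cexp
  match n with
  | 0 =>
    simp only [levyKer, levyKernel]
    split_ifs with h
    · exact ((hid.pow 2).neg.div_const 2).congr_deriv (by simp; ring)
    · have ht : (t : ℂ) ≠ 0 := by exact_mod_cast h
      have ht2 : (1 + (t : ℂ) ^ 2) ≠ 0 := by
        have : (1 + t ^ 2 : ℝ) ≠ 0 := by positivity
        exact_mod_cast this
      refine (((hexp.sub_const 1).sub (hlin.div_const (1 + (t : ℂ) ^ 2))).mul_const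
        ((1 + (t : ℂ) ^ 2) / (t : ℂ) ^ 2)).congr_deriv ?_
      field_simp
  | 1 =>
    simp only [levyKer]
    split_ifs with h
    · refine hid.neg.congr_deriv ?_
      simp [h, Complex.I_sq]
    · have ht : (t : ℂ) ≠ 0 := by exact_mod_cast h
      refine ((((hexp.mul_const (1 + (t : ℂ) ^ 2)).sub_const 1).const_mul
        Complex.I).div_const (t : ℂ)).congr_deriv ?_
      field_simp
      ring
  | n + 2 =>
    simp only [levyKer]
    refine (hexp.const_mul _).congr_deriv ?_
    ring

lemma measurable_levyKer (n : ℕ) (ξ : ℝ) : Measurable fun t => levyKer n t ξ := by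
  match n with
  | 0 =>
    simp only [levyKer, levyKernel]
    exact Measurable.ite (measurableSet_singleton 0) (by fun_prop) (by fun_prop)
  | 1 =>
    simp only [levyKer]
    exact Measurable.ite (measurableSet_singleton 0) (by fun_prop) (by fun_prop)
  | n + 2 =>
    simp only [levyKer]
    fun_prop

lemma norm_levyKer_two_le (n : ℕ) {R t : ℝ} (hR : 1 ≤ R) (ht : |t| ≤ R) (ξ : ℝ) :
    ‖levyKer (n + 2) t ξ‖ ≤ R ^ n * (2 * R ^ 2) := by
  simp only [levyKer]
  have h1 : ‖Complex.exp (Complex.I * t * ξ)‖ = 1 := by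
    rw [mul_assoc, mul_comm, ← Complex.ofReal_mul, Complex.norm_exp_ofReal_mul_I]
  have h2 : ‖(1 + (t : ℂ) ^ 2)‖ ≤ 2 * R ^ 2 := by
    refine (norm_add_le _ _).trans ?_
    rw [norm_pow, Complex.norm_real, Real.norm_eq_abs, norm_one]
    nlinarith [abs_nonneg t]
  rw [norm_mul, norm_mul, norm_mul, h1, norm_pow, norm_pow, Complex.norm_I, Complex.norm_real,
    Real.norm_eq_abs, one_pow, one_mul, mul_one]
  gcongr

lemma norm_levyKer_sub_le {f f' : ℝ → ℂ} (hf : ∀ x, HasDerivAt f (f' x) x) (h0 : f 0 = 0)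
    {C : ℝ} (ξ : ℝ) (hC : ∀ x, |x| ≤ |ξ| → ‖f' x‖ ≤ C) : ‖f ξ‖ ≤ C * |ξ| := by
  have := (convex_Icc (-|ξ|) |ξ|).norm_image_sub_le_of_norm_hasDerivWithin_le
    (f := f) (f' := f') (C := C) (x := 0) (y := ξ)
    (fun x _ => (hf x).hasDerivWithinAt) (fun x hx => hC x (abs_le.2 hx))
    ⟨by simp, by simp⟩ ⟨neg_abs_le ξ, le_abs_self ξ⟩
  simpa [h0] using this

/-- From the second derivative on, the factor `t⁻²` cancels and the bound is immediate; the kernel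
and its first derivative are then bounded by integration from `0`. -/
lemma norm_levyKer_le (n : ℕ) {R t : ℝ} (hR : 1 ≤ R) (ht : |t| ≤ R) (ξ : ℝ) :
    ‖levyKer n t ξ‖ ≤ (2 * R) ^ (n + 2) * (1 + ξ ^ 2) := by
  have h1 : ∀ ξ, ‖levyKer 1 t ξ‖ ≤ R + 2 * R ^ 2 * |ξ| := by
    intro ξ
    have h10 : levyKer 1 t 0 = Complex.I * t := by
      simp only [levyKer]
      split_ifs with h
      · simp [h]
      · have ht : (t : ℂ) ≠ 0 := by exact_mod_cast h
        field_simp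
        simp
    have := norm_levyKer_sub_le (f := fun x => levyKer 1 t x - levyKer 1 t 0)
      (f' := fun x => levyKer 2 t x) (fun x => (hasDerivAt_levyKer 1 t x).sub_const _) (by simp)
      ξ (fun x _ => by simpa using norm_levyKer_two_le 0 hR ht x)
    have h3 : ‖levyKer 1 t 0‖ ≤ R := by simpa [h10] using ht
    have h4 := norm_add_le (levyKer 1 t ξ - levyKer 1 t 0) (levyKer 1 t 0)
    rw [sub_add_cancel] at h4
    linarith
  have hx : |ξ| ≤ 1 + ξ ^ 2 := by
    rw [← sq_abs]; nlinarith [sq_nonneg (|ξ| - 1), abs_nonneg ξ]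
  have hx2 : (1 : ℝ) ≤ 1 + ξ ^ 2 := by nlinarith [sq_nonneg ξ]
  match n with
  | 0 =>
    have := norm_levyKer_sub_le (f := fun x => levyKer 0 t x)
      (f' := fun x => levyKer 1 t x) (C := R + 2 * R ^ 2 * |ξ|)
      (fun x => hasDerivAt_levyKer 0 t x) (by simp [levyKer, levyKernel])
      ξ (fun x hx => (h1 x).trans (by gcongr))
    refine this.trans ?_
    have e : (R + 2 * R ^ 2 * |ξ|) * |ξ| = R * |ξ| + 2 * R ^ 2 * ξ ^ 2 := by
      rw [← sq_abs ξ]; ring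
    rw [e]
    have hRR : R ≤ R ^ 2 := by nlinarith
    have e2 : (2 * R) ^ (0 + 2) * (1 + ξ ^ 2) = R ^ 2 * (1 + ξ ^ 2) + R ^ 2 * 3 +
      2 * R ^ 2 * ξ ^ 2 + R ^ 2 * ξ ^ 2 := by ring
    have e3 := mul_le_mul hRR hx (abs_nonneg ξ) (by positivity)
    have e4 : 0 ≤ R ^ 2 * 3 := by positivity
    have e5 : 0 ≤ R ^ 2 * ξ ^ 2 := by positivity
    linarith
  | 1 =>
    refine (h1 ξ).trans ?_
    have h2 : R + 2 * R ^ 2 * |ξ| ≤ R * (1 + ξ ^ 2) + 2 * R ^ 2 * (1 + ξ ^ 2) := by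
      gcongr
      nlinarith
    refine h2.trans ?_
    have h3 : R + 2 * R ^ 2 ≤ (2 * R) ^ (1 + 2) := by
      have h31 : R ≤ R ^ 3 := le_self_pow₀ hR (by norm_num)
      have h32 : R ^ 2 ≤ R ^ 3 := pow_le_pow_right₀ hR (by norm_num)
      have e : (2 * R) ^ (1 + 2) = 8 * R ^ 3 := by ring
      rw [e]
      linarith
    nlinarith [mul_le_mul_of_nonneg_right h3 (zero_le_one.trans hx2)]
  | n + 2 =>
    refine (norm_levyKer_two_le n hR ht ξ).trans ?_
    have h5 : R ^ n * (2 * R ^ 2) ≤ (2 * R) ^ (n + 2 + 2) := by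
      have h6 : (1 : ℝ) ≤ 2 ^ n := one_le_pow₀ (by norm_num)
      have h7 : (1 : ℝ) ≤ R ^ 2 := one_le_pow₀ hR
      have : (2 * R) ^ (n + 2 + 2) = R ^ n * (2 * R ^ 2) * (2 ^ n * (8 * R ^ 2)) := by ring
      rw [this]
      refine le_mul_of_one_le_right (by positivity) ?_
      nlinarith
    calc R ^ n * (2 * R ^ 2) ≤ (2 * R) ^ (n + 2 + 2) := h5
      _ ≤ _ := le_mul_of_one_le_right (by positivity) hx2

/-- The `n`-th derivative of the Lévy exponent. -/
def levyPsi (γ : ℝ) (σ : Measure ℝ) (n : ℕ) (ξ : ℝ) : ℂ :=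
  (match n with
    | 0 => Complex.I * γ * ξ
    | 1 => Complex.I * γ
    | _ + 2 => 0) + ∫ t, levyKer n t ξ ∂σ

lemma levyPsi_zero (γ : ℝ) (σ : Measure ℝ) : levyPsi γ σ 0 = levyExponent γ σ := rfl

section
variable {γ : ℝ} {σ : Measure ℝ} [IsFiniteMeasure σ]

lemma hasDerivAt_levyPsi (hσ : ∃ R : ℝ, σ (Set.Icc (-R) R)ᶜ = 0) (n : ℕ) (ξ : ℝ) :
    HasDerivAt (levyPsi γ σ n) (levyPsi γ σ (n + 1) ξ) ξ := by
  obtain ⟨R₀, hR₀⟩ := hσ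
  set R := max R₀ 1 with hRdef
  have hR : 1 ≤ R := le_max_right _ _
  have hae : ∀ᵐ t ∂σ, |t| ≤ R := by
    have : ∀ᵐ t ∂σ, t ∈ Set.Icc (-R₀) R₀ := hR₀
    filter_upwards [this] with t ht
    exact (abs_le.2 ht).trans (le_max_left _ _)
  have hint : ∀ n ξ, Integrable (fun t => levyKer n t ξ) σ := fun n ξ =>
    (integrable_const ((2 * R) ^ (n + 2) * (1 + ξ ^ 2))).mono'
      (measurable_levyKer n ξ).aestronglyMeasurable
      (hae.mono fun t ht => norm_levyKer_le n hR ht ξ)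
  have hI : HasDerivAt (fun ξ => ∫ t, levyKer n t ξ ∂σ) (∫ t, levyKer (n + 1) t ξ ∂σ) ξ := by
    refine (hasDerivAt_integral_of_dominated_loc_of_deriv_le (μ := σ)
      (F := fun ξ t => levyKer n t ξ) (F' := fun ξ t => levyKer (n + 1) t ξ)
      (bound := fun _ => (2 * R) ^ (n + 3) * (1 + (|ξ| + 1) ^ 2))
      (Metric.ball_mem_nhds ξ one_pos) ?_ (hint _ _) (hint _ _).aestronglyMeasurable
      ?_ (integrable_const _) ?_).2
    · exact Eventually.of_forall fun ξ => (hint _ _).aestronglyMeasurable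
    · refine hae.mono fun t ht x hx => (norm_levyKer_le (n + 1) hR ht x).trans ?_
      have hx' : |x| ≤ |ξ| + 1 := by
        rw [Metric.mem_ball, Real.dist_eq] at hx
        have := abs_sub_abs_le_abs_sub x ξ
        linarith
      rw [← sq_abs x]
      gcongr
    · exact ae_of_all _ fun t x _ => hasDerivAt_levyKer n t x
  have hid : HasDerivAt (fun ξ : ℝ => (ξ : ℂ)) 1 ξ := Complex.ofRealCLM.hasDerivAt
  match n with
  | 0 => exact ((hid.const_mul (Complex.I * γ)).congr_deriv (by simp)).add hI
  | 1 => exact (hasDerivAt_const ξ (Complex.I * (γ : ℂ))).add hI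
  | n + 2 => exact (hasDerivAt_const ξ (0 : ℂ)).add hI

/-- The derivatives of the exponent grow geometrically in `n` and polynomially in `ξ`. The geometric
growth is where the compact support of `σ` is needed. -/
lemma exists_norm_levyPsi_le (γ : ℝ) (hσ : ∃ R : ℝ, σ (Set.Icc (-R) R)ᶜ = 0) :
    ∃ C : ℝ, 1 ≤ C ∧ ∀ n ξ, ‖levyPsi γ σ n ξ‖ ≤ C ^ (n + 1) * (1 + ξ ^ 2) := by
  obtain ⟨R₀, hR₀⟩ := hσ
  set R := max R₀ 1 with hRdef
  have hR : 1 ≤ R := le_max_right _ _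
  have hae : ∀ᵐ t ∂σ, |t| ≤ R := by
    have : ∀ᵐ t ∂σ, t ∈ Set.Icc (-R₀) R₀ := hR₀
    filter_upwards [this] with t ht
    exact (abs_le.2 ht).trans (le_max_left _ _)
  set s := σ.real Set.univ
  have hs : 0 ≤ s := measureReal_nonneg
  set D := |γ| + s + 1
  have hD : 1 ≤ D := by have := abs_nonneg γ; simp only [D]; linarith
  refine ⟨D * (2 * R) ^ 2, by nlinarith, fun n ξ => ?_⟩
  have h1 : ‖∫ t, levyKer n t ξ ∂σ‖ ≤ s * ((2 * R) ^ (n + 2) * (1 + ξ ^ 2)) := by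
    have := norm_integral_le_of_norm_le_const (hae.mono fun t ht => norm_levyKer_le n hR ht ξ)
    rwa [mul_comm] at this
  have hx : |ξ| ≤ 1 + ξ ^ 2 := by
    rw [← sq_abs]; nlinarith [sq_nonneg (|ξ| - 1), abs_nonneg ξ]
  have hx2 : (1 : ℝ) ≤ 1 + ξ ^ 2 := by nlinarith [sq_nonneg ξ]
  have hR3 : (1 : ℝ) ≤ (2 * R) ^ n := one_le_pow₀ (by linarith)
  have hR2 : (1 : ℝ) ≤ (2 * R) ^ (n + 2) := one_le_pow₀ (by linarith)
  have h2 : ‖levyPsi γ σ n ξ‖ ≤ |γ| * (1 + ξ ^ 2) + s * ((2 * R) ^ (n + 2) * (1 + ξ ^ 2)) := by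
    unfold levyPsi
    refine (norm_add_le _ _).trans (add_le_add ?_ h1)
    match n with
    | 0 => simp; gcongr
    | 1 => simpa using le_mul_of_one_le_right (abs_nonneg γ) hx2
    | n + 2 => simp; positivity
  calc _ ≤ _ := h2
    _ ≤ |γ| * ((2 * R) ^ (n + 2) * (1 + ξ ^ 2)) + s * ((2 * R) ^ (n + 2) * (1 + ξ ^ 2)) := by
      gcongr
      exact le_mul_of_one_le_left (by positivity) hR2
    _ ≤ D * ((2 * R) ^ (n + 2) * (1 + ξ ^ 2)) := by
      have : 0 ≤ (2 * R) ^ (n + 2) * (1 + ξ ^ 2) := by positivity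
      simp only [D]; nlinarith
    _ ≤ (D * (2 * R) ^ 2) ^ (n + 1) * (1 + ξ ^ 2) := by
      have e : (D * (2 * R) ^ 2) ^ (n + 1) = D * (2 * R) ^ (n + 2) * (D ^ n * (2 * R) ^ n) := by
        rw [mul_pow, ← pow_mul, pow_succ D]
        ring
      rw [e, ← mul_assoc]
      exact mul_le_mul_of_nonneg_right (le_mul_of_one_le_right (by positivity)
        (one_le_mul_of_one_le_of_one_le (one_le_pow₀ hD) hR3)) (by positivity)

lemma continuous_levyPsi (hσ : ∃ R : ℝ, σ (Set.Icc (-R) R)ᶜ = 0) (n : ℕ) :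
    Continuous (levyPsi γ σ n) :=
  continuous_iff_continuousAt.2 fun ξ => (hasDerivAt_levyPsi hσ n ξ).continuousAt

lemma levyPsi_zero_zero : levyPsi γ σ 0 0 = 0 := by
  simp [levyPsi, levyKer, levyKernel]

end

/-! ### Set partitions -/

/-- The least elements of the blocks of the set partition of `{0, …, k-1}` encoded by `p`. -/
def reps (p : ℕ → ℕ) (k : ℕ) : Finset ℕ := (Finset.range k).filter fun r => p r = r

/-- The block with least element `r`. -/
def block (p : ℕ → ℕ) (k r : ℕ) : Finset ℕ := (Finset.range k).filter fun j => p j = r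

open Classical in
/-- The set partitions of `{0, …, k-1}`, a partition being encoded by the map which sends every
`j < k` to the least element of its block and every `j ≥ k` to `0`. -/
def canon : ℕ → Finset (ℕ → ℕ)
  | 0 => {fun _ => 0}
  | k + 1 => (canon k).biUnion fun p => (insert k (reps p k)).image (Function.update p k)

lemma mem_reps {p : ℕ → ℕ} {k r : ℕ} : r ∈ reps p k ↔ r < k ∧ p r = r := by simp [reps]

lemma mem_block {p : ℕ → ℕ} {k r j : ℕ} : j ∈ block p k r ↔ j < k ∧ p j = r := by simp [block]

lemma mem_canon {k : ℕ} : ∀ {p : ℕ → ℕ}, p ∈ canon k ↔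
    (∀ j < k, p j ≤ j ∧ p (p j) = p j) ∧ ∀ j, k ≤ j → p j = 0 := by
  induction k with
  | zero =>
    intro p
    simp only [canon, Finset.mem_singleton]
    constructor
    · rintro rfl; simp
    · rintro ⟨-, h⟩; funext j; exact h j (Nat.zero_le _)
  | succ k ih =>
    intro p
    simp only [canon, Finset.mem_biUnion, Finset.mem_image, Finset.mem_insert, mem_reps]
    constructor
    · rintro ⟨p', hp', r, hr, rfl⟩
      obtain ⟨h1, h2⟩ := ih.1 hp'
      refine ⟨fun j hj => ?_, fun j hj => ?_⟩
      · rcases Nat.lt_succ_iff_lt_or_eq.1 hj with h | rfl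
        · have := h1 j h
          rw [Function.update_of_ne h.ne]
          rw [Function.update_of_ne (by omega)]
          exact this
        · rw [Function.update_self]
          rcases hr with rfl | ⟨h3, h4⟩
          · simp
          · rw [Function.update_of_ne h3.ne]
            exact ⟨h3.le, h4⟩
      · rw [Function.update_of_ne (by omega)]
        exact h2 j (by omega)
    · rintro ⟨h1, h2⟩
      refine ⟨Function.update p k 0, ih.2 ⟨fun j hj => ?_, fun j hj => ?_⟩, p k, ?_, ?_⟩
      · have := h1 j (by omega)
        rw [Function.update_of_ne hj.ne, Function.update_of_ne (by omega)]
        exact this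
      · rcases hj.eq_or_lt with rfl | h
        · simp
        · rw [Function.update_of_ne h.ne']
          exact h2 j h
      · have := h1 k (by omega)
        rcases this.1.eq_or_lt with h | h
        · exact Or.inl h
        · right
          rw [Function.update_of_ne h.ne]
          exact ⟨h, this.2⟩
      · simp

open Classical in
/-- A partition of `{0, …, k}` arises from one of `{0, …, k-1}` by letting `k` form a block of its own
or by adding it to an existing block. -/
lemma sum_canon_succ (f : Finset ℕ → ℂ) (k : ℕ) :
    ∑ p ∈ canon (k + 1), ∏ r ∈ reps p (k + 1), f (block p (k + 1) r) =
      ∑ p ∈ canon k, (f {k} * ∏ r ∈ reps p k, f (block p k r) +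
        ∑ r₀ ∈ reps p k, f (insert k (block p k r₀)) *
          ∏ r ∈ (reps p k).erase r₀, f (block p k r)) := by
  rw [canon, Finset.sum_biUnion]
  swap
  · intro p hp p' hp' hne
    rw [Function.onFun, Finset.disjoint_left]
    rintro x hx hx'
    simp only [Finset.mem_image] at hx hx'
    obtain ⟨r, -, rfl⟩ := hx
    obtain ⟨r', -, h⟩ := hx'
    apply hne
    funext j
    by_cases hj : j = k
    · subst hj
      rw [(mem_canon.1 hp).2 j le_rfl, (mem_canon.1 hp').2 j le_rfl]
    · have := congrFun h j
      rw [Function.update_of_ne hj, Function.update_of_ne hj] at this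
      exact this.symm
  refine Finset.sum_congr rfl fun p hp => ?_
  obtain ⟨h1, h2⟩ := mem_canon.1 hp
  rw [Finset.sum_image (fun a _ b _ h => by simpa using congrFun h k),
    Finset.sum_insert (by simp [mem_reps])]
  congr 1
  · have e1 : reps (Function.update p k k) (k + 1) = insert k (reps p k) := by
      ext r
      simp only [mem_reps, Finset.mem_insert]
      by_cases hr : r = k
      · subst hr; simp
      · rw [Function.update_of_ne hr]; omega
    have e2 : block (Function.update p k k) (k + 1) k = {k} := by
      ext j
      simp only [mem_block, Finset.mem_singleton]
      by_cases hj : j = k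
      · subst hj; simp
      · rw [Function.update_of_ne hj]
        constructor
        · rintro ⟨h3, h4⟩
          have := (h1 j (by omega)).1
          omega
        · intro h; omega
    rw [e1, Finset.prod_insert (by simp [mem_reps]), e2]
    congr 1
    refine Finset.prod_congr rfl fun r hr => ?_
    congr 1
    ext j
    simp only [mem_block]
    have := (mem_reps.1 hr).1
    by_cases hj : j = k
    · subst hj; simp; omega
    · rw [Function.update_of_ne hj]; omega
  · refine Finset.sum_congr rfl fun r₀ hr₀ => ?_
    obtain ⟨h3, h4⟩ := mem_reps.1 hr₀
    have e1 : reps (Function.update p k r₀) (k + 1) = reps p k := by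
      ext r
      simp only [mem_reps]
      by_cases hr : r = k
      · subst hr; simp; omega
      · rw [Function.update_of_ne hr]; omega
    have e2 : block (Function.update p k r₀) (k + 1) r₀ = insert k (block p k r₀) := by
      ext j
      simp only [mem_block, Finset.mem_insert]
      by_cases hj : j = k
      · subst hj; simp
      · rw [Function.update_of_ne hj]; omega
    rw [e1, ← Finset.mul_prod_erase _ _ hr₀, e2]
    congr 1
    refine Finset.prod_congr rfl fun r hr => ?_
    congr 1
    have hne := (Finset.mem_erase.1 hr).1
    ext j
    simp only [mem_block]
    by_cases hj : j = k
    · subst hj; simp; omega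
    · rw [Function.update_of_ne hj]; omega

/-! ### Random variables with all moments -/

/-- A complex random variable with finite absolute moments of all orders. -/
structure AllMom {Ω : Type*} [MeasurableSpace Ω] (P : Measure Ω) (X : Ω → ℂ) : Prop where
  meas : Measurable X
  int : ∀ k : ℕ, Integrable (fun ω => ‖X ω‖ ^ k) P

namespace AllMom
variable {Ω : Type*} [MeasurableSpace Ω] {P : Measure Ω} {X Y : Ω → ℂ}

lemma integrable (hX : AllMom P X) : Integrable X P := by
  have := hX.int 1
  simp only [pow_one] at this
  exact (integrable_norm_iff hX.meas.aestronglyMeasurable).1 this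

lemma mono (hX : AllMom P X) (hY : Measurable Y) (h : ∀ ω, ‖Y ω‖ ≤ ‖X ω‖) : AllMom P Y where
  meas := hY
  int k := (hX.int k).mono' (by fun_prop) (ae_of_all _ fun ω => by
    rw [norm_pow, norm_norm]
    have := h ω
    gcongr)

lemma const [IsFiniteMeasure P] (c : ℂ) : AllMom P (fun _ : Ω => c) where
  meas := measurable_const
  int _ := integrable_const _

lemma add (hX : AllMom P X) (hY : AllMom P Y) : AllMom P (fun ω => X ω + Y ω) where
  meas := hX.meas.add hY.meas
  int k := by
    have h1 := hX.meas
    have h2 := hY.meas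
    refine (((hX.int k).add (hY.int k)).const_mul (2 ^ (k - 1))).mono' (by fun_prop)
      (ae_of_all _ fun ω => ?_)
    rw [norm_pow, norm_norm]
    calc ‖X ω + Y ω‖ ^ k ≤ (‖X ω‖ + ‖Y ω‖) ^ k := by gcongr; exact norm_add_le _ _
      _ ≤ _ := add_pow_le (norm_nonneg _) (norm_nonneg _) k

lemma mul (hX : AllMom P X) (hY : AllMom P Y) : AllMom P (fun ω => X ω * Y ω) where
  meas := hX.meas.mul hY.meas
  int k := by
    have h1 := hX.meas
    have h2 := hY.meas
    refine ((hX.int (2 * k)).add (hY.int (2 * k))).mono' (by fun_prop) (ae_of_all _ fun ω => ?_)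
    rw [norm_pow, norm_norm, norm_mul, mul_pow, Pi.add_apply, mul_comm 2, pow_mul, pow_mul]
    nlinarith [sq_nonneg (‖X ω‖ ^ k - ‖Y ω‖ ^ k), sq_nonneg (‖X ω‖ ^ k), sq_nonneg (‖Y ω‖ ^ k)]

lemma norm (hX : AllMom P X) : AllMom P (fun ω => (‖X ω‖ : ℂ)) :=
  hX.mono (Complex.measurable_ofReal.comp hX.meas.norm) (fun ω => by simp)

lemma conj (hX : AllMom P X) : AllMom P (fun ω => (starRingEnd ℂ) (X ω)) :=
  hX.mono (Complex.continuous_conj.measurable.comp hX.meas) (fun ω => by simp)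

lemma re (hX : AllMom P X) : AllMom P (fun ω => ((X ω).re : ℂ)) :=
  hX.mono (Complex.measurable_ofReal.comp (Complex.measurable_re.comp hX.meas))
    (fun ω => by simpa using Complex.abs_re_le_norm _)

lemma const_mul [IsFiniteMeasure P] (c : ℂ) (hX : AllMom P X) : AllMom P (fun ω => c * X ω) :=
  (const c).mul hX

lemma pow [IsFiniteMeasure P] (hX : AllMom P X) (n : ℕ) : AllMom P (fun ω => X ω ^ n) := by
  induction n with
  | zero => simpa using const 1
  | succ n ih => simpa only [pow_succ] using ih.mul hX

lemma sum [IsFiniteMeasure P] {ι : Type*} {s : Finset ι} {X : ι → Ω → ℂ}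
    (h : ∀ i ∈ s, AllMom P (X i)) : AllMom P (fun ω => ∑ i ∈ s, X i ω) := by
  classical
  induction s using Finset.induction_on with
  | empty => simpa using const 0
  | insert a s ha ih =>
    simp only [Finset.sum_insert ha]
    exact (h a (by simp)).add (ih fun i hi => h i (by simp [hi]))

lemma prod [IsFiniteMeasure P] {ι : Type*} {s : Finset ι} {X : ι → Ω → ℂ}
    (h : ∀ i ∈ s, AllMom P (X i)) : AllMom P (fun ω => ∏ i ∈ s, X i ω) := by
  classical
  induction s using Finset.induction_on with
  | empty => simpa using const 1
  | insert a s ha ih =>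
    simp only [Finset.prod_insert ha]
    exact (h a (by simp)).mul (ih fun i hi => h i (by simp [hi]))

end AllMom

section psi
variable {Ω : Type*} [MeasurableSpace Ω] {P : Measure Ω} [IsProbabilityMeasure P]
  {γ : ℝ} {σ : Measure ℝ} [IsFiniteMeasure σ]

lemma allMom_psi (hσ : ∃ R : ℝ, σ (Set.Icc (-R) R)ᶜ = 0) (n : ℕ) {a : Ω → ℝ}
    (ha : AllMom P (fun ω => (a ω : ℂ))) (ham : Measurable a) :
    AllMom P (fun ω => levyPsi γ σ n (a ω)) := by
  obtain ⟨C, hC1, hC⟩ := exists_norm_levyPsi_le γ hσ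
  have : AllMom P (fun ω => (C ^ (n + 1) : ℝ) * (1 + (a ω : ℂ) ^ 2)) :=
    AllMom.const_mul _ ((AllMom.const 1).add (ha.pow 2))
  refine this.mono ((continuous_levyPsi hσ n).measurable.comp ham) fun ω => ?_
  refine (hC n (a ω)).trans (le_of_eq ?_)
  have h : ((C ^ (n + 1) : ℝ) * (1 + (a ω : ℂ) ^ 2)) = ((C ^ (n + 1) * (1 + a ω ^ 2) : ℝ) : ℂ) := by
    push_cast; ring
  rw [h, Complex.norm_real, Real.norm_eq_abs, abs_of_nonneg (by positivity)]

/-- Differentiation of `E[ψ_n(a + s h) Y]` in `s`. -/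
lemma hasDerivAt_expect_psi (hσ : ∃ R : ℝ, σ (Set.Icc (-R) R)ᶜ = 0) (n : ℕ) {a h : Ω → ℝ}
    {Y : Ω → ℂ} (ha : AllMom P (fun ω => (a ω : ℂ))) (ham : Measurable a)
    (hh : AllMom P (fun ω => (h ω : ℂ))) (hhm : Measurable h) (hY : AllMom P Y) (s₀ : ℝ) :
    HasDerivAt (fun s : ℝ => ∫ ω, levyPsi γ σ n (a ω + s * h ω) * Y ω ∂P)
      (∫ ω, levyPsi γ σ (n + 1) (a ω + s₀ * h ω) * (Y ω * h ω) ∂P) s₀ := by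
  obtain ⟨C, hC1, hC⟩ := exists_norm_levyPsi_le γ hσ
  have hmom : ∀ s : ℝ, AllMom P (fun ω => ((a ω + s * h ω : ℝ) : ℂ)) := fun s => by
    have := ha.add (AllMom.const_mul (s : ℂ) hh)
    simpa using this
  have hmeas : ∀ n (s : ℝ), AllMom P (fun ω => levyPsi γ σ n (a ω + s * h ω)) := fun n s =>
    allMom_psi hσ n (hmom s) (ham.add (hhm.const_mul s))
  have hbound : AllMom P (fun ω => ((C ^ (n + 2) : ℝ) : ℂ) *
      (1 + ((‖(a ω : ℂ)‖ : ℂ) + ((|s₀| + 1 : ℝ) : ℂ) * (‖(h ω : ℂ)‖ : ℂ)) ^ 2) * (Y ω * h ω)) :=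
    (AllMom.const_mul _ ((AllMom.const 1).add ((ha.norm.add (AllMom.const_mul _ hh.norm)).pow 2))).mul
      (hY.mul hh)
  refine (hasDerivAt_integral_of_dominated_loc_of_deriv_le (μ := P)
    (F := fun (s : ℝ) ω => levyPsi γ σ n (a ω + s * h ω) * Y ω)
    (F' := fun (s : ℝ) ω => levyPsi γ σ (n + 1) (a ω + s * h ω) * (Y ω * h ω))
    (Metric.ball_mem_nhds s₀ one_pos)
    (Eventually.of_forall fun s => ((hmeas n s).mul hY).integrable.aestronglyMeasurable)
    ((hmeas n s₀).mul hY).integrable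
    ((hmeas (n + 1) s₀).mul (hY.mul hh)).integrable.aestronglyMeasurable
    ?_ hbound.integrable.norm ?_).2
  · refine ae_of_all _ fun ω s hs => ?_
    rw [norm_mul, norm_mul (_ * _)]
    refine mul_le_mul_of_nonneg_right ((hC (n + 1) _).trans ?_) (norm_nonneg _)
    have e : ((C ^ (n + 2) : ℝ) : ℂ) * (1 + ((‖(a ω : ℂ)‖ : ℂ) + ((|s₀| + 1 : ℝ) : ℂ) *
        (‖(h ω : ℂ)‖ : ℂ)) ^ 2) =
        ((C ^ (n + 2) * (1 + (|a ω| + (|s₀| + 1) * |h ω|) ^ 2) : ℝ) : ℂ) := by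
      simp only [Complex.norm_real, Real.norm_eq_abs]; push_cast; ring
    rw [e, Complex.norm_real, Real.norm_eq_abs, abs_of_nonneg (by positivity)]
    have hs' : |s| ≤ |s₀| + 1 := by
      rw [Metric.mem_ball, Real.dist_eq] at hs
      have := abs_sub_abs_le_abs_sub s s₀
      linarith
    have h1 : |a ω + s * h ω| ≤ |a ω| + (|s₀| + 1) * |h ω| := by
      refine (abs_add_le _ _).trans ?_
      rw [abs_mul]
      gcongr
    rw [← sq_abs (a ω + s * h ω)]
    gcongr
  · refine ae_of_all _ fun ω s _ => ?_
    have h0 : HasDerivAt (fun s : ℝ => a ω + s * h ω) (h ω) s := by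
      simpa using ((hasDerivAt_id s).mul_const (h ω)).const_add (a ω)
    have h1 := ((hasDerivAt_levyPsi (γ := γ) hσ n (a ω + s * h ω)).scomp s h0).mul_const (Y ω)
    refine h1.congr_deriv ?_
    rw [Complex.real_smul]
    ring

lemma contDiff_of_hasDerivAt_seq {f : ℕ → ℝ → ℂ} (h : ∀ n s, HasDerivAt (f n) (f (n + 1) s) s) :
    ContDiff ℝ ((⊤ : ℕ∞) : WithTop ℕ∞) (f 0) := by
  refine contDiff_infty.2 fun m => ?_
  have : ∀ m : ℕ, ∀ n, ContDiff ℝ m (f n) := by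
    intro m
    induction m with
    | zero =>
      intro n
      rw [Nat.cast_zero]
      exact contDiff_zero.2 (continuous_iff_continuousAt.2 fun s => (h n s).continuousAt)
    | succ m ih =>
      intro n
      have e : deriv (f n) = f (n + 1) := funext fun s => (h n s).deriv
      rw [Nat.cast_add, Nat.cast_one, contDiff_succ_iff_deriv]
      refine ⟨fun s => (h n s).differentiableAt, by simp, ?_⟩
      rw [e]
      exact ih _
  exact this m 0

lemma contDiff_expect_psi (hσ : ∃ R : ℝ, σ (Set.Icc (-R) R)ᶜ = 0) {h : Ω → ℝ}
    (hh : AllMom P (fun ω => (h ω : ℂ))) (hhm : Measurable h) :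
    ContDiff ℝ ((⊤ : ℕ∞) : WithTop ℕ∞) (fun s : ℝ => ∫ ω, levyPsi γ σ 0 (s * h ω) ∂P) := by
  have := contDiff_of_hasDerivAt_seq
    (f := fun n (s : ℝ) => ∫ ω, levyPsi γ σ n (s * h ω) * (h ω : ℂ) ^ n ∂P) (fun n s => by
      have := hasDerivAt_expect_psi (γ := γ) hσ n (a := fun _ => 0)
        (by simpa using AllMom.const (P := P) (0 : ℂ)) measurable_const hh hhm (hh.pow n) s
      simpa only [zero_add, ← pow_succ] using this)
  simpa using this

end psi

/-! ### Linear statistics of the matrix -/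

section cumulants
variable {Ω : Type*} [MeasurableSpace Ω] {P : Measure Ω} [IsProbabilityMeasure P]
  {γ : ℝ} {σ : Measure ℝ} [IsFiniteMeasure σ] {N : ℕ}

/-- The quadratic form `u* B u / N`. -/
def quad (u : Ω → Fin N → ℂ) (B : Matrix (Fin N) (Fin N) ℂ) (ω : Ω) : ℂ :=
  (star (u ω) ⬝ᵥ B.mulVec (u ω)) / N

/-- The linear statistic `Tr(B M)`. -/
def trM (M : Ω → Matrix (Fin N) (Fin N) ℂ) (B : Matrix (Fin N) (Fin N) ℂ) (ω : Ω) : ℂ :=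
  (B * M ω).trace

lemma quad_add_smul (u : Ω → Fin N → ℂ) (A B : Matrix (Fin N) (Fin N) ℂ) (c : ℂ) (ω : Ω) :
    quad u (A + c • B) ω = quad u A ω + c * quad u B ω := by
  simp only [quad, add_mulVec, smul_mulVec, dotProduct_add, dotProduct_smul, smul_eq_mul]
  ring

lemma trM_add_smul (M : Ω → Matrix (Fin N) (Fin N) ℂ) (A B : Matrix (Fin N) (Fin N) ℂ) (c : ℂ)
    (ω : Ω) : trM M (A + c • B) ω = trM M A ω + c * trM M B ω := by
  simp [trM, Matrix.add_mul]

lemma quad_re (u : Ω → Fin N → ℂ) {H : Matrix (Fin N) (Fin N) ℂ} (hH : H.IsHermitian) (ω : Ω) :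
    quad u H ω = ((quad u H ω).re : ℂ) := by
  have h : (star (u ω) ⬝ᵥ H.mulVec (u ω)).im = 0 := hH.im_star_dotProduct_mulVec_self (u ω)
  apply Complex.ext <;> simp [quad, h, Complex.div_natCast_im]

lemma trM_re {M : Ω → Matrix (Fin N) (Fin N) ℂ} (hM : ∀ ω, (M ω).IsHermitian)
    {H : Matrix (Fin N) (Fin N) ℂ} (hH : H.IsHermitian) (ω : Ω) :
    trM M H ω = ((trM M H ω).re : ℂ) := by
  have : (starRingEnd ℂ) (trM M H ω) = trM M H ω := by
    rw [starRingEnd_apply, trM, ← trace_conjTranspose, conjTranspose_mul, hH.eq, (hM ω).eq,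
      trace_mul_comm]
  exact (Complex.conj_eq_iff_re.1 this).symm

lemma allMom_quad [IsFiniteMeasure P] {u : Ω → Fin N → ℂ} (hu : ∀ i, AllMom P (fun ω => u ω i))
    (B : Matrix (Fin N) (Fin N) ℂ) : AllMom P (quad u B) := by
  have h : AllMom P (fun ω => (N : ℂ)⁻¹ *
      ∑ i, (starRingEnd ℂ) (u ω i) * ∑ j, B i j * u ω j) :=
    AllMom.const_mul _ (AllMom.sum fun i _ => (hu i).conj.mul
      (AllMom.sum fun j _ => AllMom.const_mul _ (hu j)))
  convert h using 1
  funext ω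
  simp only [quad, dotProduct, mulVec, Pi.star_apply, RCLike.star_def]
  rw [div_eq_inv_mul]

lemma measurable_trM {M : Ω → Matrix (Fin N) (Fin N) ℂ} (hM : Measurable M)
    (B : Matrix (Fin N) (Fin N) ℂ) : Measurable (trM M B) := by
  have hentry : ∀ i j, Measurable fun ω => M ω i j := fun i j =>
    (measurable_pi_apply j).comp ((measurable_pi_apply i).comp hM)
  unfold trM
  simp only [Matrix.trace, Matrix.diag, Matrix.mul_apply]
  fun_prop

/-- The condition `HasMatrixLaw` at a single size `N`. -/
def LawAt (P : Measure Ω) (γ : ℝ) (σ : Measure ℝ) (u : Ω → Fin N → ℂ)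
    (M : Ω → Matrix (Fin N) (Fin N) ℂ) : Prop :=
  ∀ A : Matrix (Fin N) (Fin N) ℂ, A.IsHermitian →
    ∫ ω, Complex.exp (Complex.I * trM M A ω) ∂P =
      Complex.exp ((N : ℂ) * ∫ ω, levyPsi γ σ 0 (quad u A ω).re ∂P)

lemma hermitian_decomp (B : Matrix (Fin N) (Fin N) ℂ) : ∃ H₁ H₂ : Matrix (Fin N) (Fin N) ℂ,
    H₁.IsHermitian ∧ H₂.IsHermitian ∧ B = H₁ + Complex.I • H₂ :=
  ⟨realPart B, imaginaryPart B, (realPart B).2, (imaginaryPart B).2,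
    (realPart_add_I_smul_imaginaryPart B).symm⟩

/-- Smoothness of the Fourier transform makes all moments of the entries finite. -/
lemma allMom_trM (hσ : ∃ R : ℝ, σ (Set.Icc (-R) R)ᶜ = 0) {u : Ω → Fin N → ℂ}
    (hu : ∀ i, AllMom P (fun ω => u ω i)) {M : Ω → Matrix (Fin N) (Fin N) ℂ}
    (hMm : Measurable M) (hM : ∀ ω, (M ω).IsHermitian) (hlaw : LawAt P γ σ u M)
    (B : Matrix (Fin N) (Fin N) ℂ) : AllMom P (trM M B) := by
  have key : ∀ H : Matrix (Fin N) (Fin N) ℂ, H.IsHermitian → AllMom P (trM M H) := by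
    intro H hH
    have hXm : Measurable fun ω => (trM M H ω).re :=
      Complex.measurable_re.comp (measurable_trM hMm H)
    have hsm : ContDiff ℝ ((⊤ : ℕ∞) : WithTop ℕ∞)
        (fun s : ℝ => ∫ ω, ((1 : ℝ) : ℂ) * Complex.exp (Complex.I * (s * (trM M H ω).re)) ∂P) := by
      have h1 := contDiff_expect_psi (P := P) (γ := γ) hσ (allMom_quad hu H).re
        (Complex.measurable_re.comp (allMom_quad hu H).meas)
      have h2 := ((contDiff_const (c := (N : ℂ))).mul h1).cexp
      have e : (fun s : ℝ => ∫ ω, ((1 : ℝ) : ℂ) *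
          Complex.exp (Complex.I * (s * (trM M H ω).re)) ∂P) =
          fun s : ℝ => Complex.exp ((N : ℂ) * ∫ ω, levyPsi γ σ 0 (s * (quad u H ω).re) ∂P) := by
        funext s
        have hs : ((s : ℂ) • H).IsHermitian := by
          rw [IsHermitian, conjTranspose_smul, hH.eq]; simp
        have := hlaw ((s : ℂ) • H) hs
        have e1 : ∀ ω, trM M ((s : ℂ) • H) ω = s * (trM M H ω).re := fun ω => by
          rw [← trM_re hM hH]; simp [trM]
        have e2 : ∀ ω, (quad u ((s : ℂ) • H) ω).re = s * (quad u H ω).re := fun ω => by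
          have := quad_add_smul u 0 H s ω
          rw [zero_add] at this
          rw [this, quad_re u hH]
          simp [quad]
        simp only [e1, e2] at this
        simpa using this
      rw [e]
      exact h2
    refine ⟨measurable_trM hMm H, fun k => ?_⟩
    have hk := integrable_mul_pow_of_contDiff hXm k (w := fun _ => 1) measurable_const
      (fun _ => zero_le_one) (integrable_const _) hsm
    have hm := measurable_trM hMm H
    refine ((integrable_const (1 : ℝ)).add hk).mono' (by fun_prop) (ae_of_all _ fun ω => ?_)
    rw [norm_pow, norm_norm, trM_re hM hH, Complex.norm_real, Real.norm_eq_abs, Pi.add_apply,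
      one_mul, pow_mul', ← sq_abs, abs_pow]
    nlinarith [sq_nonneg (|(trM M H ω).re| ^ k - 1)]
  obtain ⟨H₁, H₂, h₁, h₂, rfl⟩ := hermitian_decomp B
  have := (key H₁ h₁).add (AllMom.const_mul Complex.I (key H₂ h₂))
  simpa only [← trM_add_smul] using this

end cumulants

/-! ### The moment–cumulant formula -/

section cumulants2
variable {Ω : Type*} [MeasurableSpace Ω] {P : Measure Ω} [IsProbabilityMeasure P]
  {γ : ℝ} {σ : Measure ℝ} [IsFiniteMeasure σ] {N : ℕ}

/-- The Fourier transform of the matrix at `A`. -/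
def fourierM (P : Measure Ω) (γ : ℝ) (σ : Measure ℝ) (u : Ω → Fin N → ℂ)
    (A : Matrix (Fin N) (Fin N) ℂ) : ℂ :=
  Complex.exp ((N : ℂ) * ∫ ω, levyPsi γ σ 0 (quad u A ω).re ∂P)

/-- Up to a power of `i`, the joint cumulant of the statistics `Tr(B_j M)`, `j ∈ V`, under the
law of `M` tilted by `exp(i Tr(A M))`. -/
def cumul (P : Measure Ω) (γ : ℝ) (σ : Measure ℝ) (u : Ω → Fin N → ℂ)
    (A : Matrix (Fin N) (Fin N) ℂ) (B : ℕ → Matrix (Fin N) (Fin N) ℂ) (V : Finset ℕ) : ℂ :=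
  N * ∫ ω, levyPsi γ σ V.card (quad u A ω).re * ∏ j ∈ V, quad u (B j) ω ∂P

/-- The derivative of `cumul` in a Hermitian direction `X`, extended to all `X` by linearity. -/
def cumul' (P : Measure Ω) (γ : ℝ) (σ : Measure ℝ) (u : Ω → Fin N → ℂ)
    (A : Matrix (Fin N) (Fin N) ℂ) (B : ℕ → Matrix (Fin N) (Fin N) ℂ) (V : Finset ℕ)
    (X : Matrix (Fin N) (Fin N) ℂ) : ℂ :=
  N * ∫ ω, levyPsi γ σ (V.card + 1) (quad u A ω).re * ((∏ j ∈ V, quad u (B j) ω) * quad u X ω) ∂P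

lemma hasDerivAt_cumul (hσ : ∃ R : ℝ, σ (Set.Icc (-R) R)ᶜ = 0) {u : Ω → Fin N → ℂ}
    (hu : ∀ i, AllMom P (fun ω => u ω i)) (A : Matrix (Fin N) (Fin N) ℂ)
    (B : ℕ → Matrix (Fin N) (Fin N) ℂ) (V : Finset ℕ) {H : Matrix (Fin N) (Fin N) ℂ}
    (hH : H.IsHermitian) :
    HasDerivAt (fun s : ℝ => cumul P γ σ u (A + (s : ℂ) • H) B V) (cumul' P γ σ u A B V H) 0 := by
  have h := hasDerivAt_expect_psi (P := P) (γ := γ) hσ V.card (allMom_quad hu A).re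
    (Complex.measurable_re.comp (allMom_quad hu A).meas) (allMom_quad hu H).re
    (Complex.measurable_re.comp (allMom_quad hu H).meas)
    (AllMom.prod fun j (_ : j ∈ V) => allMom_quad hu (B j)) 0
  have h2 := h.const_mul (N : ℂ)
  simp only [zero_mul, add_zero, ← quad_re u hH] at h2
  have e : (fun s : ℝ => cumul P γ σ u (A + (s : ℂ) • H) B V) = fun s : ℝ => (N : ℂ) *
      ∫ ω, levyPsi γ σ V.card ((quad u A ω).re + s * (quad u H ω).re) *
        ∏ j ∈ V, quad u (B j) ω ∂P := by
    funext s
    simp only [cumul, quad_add_smul]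
    congr 2
    funext ω
    rw [Complex.add_re, Complex.re_ofReal_mul]
  rw [e]
  exact h2

/-- Linearity over `ℂ` in the direction, which extends differentiation formulas from Hermitian
directions to all matrices. -/
lemma cumul'_add_smul (hσ : ∃ R : ℝ, σ (Set.Icc (-R) R)ᶜ = 0) {u : Ω → Fin N → ℂ}
    (hu : ∀ i, AllMom P (fun ω => u ω i)) (A : Matrix (Fin N) (Fin N) ℂ)
    (B : ℕ → Matrix (Fin N) (Fin N) ℂ) (V : Finset ℕ) (X Y : Matrix (Fin N) (Fin N) ℂ) (c : ℂ) :
    cumul' P γ σ u A B V (X + c • Y) = cumul' P γ σ u A B V X + c * cumul' P γ σ u A B V Y := by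
  have hm : ∀ X : Matrix (Fin N) (Fin N) ℂ, Integrable (fun ω =>
      levyPsi γ σ (V.card + 1) (quad u A ω).re *
        ((∏ j ∈ V, quad u (B j) ω) * quad u X ω)) P := fun X =>
    ((allMom_psi hσ _ (allMom_quad hu A).re
      (Complex.measurable_re.comp (allMom_quad hu A).meas)).mul
      ((AllMom.prod fun j (_ : j ∈ V) => allMom_quad hu (B j)).mul (allMom_quad hu X))).integrable
  have e : ∫ ω, levyPsi γ σ (V.card + 1) (quad u A ω).re *
      ((∏ j ∈ V, quad u (B j) ω) * quad u (X + c • Y) ω) ∂P =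
      ∫ ω, levyPsi γ σ (V.card + 1) (quad u A ω).re *
        ((∏ j ∈ V, quad u (B j) ω) * quad u X ω) ∂P +
      c * ∫ ω, levyPsi γ σ (V.card + 1) (quad u A ω).re *
        ((∏ j ∈ V, quad u (B j) ω) * quad u Y ω) ∂P := by
    rw [← integral_const_mul, ← integral_add (hm X) ((hm Y).const_mul c)]
    refine integral_congr_ae (ae_of_all _ fun ω => ?_)
    simp only [quad_add_smul]
    ring
  rw [cumul', e, cumul', cumul']
  ring

lemma cumul_insert (u : Ω → Fin N → ℂ) (A : Matrix (Fin N) (Fin N) ℂ)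
    (B : ℕ → Matrix (Fin N) (Fin N) ℂ) {V : Finset ℕ} {k : ℕ} (hk : k ∉ V) :
    cumul P γ σ u A B (insert k V) = cumul' P γ σ u A B V (B k) := by
  simp only [cumul, cumul', Finset.card_insert_of_notMem hk, Finset.prod_insert hk]
  simp only [mul_comm (quad u (B k) _)]

lemma fourierM_eq (u : Ω → Fin N → ℂ) (A : Matrix (Fin N) (Fin N) ℂ)
    (B : ℕ → Matrix (Fin N) (Fin N) ℂ) :
    fourierM P γ σ u A = Complex.exp (cumul P γ σ u A B ∅) := by
  simp [fourierM, cumul]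

/-- The derivative of the right-hand side of the moment–cumulant formula in a Hermitian direction
`X`, extended to all `X` by linearity. -/
def partSum' (P : Measure Ω) (γ : ℝ) (σ : Measure ℝ) (u : Ω → Fin N → ℂ)
    (A : Matrix (Fin N) (Fin N) ℂ) (B : ℕ → Matrix (Fin N) (Fin N) ℂ) (k : ℕ)
    (X : Matrix (Fin N) (Fin N) ℂ) : ℂ :=
  fourierM P γ σ u A * ∑ p ∈ canon k,
    (cumul' P γ σ u A B ∅ X * ∏ r ∈ reps p k, cumul P γ σ u A B (block p k r) +
      ∑ r₀ ∈ reps p k, cumul' P γ σ u A B (block p k r₀) X *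
        ∏ r ∈ (reps p k).erase r₀, cumul P γ σ u A B (block p k r))

lemma hasDerivAt_partSum (hσ : ∃ R : ℝ, σ (Set.Icc (-R) R)ᶜ = 0) {u : Ω → Fin N → ℂ}
    (hu : ∀ i, AllMom P (fun ω => u ω i)) (A : Matrix (Fin N) (Fin N) ℂ)
    (B : ℕ → Matrix (Fin N) (Fin N) ℂ) (k : ℕ) {H : Matrix (Fin N) (Fin N) ℂ}
    (hH : H.IsHermitian) :
    HasDerivAt (fun s : ℝ => fourierM P γ σ u (A + (s : ℂ) • H) *
      ∑ p ∈ canon k, ∏ r ∈ reps p k, cumul P γ σ u (A + (s : ℂ) • H) B (block p k r))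
      (partSum' P γ σ u A B k H) 0 := by
  have hc := fun V => hasDerivAt_cumul (P := P) (γ := γ) hσ hu A B V hH
  have h1 : HasDerivAt (fun s : ℝ => fourierM P γ σ u (A + (s : ℂ) • H))
      (fourierM P γ σ u A * cumul' P γ σ u A B ∅ H) 0 := by
    have := (hc ∅).cexp
    simp only [← fourierM_eq] at this
    simpa using this
  have h2 := HasDerivAt.fun_sum (u := canon k) fun p _ =>
    HasDerivAt.fun_finsetProd (u := reps p k) fun r _ => hc (block p k r)
  refine (h1.mul h2).congr_deriv ?_
  simp only [Complex.ofReal_zero, zero_smul, add_zero, partSum', smul_eq_mul]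
  rw [Finset.sum_add_distrib, ← Finset.mul_sum, mul_add, ← mul_assoc]
  simp only [mul_comm (cumul' P γ σ u A B (block _ _ _) H)]

lemma partSum'_add_smul (hσ : ∃ R : ℝ, σ (Set.Icc (-R) R)ᶜ = 0) {u : Ω → Fin N → ℂ}
    (hu : ∀ i, AllMom P (fun ω => u ω i)) (A : Matrix (Fin N) (Fin N) ℂ)
    (B : ℕ → Matrix (Fin N) (Fin N) ℂ) (k : ℕ) (X Y : Matrix (Fin N) (Fin N) ℂ) (c : ℂ) :
    partSum' P γ σ u A B k (X + c • Y) =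
      partSum' P γ σ u A B k X + c * partSum' P γ σ u A B k Y := by
  simp only [partSum', cumul'_add_smul hσ hu, Finset.mul_sum, ← Finset.sum_add_distrib]
  refine Finset.sum_congr rfl fun p _ => ?_
  simp only [mul_add, add_mul, Finset.sum_add_distrib, Finset.mul_sum]
  simp only [mul_assoc, mul_left_comm c]
  ring

/-- Differentiation in the direction `B k` adds the element `k` to the partitions. -/
lemma partSum'_eq (u : Ω → Fin N → ℂ) (A : Matrix (Fin N) (Fin N) ℂ)
    (B : ℕ → Matrix (Fin N) (Fin N) ℂ) (k : ℕ) :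
    partSum' P γ σ u A B k (B k) = fourierM P γ σ u A *
      ∑ p ∈ canon (k + 1), ∏ r ∈ reps p (k + 1), cumul P γ σ u A B (block p (k + 1) r) := by
  rw [sum_canon_succ, partSum']
  have h : ∀ p r, k ∉ block p k r := fun p r => by simp [mem_block]
  simp only [cumul_insert u A B (h _ _)]
  have h0 : cumul P γ σ u A B {k} = cumul' P γ σ u A B ∅ (B k) :=
    cumul_insert u A B (Finset.notMem_empty k)
  rw [h0]

/-- The moment–cumulant formula for the linear statistics of `M`, tilted by `exp(i Tr(A M))`. -/
theorem moment_cumulant (hσ : ∃ R : ℝ, σ (Set.Icc (-R) R)ᶜ = 0) {u : Ω → Fin N → ℂ}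
    (hu : ∀ i, AllMom P (fun ω => u ω i)) {M : Ω → Matrix (Fin N) (Fin N) ℂ}
    (hMm : Measurable M) (hM : ∀ ω, (M ω).IsHermitian) (hlaw : LawAt P γ σ u M)
    (B : ℕ → Matrix (Fin N) (Fin N) ℂ) (k : ℕ) : ∀ A : Matrix (Fin N) (Fin N) ℂ, A.IsHermitian →
    Complex.I ^ k * ∫ ω, (∏ j ∈ Finset.range k, trM M (B j) ω) *
        Complex.exp (Complex.I * trM M A ω) ∂P =
      fourierM P γ σ u A * ∑ p ∈ canon k, ∏ r ∈ reps p k, cumul P γ σ u A B (block p k r) := by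
  induction k with
  | zero =>
    intro A hA
    simp only [pow_zero, Finset.range_zero, Finset.prod_empty, one_mul]
    rw [hlaw A hA]
    simp [canon, reps, fourierM]
  | succ k ih =>
    intro A hA
    set w : Ω → ℂ := fun ω => (∏ j ∈ Finset.range k, trM M (B j) ω) *
        Complex.exp (Complex.I * trM M A ω) with hw
    have hmom := allMom_trM hσ hu hMm hM hlaw
    have hwm : AllMom P w := by
      refine AllMom.mul (AllMom.prod fun j _ => hmom (B j)) ?_
      have h1 := (hmom A).meas
      refine (AllMom.const (P := P) 1).mono (by fun_prop) fun ω => ?_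
      rw [trM_re hM hA, mul_comm, Complex.norm_exp_ofReal_mul_I, norm_one]
    -- Differentiate the induction hypothesis at `A + s H` in `s`, at `s = 0`.
    have key : ∀ H : Matrix (Fin N) (Fin N) ℂ, H.IsHermitian →
        Complex.I ^ (k + 1) * ∫ ω, w ω * trM M H ω ∂P = partSum' P γ σ u A B k H := by
      intro H hH
      have hL := (hasDerivAt_weighted_charFun (P := P)
        (Complex.measurable_re.comp (hmom H).meas).aemeasurable hwm.integrable
        (hwm.mul (hmom H).re).integrable 0).const_mul (Complex.I ^ k)
      have hR := hasDerivAt_partSum (P := P) (γ := γ) hσ hu A B k hH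
      have e : (fun s : ℝ => Complex.I ^ k * ∫ ω, w ω * Complex.exp (Complex.I *
          (s * ((Complex.re ∘ trM M H) ω : ℝ))) ∂P) =
          fun s : ℝ => fourierM P γ σ u (A + (s : ℂ) • H) *
          ∑ p ∈ canon k, ∏ r ∈ reps p k, cumul P γ σ u (A + (s : ℂ) • H) B (block p k r) := by
        funext s
        have hs : (A + (s : ℂ) • H).IsHermitian := by
          rw [IsHermitian, conjTranspose_add, conjTranspose_smul, hH.eq, hA.eq]; simp
        rw [← ih _ hs]
        congr 1
        refine integral_congr_ae (ae_of_all _ fun ω => ?_)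
        simp only [hw, trM_add_smul, Function.comp]
        rw [mul_assoc, ← Complex.exp_add, ← trM_re hM hH, mul_add]
      rw [e] at hL
      rw [← hL.unique hR, pow_succ, mul_assoc, ← integral_const_mul]
      congr 1
      refine integral_congr_ae (ae_of_all _ fun ω => ?_)
      simp [← trM_re hM hH]
    -- A general matrix is `H₁ + i H₂` with Hermitian `H₁`, `H₂`.
    have key2 : Complex.I ^ (k + 1) * ∫ ω, w ω * trM M (B k) ω ∂P =
        partSum' P γ σ u A B k (B k) := by
      obtain ⟨H₁, H₂, h₁, h₂, hB⟩ := hermitian_decomp (B k)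
      rw [hB, partSum'_add_smul hσ hu, ← key H₁ h₁, ← key H₂ h₂]
      have : ∫ ω, w ω * trM M (H₁ + Complex.I • H₂) ω ∂P =
          ∫ ω, w ω * trM M H₁ ω ∂P + Complex.I * ∫ ω, w ω * trM M H₂ ω ∂P := by
        rw [← integral_const_mul, ← integral_add (hwm.mul (hmom H₁)).integrable
          ((hwm.mul (hmom H₂)).integrable.const_mul _)]
        refine integral_congr_ae (ae_of_all _ fun ω => ?_)
        simp only [trM_add_smul]
        ring
      rw [this]
      ring
    rw [← partSum'_eq, ← key2]
    congr 1
    refine integral_congr_ae (ae_of_all _ fun ω => ?_)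
    simp only [hw, Finset.prod_range_succ]
    ring

end cumulants2

/-! ### Walks and moments of the entries -/

section walks
variable {N : ℕ}

/-- The expansion of a matrix power along walks. -/
lemma sum_walks (M : Matrix (Fin N) (Fin N) ℂ) (n : ℕ) : ∀ G : Fin N → Fin N → ℂ,
    ∑ i : Fin (n + 1) → Fin N, (∏ j : Fin n, M (i j.castSucc) (i j.succ)) *
      G (i 0) (i (Fin.last n)) = ∑ a, ∑ b, (M ^ n) a b * G a b := by
  induction n with
  | zero =>
    intro G
    rw [← (Equiv.funUnique (Fin 1) (Fin N)).symm.sum_comp]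
    refine Finset.sum_congr rfl fun a _ => ?_
    simp [Matrix.one_apply]
  | succ n ih =>
    intro G
    rw [← (Fin.consEquiv (fun _ => Fin N)).sum_comp, Fintype.sum_prod_type]
    refine Finset.sum_congr rfl fun a _ => ?_
    have h := ih fun x y => M a x * G a y
    have e : ∀ i : Fin (n + 1) → Fin N,
        (∏ j : Fin (n + 1), M (Fin.consEquiv (fun _ => Fin N) (a, i) j.castSucc)
          (Fin.consEquiv (fun _ => Fin N) (a, i) j.succ)) *
        G (Fin.consEquiv (fun _ => Fin N) (a, i) 0)
          (Fin.consEquiv (fun _ => Fin N) (a, i) (Fin.last (n + 1))) =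
        (∏ j : Fin n, M (i j.castSucc) (i j.succ)) * (M a (i 0) * G a (i (Fin.last n))) := by
      intro i
      simp only [Fin.consEquiv_apply]
      rw [Fin.prod_univ_succ, ← Fin.succ_last]
      simp only [Fin.castSucc_zero, Fin.cons_zero, Fin.cons_succ, ← Fin.succ_castSucc]
      ring
    simp only [e]
    rw [h, Finset.sum_comm]
    refine Finset.sum_congr rfl fun b _ => ?_
    rw [pow_succ', Matrix.mul_apply, Finset.sum_mul]
    refine Finset.sum_congr rfl fun c _ => ?_
    ring

/-- The closed walk `i 0, …, i n, i 0, …` extended periodically. -/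
def wrap {n : ℕ} (i : Fin (n + 1) → Fin N) (j : ℕ) : Fin N := i (Fin.ofNat (n + 1) j)

lemma trace_pow_eq_sum_walks (M : Matrix (Fin N) (Fin N) ℂ) (n : ℕ) :
    (M ^ (n + 1)).trace = ∑ i : Fin (n + 1) → Fin N,
      ∏ j ∈ Finset.range (n + 1), M (wrap i j) (wrap i (j + 1)) := by
  have h := sum_walks M n fun a b => M b a
  have h2 : (M ^ (n + 1)).trace = ∑ a, ∑ b, (M ^ n) a b * M b a := by
    rw [pow_succ]; simp [Matrix.trace, Matrix.mul_apply]
  rw [h2, ← h]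
  refine Finset.sum_congr rfl fun i _ => ?_
  rw [Finset.prod_range_succ, ← Fin.prod_univ_eq_prod_range (fun j => M (wrap i j) (wrap i (j + 1)))]
  have e0 : wrap i (n + 1) = i 0 := by
    unfold wrap; congr 1; ext; simp
  have e1 : wrap i n = i (Fin.last n) := by
    unfold wrap; congr 1; ext; simp
  rw [e0, e1]
  congr 1
  refine Finset.prod_congr rfl fun j _ => ?_
  unfold wrap
  congr 2 <;> ext
  · simp [Nat.mod_eq_of_lt (show (j : ℕ) < n + 1 by omega)]
  · simp [Nat.mod_eq_of_lt (show (j : ℕ) + 1 < n + 1 by omega)]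

end walks

section entries
variable {Ω : Type*} [MeasurableSpace Ω] {P : Measure Ω} [IsProbabilityMeasure P]
  {γ : ℝ} {σ : Measure ℝ} [IsFiniteMeasure σ] {N : ℕ}

lemma trM_single (M : Ω → Matrix (Fin N) (Fin N) ℂ) (a b : Fin N) (ω : Ω) :
    trM M (Matrix.single b a 1) ω = M ω a b := by
  simp [trM, Matrix.trace_single_mul]

lemma quad_single (u : Ω → Fin N → ℂ) (a b : Fin N) (ω : Ω) :
    quad u (Matrix.single b a 1) ω = u ω a * (starRingEnd ℂ) (u ω b) / N := by
  simp [quad, Matrix.single_mulVec_eq, mul_comm]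

/-- The joint moments of the entries of `M`. -/
lemma entry_moments (hσ : ∃ R : ℝ, σ (Set.Icc (-R) R)ᶜ = 0) {u : Ω → Fin N → ℂ}
    (hu : ∀ i, AllMom P (fun ω => u ω i)) {M : Ω → Matrix (Fin N) (Fin N) ℂ}
    (hMm : Measurable M) (hM : ∀ ω, (M ω).IsHermitian) (hlaw : LawAt P γ σ u M)
    (k : ℕ) (a b : ℕ → Fin N) :
    Complex.I ^ k * ∫ ω, ∏ j ∈ Finset.range k, M ω (a j) (b j) ∂P =
      ∑ p ∈ canon k, ∏ r ∈ reps p k, ((N : ℂ) * levyPsi γ σ (block p k r).card 0 *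
        (N : ℂ)⁻¹ ^ (block p k r).card *
        ∫ ω, ∏ j ∈ block p k r, (u ω (a j) * (starRingEnd ℂ) (u ω (b j))) ∂P) := by
  have h := moment_cumulant (P := P) (γ := γ) hσ hu hMm hM hlaw
    (fun j => Matrix.single (b j) (a j) 1) k 0 isHermitian_zero
  have h0 : ∀ ω, trM M 0 ω = 0 := fun ω => by simp [trM]
  have h1 : ∀ ω, quad u 0 ω = 0 := fun ω => by simp [quad]
  have h2 : fourierM P γ σ u 0 = 1 := by simp [fourierM, h1, levyPsi_zero_zero]
  simp only [trM_single, h0, mul_zero, Complex.exp_zero, mul_one, h2, one_mul] at h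
  rw [h]
  refine Finset.sum_congr rfl fun p _ => Finset.prod_congr rfl fun r _ => ?_
  simp only [cumul, h1, quad_single, Complex.zero_re]
  rw [integral_const_mul]
  simp only [div_eq_mul_inv, Finset.prod_mul_distrib, Finset.prod_const]
  rw [integral_mul_const]
  ring

end entries

/-! ### Closed walks on trees -/

section closedWalk
variable {α : Type*} (x : ℕ → α)

/-- The time of the first visit of the walk `x` to `v`. -/
def firstVisit (v : α) : ℕ := sInf {t | x t = v}

/-- The vertex from which `v` is first reached; it is the starting point `x 0` when `v = x 0`. -/
def par (v : α) : α := x (firstVisit x v - 1)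

/-- The edges used in the first `n` steps. -/
def edges [DecidableEq α] (n : ℕ) : Finset (Sym2 α) := (Finset.range n).image fun t => s(x t, x (t + 1))

/-- The step at time `t` goes from the parent to the child. -/
def IsUp (t : ℕ) : Prop := x t = par x (x (t + 1)) ∧ x (t + 1) ≠ x 0

/-- The step at time `t` goes from the child to the parent. -/
def IsDown (t : ℕ) : Prop := x (t + 1) = par x (x t) ∧ x t ≠ x 0

lemma x_firstVisit (t : ℕ) : x (firstVisit x (x t)) = x t :=
  Nat.sInf_mem (s := {s | x s = x t}) ⟨t, rfl⟩

lemma firstVisit_le (t : ℕ) : firstVisit x (x t) ≤ t := Nat.sInf_le (by simp)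

lemma firstVisit_pos {t : ℕ} (h : x t ≠ x 0) : 0 < firstVisit x (x t) := by
  rcases Nat.eq_zero_or_pos (firstVisit x (x t)) with h0 | h0
  · exact absurd (by rw [← x_firstVisit x t, h0]) h
  · exact h0

lemma firstVisit_par_le (v : α) : firstVisit x (par x v) ≤ firstVisit x v - 1 :=
  firstVisit_le x _

lemma firstVisit_par_lt {t : ℕ} (h : x t ≠ x 0) :
    firstVisit x (par x (x t)) < firstVisit x (x t) := by
  have := firstVisit_par_le x (x t)
  have := firstVisit_pos x h
  omega

lemma not_isUp_and_isDown (t : ℕ) : ¬ (IsUp x t ∧ IsDown x t) := by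
  rintro ⟨⟨h1, h2⟩, h3, h4⟩
  have h5 := firstVisit_par_lt x h2
  have h6 := firstVisit_par_lt x h4
  rw [← h1] at h5
  rw [← h3] at h6
  omega

variable [DecidableEq α]

/-- The edges joining the visited vertices to their parents are edges of the walk. -/
lemma parEdge_image {n : ℕ} :
    ((((Finset.range n).image x).erase (x 0)).image fun v => s(par x v, v)) ⊆ edges x n := by
  intro e he
  simp only [Finset.mem_image, Finset.mem_erase, Finset.mem_range] at he
  obtain ⟨v, ⟨h0, t, ht, rfl⟩, rfl⟩ := he
  have h1 := firstVisit_pos x h0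
  have h2 := firstVisit_le x t
  simp only [edges, Finset.mem_image, Finset.mem_range]
  refine ⟨firstVisit x (x t) - 1, by omega, ?_⟩
  rw [Nat.sub_add_cancel h1, x_firstVisit x t]
  rfl

/-- Distinct vertices are joined to their parents by distinct edges. -/
lemma parEdge_card {n : ℕ} :
    ((((Finset.range n).image x).erase (x 0)).image fun v => s(par x v, v)).card =
      (((Finset.range n).image x).erase (x 0)).card := by
  apply Finset.card_image_of_injOn
  intro v hv w hw h
  simp only [Finset.coe_erase, Finset.coe_image, Finset.coe_range, Set.mem_diff, Set.mem_image,
    Set.mem_singleton_iff] at hv hw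
  obtain ⟨⟨t, -, rfl⟩, h0⟩ := hv
  obtain ⟨⟨s, -, rfl⟩, h1⟩ := hw
  simp only [Sym2.eq_iff] at h
  rcases h with h | ⟨h2, h3⟩
  · exact h.2
  · have := firstVisit_par_lt x h0
    have := firstVisit_par_lt x h1
    rw [h2] at *
    rw [← h3] at *
    omega

/-- A walk visits at most one vertex more than it uses edges. -/
lemma card_vertices_le {n : ℕ} (hn : 0 < n) :
    ((Finset.range n).image x).card ≤ (edges x n).card + 1 := by
  have h := Finset.card_le_card (parEdge_image x (n := n))
  rw [parEdge_card, Finset.card_erase_of_mem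
    (Finset.mem_image_of_mem x (Finset.mem_range.2 hn))] at h
  omega

/-- If there are as few edges as possible, they form a tree, so that every step goes up or down
this tree. -/
lemma isUp_or_isDown {n : ℕ} (hn : 0 < n)
    (h : (edges x n).card + 1 ≤ ((Finset.range n).image x).card) {t : ℕ} (ht : t < n) :
    IsUp x t ∨ IsDown x t := by
  have h1 := Finset.eq_of_subset_of_card_le (parEdge_image x (n := n)) (by
    rw [parEdge_card, Finset.card_erase_of_mem
      (Finset.mem_image_of_mem x (Finset.mem_range.2 hn))]
    omega)
  have h2 : s(x t, x (t + 1)) ∈ edges x n :=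
    Finset.mem_image_of_mem (fun t => s(x t, x (t + 1))) (Finset.mem_range.2 ht)
  rw [← h1] at h2
  simp only [Finset.mem_image, Finset.mem_erase] at h2
  obtain ⟨v, ⟨h0, -⟩, h3⟩ := h2
  simp only [Sym2.eq_iff] at h3
  rcases h3 with ⟨h3, rfl⟩ | ⟨h3, rfl⟩
  · exact Or.inl ⟨h3.symm, h0⟩
  · exact Or.inr ⟨h3.symm, h0⟩

/-- The number of steps from `a` to `b` among the first `n` ones. -/
def stepCount (n : ℕ) (a b : α) : ℤ :=
  ∑ t ∈ Finset.range n, if x t = a ∧ x (t + 1) = b then 1 else 0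

open Classical in
/-- Each crossing of a tree edge changes the indicator function of the set of descendants
of the lower endpoint, and no other step does. -/
lemma stepCount_par {n : ℕ} (hn : x n = x 0) (h : ∀ t < n, IsUp x t ∨ IsDown x t) {s : ℕ}
    (hs : x s ≠ x 0) : stepCount x n (par x (x s)) (x s) = stepCount x n (x s) (par x (x s)) := by
  set v := x s with hv
  have hvlt := firstVisit_par_lt x hs
  rw [← hv] at hvlt
  -- `χ` is the indicator function of the descendants of `v`; its increments along the closed walk
  -- sum to zero.
  let χ : α → ℤ := fun w => if ∃ m, (par x)^[m] w = v then 1 else 0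
  have hχ : ∀ t, x t ≠ x 0 → χ (x t) - χ (par x (x t)) = if x t = v then 1 else 0 := by
    intro t ht
    by_cases htv : x t = v
    · have h1 : χ (x t) = 1 := if_pos ⟨0, htv⟩
      have h2 : χ (par x (x t)) = 0 := by
        refine if_neg ?_
        rintro ⟨m, hm⟩
        have h3 : ∀ m w, firstVisit x ((par x)^[m] w) ≤ firstVisit x w := by
          intro m
          induction m with
          | zero => intro w; simp
          | succ m ih =>
            intro w
            rw [Function.iterate_succ_apply]
            have := ih (par x w)
            have := firstVisit_par_le x w
            omega
        have := h3 m (par x (x t))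
        rw [hm, htv] at this
        omega
      rw [h1, h2, if_pos htv]; rfl
    · have : (∃ m, (par x)^[m] (x t) = v) ↔ ∃ m, (par x)^[m] (par x (x t)) = v := by
        constructor
        · rintro ⟨m, hm⟩
          cases m with
          | zero => exact absurd hm htv
          | succ m => exact ⟨m, by rwa [Function.iterate_succ_apply] at hm⟩
        · rintro ⟨m, hm⟩
          exact ⟨m + 1, by rwa [Function.iterate_succ_apply]⟩
      simp only [χ, this, sub_self, if_neg htv]
  have hno : ∀ t, x t ≠ x 0 → ¬ (par x (x t) = v ∧ x t = par x v) := by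
    rintro t ht ⟨h1, h2⟩
    have := firstVisit_par_lt x ht
    rw [h1, h2] at this
    omega
  have hstep : ∀ t ∈ Finset.range n, χ (x (t + 1)) - χ (x t) =
      (if x t = par x v ∧ x (t + 1) = v then 1 else 0) -
        (if x t = v ∧ x (t + 1) = par x v then 1 else 0) := by
    intro t ht
    rcases h t (Finset.mem_range.1 ht) with ⟨h1, h2⟩ | ⟨h1, h2⟩
    · rw [h1, hχ _ h2, if_neg (hno _ h2), sub_zero]
      refine if_congr ?_ rfl rfl
      constructor
      · intro h3; exact ⟨by rw [h3], h3⟩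
      · exact fun h3 => h3.2
    · have := hχ _ h2
      rw [h1, if_neg (fun h3 => hno _ h2 ⟨h3.2, h3.1⟩), zero_sub, ← neg_sub, this]
      congr 1
      refine if_congr ?_ rfl rfl
      constructor
      · intro h3; exact ⟨h3, by rw [h3]⟩
      · exact fun h3 => h3.1
  have h4 := Finset.sum_congr rfl hstep
  rw [Finset.sum_range_sub (fun t => χ (x t)), hn, sub_self, Finset.sum_sub_distrib] at h4
  unfold stepCount
  linarith

/-- A closed walk on a tree crosses each edge equally often in both directions. -/
lemma stepCount_comm {n : ℕ} (hn : x n = x 0) (h : ∀ t < n, IsUp x t ∨ IsDown x t) (a b : α) :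
    stepCount x n a b = stepCount x n b a := by
  by_cases h1 : ∃ s, x s = b ∧ x s ≠ x 0 ∧ par x (x s) = a
  · obtain ⟨s, rfl, h2, rfl⟩ := h1
    exact stepCount_par x hn h h2
  by_cases h2 : ∃ s, x s = a ∧ x s ≠ x 0 ∧ par x (x s) = b
  · obtain ⟨s, rfl, h2, rfl⟩ := h2
    exact (stepCount_par x hn h h2).symm
  unfold stepCount
  refine Finset.sum_congr rfl fun t ht => ?_
  rw [if_neg, if_neg]
  · rintro ⟨h3, h4⟩
    rcases h t (Finset.mem_range.1 ht) with ⟨h5, h6⟩ | ⟨h5, h6⟩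
    · exact h2 ⟨t + 1, h4, h6, by rw [← h5, h3]⟩
    · exact h1 ⟨t, h3, h6, by rw [← h5, h4]⟩
  · rintro ⟨h3, h4⟩
    rcases h t (Finset.mem_range.1 ht) with ⟨h5, h6⟩ | ⟨h5, h6⟩
    · exact h1 ⟨t + 1, h4, h6, by rw [← h5, h3]⟩
    · exact h2 ⟨t, h3, h6, by rw [← h5, h4]⟩

open Classical in
/-- A closed walk on a tree makes as many steps up as down. -/
lemma card_isUp {n : ℕ} (hn : x n = x 0) (h : ∀ t < n, IsUp x t ∨ IsDown x t) :
    2 * ((Finset.range n).filter (IsUp x)).card = n := by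
  set W := ((Finset.range (n + 1)).image x).erase (x 0) with hW
  have hmem : ∀ t ≤ n, x t ≠ x 0 → x t ∈ W := fun t ht h0 =>
    Finset.mem_erase.2 ⟨h0, Finset.mem_image_of_mem x (Finset.mem_range.2 (by omega))⟩
  have e1 : (((Finset.range n).filter (IsUp x)).card : ℤ) =
      ∑ v ∈ W, stepCount x n (par x v) v := by
    unfold stepCount
    rw [Finset.sum_comm, Finset.card_filter]
    push_cast
    refine Finset.sum_congr rfl fun t ht => ?_
    rw [Finset.mem_range] at ht
    by_cases hu : IsUp x t
    · rw [if_pos hu, Finset.sum_eq_single_of_mem (x (t + 1)) (hmem _ (by omega) hu.2)]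
      · rw [if_pos ⟨hu.1, rfl⟩]
      · intro v _ hv; exact if_neg fun h => hv h.2.symm
    · rw [if_neg hu, Finset.sum_eq_zero]
      intro v hv
      refine if_neg ?_
      rintro ⟨h1, rfl⟩
      exact hu ⟨h1, (Finset.mem_erase.1 hv).1⟩
  have e2 : (((Finset.range n).filter (IsDown x)).card : ℤ) =
      ∑ v ∈ W, stepCount x n v (par x v) := by
    unfold stepCount
    rw [Finset.sum_comm, Finset.card_filter]
    push_cast
    refine Finset.sum_congr rfl fun t ht => ?_
    rw [Finset.mem_range] at ht
    by_cases hu : IsDown x t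
    · rw [if_pos hu, Finset.sum_eq_single_of_mem (x t) (hmem _ (by omega) hu.2)]
      · rw [if_pos ⟨rfl, hu.1⟩]
      · intro v _ hv; exact if_neg fun h => hv h.1.symm
    · rw [if_neg hu, Finset.sum_eq_zero]
      intro v hv
      refine if_neg ?_
      rintro ⟨rfl, h1⟩
      exact hu ⟨h1, (Finset.mem_erase.1 hv).1⟩
  have e3 : ((Finset.range n).filter (IsUp x)).card + ((Finset.range n).filter (IsDown x)).card
      = n := by
    rw [← Finset.card_union_of_disjoint, ← Finset.filter_or, Finset.filter_true_of_mem,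
      Finset.card_range]
    · exact fun t ht => h t (Finset.mem_range.1 ht)
    · rw [Finset.disjoint_filter]
      exact fun t _ h1 h2 => not_isUp_and_isDown x t ⟨h1, h2⟩
  have e4 : ((Finset.range n).filter (IsUp x)).card = ((Finset.range n).filter (IsDown x)).card := by
    have : ∑ v ∈ W, stepCount x n (par x v) v = ∑ v ∈ W, stepCount x n v (par x v) :=
      Finset.sum_congr rfl fun v _ => stepCount_comm x hn h _ _
    rw [← e1, ← e2] at this
    exact_mod_cast this
  omega

end closedWalk

/-! ### Pairs of partitions whose walk runs along a tree -/

section bipartite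

/-- The set of the values of `q` at the elements of `V` and at their successors. For `q ∈ canon k`,
the value at the successor `k` of `k - 1` is `q k = 0 = q 0`, so that walks close up. -/
def ends (q : ℕ → ℕ) (V : Finset ℕ) : Finset ℕ := V.image q ∪ V.image fun j => q (j + 1)

/-- The bipartite closed walk `q 0, p 0, q 1, p 1, …` attached to two set partitions. -/
def biWalk (p q : ℕ → ℕ) (t : ℕ) : ℕ ⊕ ℕ :=
  if t % 2 = 0 then Sum.inl (q (t / 2)) else Sum.inr (p (t / 2))

/-- Equality holds in `card_reps_le`. This forces the bipartite walk to run along a tree. -/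
def IsTreePair (k : ℕ) (p q : ℕ → ℕ) : Prop :=
  (reps q k).card + (reps p k).card = ∑ r ∈ reps p k, (ends q (block p k r)).card + 1

variable {k : ℕ} {p q : ℕ → ℕ}

lemma biWalk_even (p q : ℕ → ℕ) (j : ℕ) : biWalk p q (2 * j) = Sum.inl (q j) := by
  simp [biWalk]

lemma biWalk_odd (p q : ℕ → ℕ) (j : ℕ) : biWalk p q (2 * j + 1) = Sum.inr (p j) := by
  rw [biWalk, if_neg (by omega)]
  congr 2; omega

lemma canon_reps (hp : p ∈ canon k) {j : ℕ} (hj : j < k) : p j ∈ reps p k := by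
  have := (mem_canon.1 hp).1 j hj
  exact mem_reps.2 ⟨by omega, this.2⟩

/-- The vertex of the block with least element `r` is joined exactly to the vertices in
`ends q (block p k r)`. -/
lemma card_edges_le (hp : p ∈ canon k) :
    (edges (biWalk p q) (2 * k)).card ≤ ∑ r ∈ reps p k, (ends q (block p k r)).card := by
  have : edges (biWalk p q) (2 * k) ⊆ (reps p k).biUnion fun r =>
      (ends q (block p k r)).image fun v => s(Sum.inr r, Sum.inl v) := by
    intro e he
    simp only [edges, Finset.mem_image, Finset.mem_range] at he
    obtain ⟨t, ht, rfl⟩ := he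
    simp only [Finset.mem_biUnion, Finset.mem_image]
    obtain ⟨j, rfl | rfl⟩ := Nat.even_or_odd' t
    · have hj : j < k := by omega
      refine ⟨p j, canon_reps hp hj, q j, ?_, ?_⟩
      · exact Finset.mem_union_left _ (Finset.mem_image_of_mem _ (mem_block.2 ⟨hj, rfl⟩))
      · rw [biWalk_even, biWalk_odd, Sym2.eq_swap]
    · have hj : j < k := by omega
      refine ⟨p j, canon_reps hp hj, q (j + 1), ?_, ?_⟩
      · exact Finset.mem_union_right _
          (Finset.mem_image_of_mem (fun j => q (j + 1)) (mem_block.2 ⟨hj, rfl⟩))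
      · rw [biWalk_odd, show 2 * j + 1 + 1 = 2 * (j + 1) by ring, biWalk_even]
  refine (Finset.card_le_card this).trans (Finset.card_biUnion_le.trans ?_)
  exact Finset.sum_le_sum fun r _ => Finset.card_image_le

lemma le_card_vertices : (reps q k).card + (reps p k).card ≤
    ((Finset.range (2 * k)).image (biWalk p q)).card := by
  rw [← Finset.card_disjSum]
  apply Finset.card_le_card
  intro v hv
  rw [Finset.mem_disjSum] at hv
  simp only [Finset.mem_image, Finset.mem_range]
  rcases hv with ⟨r, hr, rfl⟩ | ⟨r, hr, rfl⟩
  · obtain ⟨h1, h2⟩ := mem_reps.1 hr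
    exact ⟨2 * r, by omega, by rw [biWalk_even, h2]⟩
  · obtain ⟨h1, h2⟩ := mem_reps.1 hr
    exact ⟨2 * r + 1, by omega, by rw [biWalk_odd, h2]⟩

/-- The bipartite walk visits at most one vertex more than it uses edges. -/
lemma card_reps_le (hk : 0 < k) (hp : p ∈ canon k) : (reps q k).card + (reps p k).card ≤
    ∑ r ∈ reps p k, (ends q (block p k r)).card + 1 :=
  le_card_vertices.trans ((card_vertices_le _ (by omega)).trans
    (Nat.add_le_add_right (card_edges_le hp) 1))

lemma IsTreePair.step (hk : 0 < k) (hp : p ∈ canon k) (h : IsTreePair k p q) :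
    ∀ t < 2 * k, IsUp (biWalk p q) t ∨ IsDown (biWalk p q) t := by
  intro t ht
  refine isUp_or_isDown _ (n := 2 * k) (by omega) ?_ ht
  have h1 := card_edges_le (q := q) hp
  have h2 := le_card_vertices (k := k) (p := p) (q := q)
  unfold IsTreePair at h
  omega

lemma biWalk_closed (hq : q ∈ canon k) : biWalk p q (2 * k) = biWalk p q 0 := by
  have h0 : q 0 = 0 := by
    rcases Nat.eq_zero_or_pos k with rfl | hk
    · exact (mem_canon.1 hq).2 0 le_rfl
    · exact Nat.le_zero.1 ((mem_canon.1 hq).1 0 hk).1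
  rw [biWalk_even, (mem_canon.1 hq).2 k le_rfl, show (0 : ℕ) = 2 * 0 by rfl, biWalk_even, h0]

lemma sum_range_two_mul (g : ℕ → ℤ) (k : ℕ) :
    ∑ t ∈ Finset.range (2 * k), g t = ∑ j ∈ Finset.range k, (g (2 * j) + g (2 * j + 1)) := by
  induction k with
  | zero => simp
  | succ k ih =>
    rw [show 2 * (k + 1) = 2 * k + 1 + 1 by ring, Finset.sum_range_succ, Finset.sum_range_succ, ih,
      Finset.sum_range_succ]
    ring

/-- In the tree case, every block visits each value as often through `q j` as through
`q (j + 1)`. -/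
lemma IsTreePair.balanced (hk : 0 < k) (hp : p ∈ canon k) (hq : q ∈ canon k)
    (h : IsTreePair k p q) (r v : ℕ) :
    ((block p k r).filter fun j => q j = v).card =
      ((block p k r).filter fun j => q (j + 1) = v).card := by
  have h1 := stepCount_comm _ (biWalk_closed (p := p) hq) (h.step hk hp) (Sum.inl v) (Sum.inr r)
  unfold stepCount at h1
  rw [sum_range_two_mul, sum_range_two_mul] at h1
  have e : ∀ j, biWalk p q (2 * j + 1 + 1) = Sum.inl (q (j + 1)) := fun j => by
    rw [show 2 * j + 1 + 1 = 2 * (j + 1) by ring, biWalk_even]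
  simp only [biWalk_even, biWalk_odd, e, Sum.inl.injEq, Sum.inr.injEq, reduceCtorEq, and_false,
    false_and, if_false, add_zero, zero_add] at h1
  rw [block, Finset.filter_filter, Finset.filter_filter, Finset.card_filter, Finset.card_filter]
  have h2 : ∑ j ∈ Finset.range k, (if p j = r ∧ q j = v then (1 : ℤ) else 0) =
      ∑ j ∈ Finset.range k, if p j = r ∧ q (j + 1) = v then (1 : ℤ) else 0 := by
    rw [← h1]
    exact Finset.sum_congr rfl fun j _ => if_congr and_comm rfl rfl
  exact_mod_cast h2

end bipartite

section counting

variable {α : Type*} (x : ℕ → α)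

/-- A step up to a vertex which has not been visited before. -/
def IsNew (t : ℕ) : Prop := IsUp x t ∧ firstVisit x (x (t + 1)) = t + 1

/-- A step up to a vertex which has been visited before. -/
def IsOld (t : ℕ) : Prop := IsUp x t ∧ firstVisit x (x (t + 1)) ≠ t + 1

/-- The first visit to the endpoint was by a step up which discovered it. -/
lemma IsOld.isNew {t : ℕ} (h : IsOld x t) :
    firstVisit x (x (t + 1)) - 1 < t ∧ IsNew x (firstVisit x (x (t + 1)) - 1) := by
  have h1 := firstVisit_pos x h.1.2
  have h2 := firstVisit_le x (t + 1)
  have h3 := h.2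
  have h4 : firstVisit x (x (t + 1)) - 1 + 1 = firstVisit x (x (t + 1)) := by omega
  refine ⟨by omega, ⟨?_, ?_⟩, ?_⟩
  · rw [h4, x_firstVisit x (t + 1)]; rfl
  · rw [h4, x_firstVisit x (t + 1)]; exact h.1.2
  · rw [h4, x_firstVisit x (t + 1)]

/-- A closed walk on a tree is determined, up to relabelling, by the times of its steps up, by
those which discover a new vertex, and by the time of discovery of the vertices reached by
the other ones: a step down leads to the parent, which is known from the past. -/
lemma firstVisit_determined {α β : Type*} (x : ℕ → α) (y : ℕ → β) {n : ℕ}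
    (hx : ∀ t < n, IsUp x t ∨ IsDown x t) (hy : ∀ t < n, IsUp y t ∨ IsDown y t)
    (hnew : ∀ t < n, IsNew x t ↔ IsNew y t) (hold : ∀ t < n, IsOld x t ↔ IsOld y t)
    (hg : ∀ t < n, IsOld x t → firstVisit x (x (t + 1)) - 1 = firstVisit y (y (t + 1)) - 1) :
    ∀ t ≤ n, firstVisit x (x t) = firstVisit y (y t) := by
  intro t
  induction t using Nat.strong_induction_on with
  | _ t ih =>
  intro ht
  cases t with
  | zero =>
    rw [Nat.le_zero.1 (firstVisit_le x 0), Nat.le_zero.1 (firstVisit_le y 0)]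
  | succ t =>
    have htn : t < n := ht
    by_cases h1 : IsNew x t
    · rw [h1.2, ((hnew t htn).1 h1).2]
    by_cases h2 : IsOld x t
    · have h3 := hg t htn h2
      have h4 := (hold t htn).1 h2
      have h5 := firstVisit_pos x h2.1.2
      have h6 := firstVisit_pos y h4.1.2
      omega
    have h3 : ¬ IsUp x t := fun h => by
      by_cases h4 : firstVisit x (x (t + 1)) = t + 1
      · exact h1 ⟨h, h4⟩
      · exact h2 ⟨h, h4⟩
    have h4 : ¬ IsUp y t := fun h => by
      by_cases h4 : firstVisit y (y (t + 1)) = t + 1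
      · exact h1 ((hnew t htn).2 ⟨h, h4⟩)
      · exact h2 ((hold t htn).2 ⟨h, h4⟩)
    have h5 := (hx t htn).resolve_left h3
    have h6 := (hy t htn).resolve_left h4
    rw [h5.1, h6.1]
    unfold par
    have h7 := firstVisit_le x t
    rw [ih (firstVisit x (x t) - 1) (by omega) (by omega), ih t (by omega) (by omega)]

variable {k : ℕ} {p q : ℕ → ℕ}

/-- The times of first visit recover `q`. -/
lemma firstVisit_even (hq : q ∈ canon k) {j : ℕ} (hj : j < k) :
    firstVisit (biWalk p q) (biWalk p q (2 * j)) = 2 * q j := by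
  obtain ⟨h1, h2⟩ := (mem_canon.1 hq).1 j hj
  apply le_antisymm
  · refine Nat.sInf_le ?_
    simp [biWalk_even, h2]
  · have h3 := x_firstVisit (biWalk p q) (2 * j)
    obtain ⟨l, hl | hl⟩ := Nat.even_or_odd' (firstVisit (biWalk p q) (biWalk p q (2 * j)))
    · rw [hl, biWalk_even, biWalk_even, Sum.inl.injEq] at h3
      rw [hl]
      by_cases hlk : l < k
      · have := ((mem_canon.1 hq).1 l hlk).1
        omega
      · omega
    · rw [hl, biWalk_odd, biWalk_even] at h3
      exact absurd h3 (by simp)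

/-- The times of first visit recover `p`. -/
lemma firstVisit_odd (hp : p ∈ canon k) {j : ℕ} (hj : j < k) :
    firstVisit (biWalk p q) (biWalk p q (2 * j + 1)) = 2 * p j + 1 := by
  obtain ⟨h1, h2⟩ := (mem_canon.1 hp).1 j hj
  apply le_antisymm
  · refine Nat.sInf_le ?_
    simp [biWalk_odd, h2]
  · have h3 := x_firstVisit (biWalk p q) (2 * j + 1)
    obtain ⟨l, hl | hl⟩ := Nat.even_or_odd' (firstVisit (biWalk p q) (biWalk p q (2 * j + 1)))
    · rw [hl, biWalk_odd, biWalk_even] at h3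
      exact absurd h3 (by simp)
    · rw [hl, biWalk_odd, biWalk_odd, Sum.inr.injEq] at h3
      rw [hl]
      by_cases hlk : l < k
      · have := ((mem_canon.1 hp).1 l hlk).1
        omega
      · omega

open Classical in
/-- A tree pair is encoded by the set of times of the steps to new vertices and that of the steps up
to old ones (at most `4 ^ (2 k) = 16 ^ k` choices, with `k` times in total), together with the time of
discovery of the vertex reached by each step up to an old vertex. If there are `m` new vertices, this
leaves at most `m` choices for each of the `k - m` steps up to old ones. -/
lemma card_treePairs (hk : 0 < k) :
    ((canon k ×ˢ canon k).filter fun z => IsTreePair k z.1 z.2).card ≤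
      16 ^ k * ∑ m ∈ Finset.range (k + 1), m ^ (k - m) := by
  set T := (canon k ×ˢ canon k).filter fun z => IsTreePair k z.1 z.2 with hT
  have hTm : ∀ z ∈ T, z.1 ∈ canon k ∧ z.2 ∈ canon k ∧ IsTreePair k z.1 z.2 := by
    intro z hz
    rw [hT, Finset.mem_filter, Finset.mem_product] at hz
    exact ⟨hz.1.1, hz.1.2, hz.2⟩
  let w : (ℕ → ℕ) × (ℕ → ℕ) → ℕ → ℕ ⊕ ℕ := fun z => biWalk z.1 z.2
  let code : (ℕ → ℕ) × (ℕ → ℕ) → Finset ℕ × Finset ℕ := fun z =>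
    ((Finset.range (2 * k)).filter (IsNew (w z)), (Finset.range (2 * k)).filter (IsOld (w z)))
  set S := (Finset.range (2 * k)).powerset ×ˢ (Finset.range (2 * k)).powerset with hS
  have hcode : ∀ z ∈ T, code z ∈ S := by
    intro z _
    rw [hS, Finset.mem_product, Finset.mem_powerset, Finset.mem_powerset]
    exact ⟨Finset.filter_subset _ _, Finset.filter_subset _ _⟩
  have hsum : ∀ z ∈ T, (code z).1.card + (code z).2.card = k := by
    intro z hz
    obtain ⟨h1, h2, h3⟩ := hTm z hz
    have h4 := card_isUp (w z) (biWalk_closed (p := z.1) h2) (h3.step hk h1)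
    have h5 : (code z).1.card + (code z).2.card =
        ((Finset.range (2 * k)).filter (IsUp (w z))).card := by
      rw [← Finset.card_filter_add_card_filter_not (s := (Finset.range (2 * k)).filter (IsUp (w z)))
        (fun t => firstVisit (w z) (w z (t + 1)) = t + 1), Finset.filter_filter,
        Finset.filter_filter]
      congr 2 <;> exact Finset.filter_congr fun t _ => Iff.rfl
    omega
  have hfib : ∀ c ∈ S, (T.filter fun z => code z = c).card ≤
      ∑ m ∈ Finset.range (k + 1), m ^ (k - m) := by
    rintro ⟨A, B⟩ -
    rcases (T.filter fun z => code z = (A, B)).eq_empty_or_nonempty with h0 | ⟨z₀, hz₀⟩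
    · rw [h0]; simp
    rw [Finset.mem_filter] at hz₀
    have hAB := hsum z₀ hz₀.1
    rw [hz₀.2] at hAB
    simp only at hAB
    have hle : A.card ^ (k - A.card) ≤ ∑ m ∈ Finset.range (k + 1), m ^ (k - m) :=
      Finset.single_le_sum (f := fun m => m ^ (k - m)) (fun _ _ => Nat.zero_le _)
        (Finset.mem_range.2 (by omega))
    refine le_trans ?_ hle
    -- The functions which assign to each step up to an old vertex, at a time in `B`, the step in `A`
    -- which discovered this vertex.
    have hpi : (B.pi fun _ => A).card = A.card ^ (k - A.card) := by
      rw [Finset.card_pi, Finset.prod_const, show k - A.card = B.card by omega]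
    rw [← hpi]
    refine Finset.card_le_card_of_injOn
      (fun z t _ => firstVisit (w z) (w z (t + 1)) - 1) ?_ ?_
    · intro z hz
      rw [Finset.mem_coe, Finset.mem_filter] at hz
      have hA : (Finset.range (2 * k)).filter (IsNew (w z)) = A := congrArg Prod.fst hz.2
      have hB : (Finset.range (2 * k)).filter (IsOld (w z)) = B := congrArg Prod.snd hz.2
      rw [Finset.mem_coe, Finset.mem_pi]
      intro t ht
      rw [← hB, Finset.mem_filter, Finset.mem_range] at ht
      obtain ⟨h1, h2⟩ := ht.2.isNew
      rw [← hA, Finset.mem_filter, Finset.mem_range]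
      exact ⟨h1.trans ht.1, h2⟩
    · intro z hz z' hz' hzz
      rw [Finset.mem_coe, Finset.mem_filter] at hz hz'
      obtain ⟨h1, h2, h3⟩ := hTm z hz.1
      obtain ⟨h1', h2', h3'⟩ := hTm z' hz'.1
      have hA : (Finset.range (2 * k)).filter (IsNew (w z)) = A := congrArg Prod.fst hz.2
      have hB : (Finset.range (2 * k)).filter (IsOld (w z)) = B := congrArg Prod.snd hz.2
      have hA' : (Finset.range (2 * k)).filter (IsNew (w z')) = A := congrArg Prod.fst hz'.2
      have hB' : (Finset.range (2 * k)).filter (IsOld (w z')) = B := congrArg Prod.snd hz'.2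
      have key := firstVisit_determined (w z) (w z') (n := 2 * k) (h3.step hk h1)
        (h3'.step hk h1')
        (fun t ht => by
          have : t ∈ A ↔ t ∈ A := Iff.rfl
          nth_rewrite 1 [← hA] at this
          nth_rewrite 1 [← hA'] at this
          simpa [ht] using this)
        (fun t ht => by
          have : t ∈ B ↔ t ∈ B := Iff.rfl
          nth_rewrite 1 [← hB] at this
          nth_rewrite 1 [← hB'] at this
          simpa [ht] using this)
        (fun t ht hold => by
          have htB : t ∈ B := by
            rw [← hB, Finset.mem_filter, Finset.mem_range]
            exact ⟨ht, hold⟩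
          exact congrFun (congrFun hzz t) htB)
      refine Prod.ext ?_ ?_
      · funext j
        by_cases hj : j < k
        · have := key (2 * j + 1) (by omega)
          simp only [w] at this
          rw [firstVisit_odd h1 hj, firstVisit_odd h1' hj] at this
          omega
        · rw [(mem_canon.1 h1).2 j (by omega), (mem_canon.1 h1').2 j (by omega)]
      · funext j
        by_cases hj : j < k
        · have := key (2 * j) (by omega)
          simp only [w] at this
          rw [firstVisit_even h2 hj, firstVisit_even h2' hj] at this
          omega
        · rw [(mem_canon.1 h2).2 j (by omega), (mem_canon.1 h2').2 j (by omega)]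
  have hScard : S.card = 16 ^ k := by
    rw [hS, Finset.card_product, Finset.card_powerset, Finset.card_range, pow_mul, ← mul_pow]
    norm_num
  calc T.card = ∑ c ∈ S, (T.filter fun z => code z = c).card :=
        Finset.card_eq_sum_card_fiberwise hcode
    _ ≤ ∑ c ∈ S, ∑ m ∈ Finset.range (k + 1), m ^ (k - m) := Finset.sum_le_sum hfib
    _ = _ := by rw [Finset.sum_const, hScard, smul_eq_mul]

end counting

/-! ### Exchangeability and the expected traces -/

section kernel
variable {N n : ℕ}

/-- The partition of `{0, …, n}` into the level sets of the walk `i`. -/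
def walkKer (i : Fin (n + 1) → Fin N) (j : ℕ) : ℕ :=
  if j < n + 1 then sInf {l | wrap i l = wrap i j} else 0

lemma wrap_of_lt (i : Fin (n + 1) → Fin N) {j : ℕ} (hj : j < n + 1) : wrap i j = i ⟨j, hj⟩ := by
  unfold wrap
  congr 1
  ext
  simp [Nat.mod_eq_of_lt hj]

lemma wrap_walkKer (i : Fin (n + 1) → Fin N) {j : ℕ} (hj : j ≤ n + 1) :
    wrap i (walkKer i j) = wrap i j := by
  unfold walkKer
  split_ifs with h
  · exact Nat.sInf_mem (s := {l | wrap i l = wrap i j}) ⟨j, rfl⟩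
  · have : j = n + 1 := by omega
    subst this
    unfold wrap
    congr 1
    ext
    simp

lemma walkKer_mem_canon (i : Fin (n + 1) → Fin N) : walkKer i ∈ canon (n + 1) := by
  rw [mem_canon]
  refine ⟨fun j hj => ?_, fun j hj => if_neg (by omega)⟩
  have h1 : walkKer i j ≤ j := by
    unfold walkKer
    rw [if_pos hj]
    exact Nat.sInf_le (by simp)
  refine ⟨h1, ?_⟩
  have h2 := wrap_walkKer i hj.le
  conv_lhs => rw [walkKer]
  rw [if_pos (by omega), h2]
  conv_rhs => rw [walkKer]
  rw [if_pos hj]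

lemma walkKer_inj (i : Fin (n + 1) → Fin N) {j l : ℕ} (hj : j < n + 1) (hl : l < n + 1)
    (h : wrap i j = wrap i l) : walkKer i j = walkKer i l := by
  unfold walkKer
  rw [if_pos hj, if_pos hl, h]

lemma walkKer_eq {q : ℕ → ℕ} (hq : q ∈ canon (n + 1)) (e : reps q (n + 1) ↪ Fin N)
    (i : Fin (n + 1) → Fin N)
    (hi : ∀ j (hj : j < n + 1), wrap i j = e ⟨q j, mem_reps.2
      ⟨((mem_canon.1 hq).1 j hj).1.trans_lt hj, ((mem_canon.1 hq).1 j hj).2⟩⟩) :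
    walkKer i = q := by
  funext j
  by_cases hj : j < n + 1
  · obtain ⟨h1, h2⟩ := (mem_canon.1 hq).1 j hj
    have h3 : walkKer i j ≤ q j := by
      unfold walkKer
      rw [if_pos hj]
      refine Nat.sInf_le ?_
      rw [Set.mem_setOf_eq, hi _ (h1.trans_lt hj), hi _ hj]
      congr 2
    have h4 : walkKer i j < n + 1 := by omega
    have h5 := wrap_walkKer i hj.le
    rw [hi _ h4, hi _ hj, e.injective.eq_iff, Subtype.mk.injEq] at h5
    have := ((mem_canon.1 hq).1 _ h4).1
    omega
  · rw [(mem_canon.1 hq).2 j (by omega), walkKer, if_neg hj]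

open Classical in
/-- The number of walks with a given partition into level sets. -/
lemma card_walkKer {q : ℕ → ℕ} (hq : q ∈ canon (n + 1)) :
    (Finset.univ.filter fun i : Fin (n + 1) → Fin N => walkKer i = q).card =
      N.descFactorial (reps q (n + 1)).card := by
  have hm : ∀ j, j < n + 1 → q j ∈ reps q (n + 1) := fun j hj => mem_reps.2
      ⟨((mem_canon.1 hq).1 j hj).1.trans_lt hj, ((mem_canon.1 hq).1 j hj).2⟩
  have hw : ∀ (e : reps q (n + 1) ↪ Fin N) j (hj : j < n + 1),
      wrap (fun j : Fin (n + 1) => e ⟨q j, hm j j.2⟩) j = e ⟨q j, hm j hj⟩ := by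
    intro e j hj
    rw [wrap_of_lt _ hj]
  let E : {i : Fin (n + 1) → Fin N // walkKer i = q} ≃ (reps q (n + 1) ↪ Fin N) :=
    { toFun := fun i => ⟨fun r => wrap i.1 r, by
        rintro ⟨a, ha⟩ ⟨b, hb⟩ h
        obtain ⟨h1, h2⟩ := mem_reps.1 ha
        obtain ⟨h3, h4⟩ := mem_reps.1 hb
        have := walkKer_inj i.1 h1 h3 h
        rw [i.2, h2, h4] at this
        exact Subtype.ext this⟩
      invFun := fun e => ⟨fun j => e ⟨q j, hm j j.2⟩, walkKer_eq hq e _ (hw e)⟩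
      left_inv := by
        rintro ⟨i, rfl⟩
        refine Subtype.ext (funext fun j => ?_)
        change wrap i (walkKer i j) = i j
        rw [wrap_walkKer i j.2.le, wrap_of_lt i j.2]
      right_inv := by
        intro e
        ext ⟨r, hr⟩
        obtain ⟨h1, h2⟩ := mem_reps.1 hr
        change ((wrap (fun j : Fin (n + 1) => e ⟨q j, hm j j.2⟩) r : Fin N) : ℕ) = _
        rw [hw e r h1]
        congr 3 }
  rw [← Fintype.card_subtype, Fintype.card_congr E, Fintype.card_embedding_eq, Fintype.card_fin,
    Fintype.card_coe]

lemma exists_perm_extend (s : Finset (Fin N)) (f : Fin N → Fin N) (hf : Set.InjOn f s) :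
    ∃ e : Equiv.Perm (Fin N), ∀ x ∈ s, e x = f x := by
  obtain ⟨g, hg⟩ := Finset.exists_equiv_extend_of_card_eq (α := Fin N) (β := Fin N)
    (t := Finset.univ) (by simp) (s := s) (f := f) (by simp) hf
  exact ⟨g.trans (Equiv.subtypeUnivEquiv (by simp)), fun x hx => hg x hx⟩

end kernel

section exch
variable {Ω : Type*} [MeasurableSpace Ω] {P : Measure Ω} [IsProbabilityMeasure P]
  {U : (N : ℕ) → Ω → Fin N → ℂ} {Γ : (k : ℕ) → (Fin k → ℕ) → ℝ}

lemma HypGamma.allMom (h : HypGamma P U Γ) (N : ℕ) (i : Fin N) : AllMom P (fun ω => U N ω i) :=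
  ⟨(measurable_pi_apply i).comp (h.meas N), h.moments N i⟩

lemma HypGamma.integral_perm (h : HypGamma P U Γ) {N : ℕ} (e : Equiv.Perm (Fin N))
    {E : Type*} [NormedAddCommGroup E] [NormedSpace ℝ E] {g : (Fin N → ℂ) → E}
    (hg : Continuous g) :
    ∫ ω, g (fun i => U N ω (e i)) ∂P = ∫ ω, g (U N ω) ∂P := by
  have hm : Measurable fun ω => fun i => U N ω (e i) :=
    measurable_pi_lambda _ fun i => (measurable_pi_apply (e i)).comp (h.meas N)
  rw [← integral_map (μ := P) hm.aemeasurable (hg.aestronglyMeasurable), h.exchangeable N e,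
    integral_map (h.meas N).aemeasurable (hg.aestronglyMeasurable)]

/-- The `a`-th coordinate of a vector, extended by `0`. -/
def coord {N : ℕ} (a : ℕ) (z : Fin N → ℂ) : ℂ := if h : a < N then z ⟨a, h⟩ else 0

lemma entry_eq_coord (U : (N : ℕ) → Ω → Fin N → ℂ) (N : ℕ) (ω : Ω) (a : ℕ) :
    entry U N ω a = coord a (U N ω) := rfl

lemma continuous_coord {N : ℕ} (a : ℕ) : Continuous (coord (N := N) a) := by
  unfold coord
  split_ifs
  · exact continuous_apply _
  · exact continuous_const

/-- The joint moment of the entries of `U N` attached to a block `V` and a partition `q`. -/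
def blockMom (P : Measure Ω) (U : (N : ℕ) → Ω → Fin N → ℂ) (N : ℕ) (q : ℕ → ℕ)
    (V : Finset ℕ) : ℂ :=
  ∫ ω, ∏ j ∈ V, (entry U N ω (q j) * (starRingEnd ℂ) (entry U N ω (q (j + 1)))) ∂P

/-- By exchangeability, the block moment along a walk depends only on the level sets of the walk. -/
lemma HypGamma.blockMom_eq (h : HypGamma P U Γ) {N n : ℕ} (hN : n + 1 ≤ N)
    (i : Fin (n + 1) → Fin N) {V : Finset ℕ} (hV : V ⊆ Finset.range (n + 1)) :
    ∫ ω, ∏ j ∈ V, (U N ω (wrap i j) * (starRingEnd ℂ) (U N ω (wrap i (j + 1)))) ∂P =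
      blockMom P U N (walkKer i) V := by
  have hc := mem_canon.1 (walkKer_mem_canon i)
  have hlt : ∀ j ≤ n + 1, walkKer i j < n + 1 := by
    intro j hj
    rcases hj.eq_or_lt with rfl | hj
    · rw [hc.2 _ le_rfl]; omega
    · exact (hc.1 j hj).1.trans_lt hj
  have hidem : ∀ j ≤ n + 1, walkKer i (walkKer i j) = walkKer i j := by
    intro j hj
    rcases hj.eq_or_lt with rfl | hj
    · rw [hc.2 _ le_rfl]; exact Nat.le_zero.1 (hc.1 0 (by omega)).1
    · exact (hc.1 j hj).2
  obtain ⟨e, he⟩ := exists_perm_extend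
    (Finset.univ.filter fun a : Fin N => (a : ℕ) ∈ reps (walkKer i) (n + 1)) (fun a => wrap i a) (by
      intro a ha b hb hab
      simp only [Finset.coe_filter, Finset.mem_univ, true_and, Set.mem_setOf_eq, mem_reps] at ha hb
      have := walkKer_inj i ha.1 hb.1 hab
      rw [ha.2, hb.2] at this
      exact Fin.ext this)
  have hw : ∀ j (hj : j ≤ n + 1), wrap i j = e ⟨walkKer i j, (hlt j hj).trans_le hN⟩ := by
    intro j hj
    rw [he]
    · exact (wrap_walkKer i hj).symm
    · simp only [Finset.mem_filter, Finset.mem_univ, true_and, mem_reps]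
      exact ⟨hlt j hj, hidem j hj⟩
  have hent : ∀ j ≤ n + 1, ∀ ω, coord (walkKer i j) (fun a => U N ω (e a)) = U N ω (wrap i j) := by
    intro j hj ω
    rw [hw j hj, coord, dif_pos]
  unfold blockMom
  simp only [entry_eq_coord]
  rw [← h.integral_perm e (g := fun z => ∏ j ∈ V, (coord (walkKer i j) z *
    (starRingEnd ℂ) (coord (walkKer i (j + 1)) z)))
    (continuous_finset_prod _ fun j _ => (continuous_coord _).mul
      (Complex.continuous_conj.comp (continuous_coord _)))]
  refine integral_congr_ae (ae_of_all _ fun ω => Finset.prod_congr rfl fun j hj => ?_)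
  have := Finset.mem_range.1 (hV hj)
  rw [hent j (by omega), hent (j + 1) (by omega)]

variable {γ : ℝ} {σ : Measure ℝ} [IsFiniteMeasure σ]

/-- The contribution to `iᵏ E[Tr Mᵏ]` of the closed walks with level sets `q` and of the partition `p`
in the moment–cumulant formula. -/
def pairTerm (P : Measure Ω) (U : (N : ℕ) → Ω → Fin N → ℂ) (γ : ℝ) (σ : Measure ℝ) (k N : ℕ)
    (p q : ℕ → ℕ) : ℂ :=
  (N.descFactorial (reps q k).card : ℂ) * ∏ r ∈ reps p k, ((N : ℂ) *
    levyPsi γ σ (block p k r).card 0 * (N : ℂ)⁻¹ ^ (block p k r).card *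
      blockMom P U N q (block p k r))

lemma allMom_entry (hσ : ∃ R : ℝ, σ (Set.Icc (-R) R)ᶜ = 0) {N : ℕ} {u : Ω → Fin N → ℂ}
    (hu : ∀ i, AllMom P (fun ω => u ω i)) {M : Ω → Matrix (Fin N) (Fin N) ℂ}
    (hMm : Measurable M) (hM : ∀ ω, (M ω).IsHermitian) (hlaw : LawAt P γ σ u M) (a b : Fin N) :
    AllMom P (fun ω => M ω a b) := by
  have := allMom_trM hσ hu hMm hM hlaw (Matrix.single b a 1)
  have e : trM M (Matrix.single b a 1) = fun ω => M ω a b := funext fun ω => trM_single M a b ω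
  rwa [e] at this

/-- The expected trace of the powers of `M`, the walks being sorted by their level sets. -/
lemma HypGamma.trace_moments (h : HypGamma P U Γ) (hσ : ∃ R : ℝ, σ (Set.Icc (-R) R)ᶜ = 0)
    {N n : ℕ} (hN : n + 1 ≤ N) {M : Ω → Matrix (Fin N) (Fin N) ℂ}
    (hMm : Measurable M) (hM : ∀ ω, (M ω).IsHermitian) (hlaw : LawAt P γ σ (U N) M) :
    Complex.I ^ (n + 1) * ∫ ω, (M ω ^ (n + 1)).trace ∂P =
      ∑ q ∈ canon (n + 1), ∑ p ∈ canon (n + 1), pairTerm P U γ σ (n + 1) N p q := by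
  classical
  have hE := allMom_entry hσ (h.allMom N) hMm hM hlaw
  simp only [trace_pow_eq_sum_walks]
  have hI : ∀ i : Fin (n + 1) → Fin N, Integrable
      (fun ω => ∏ j ∈ Finset.range (n + 1), M ω (wrap i j) (wrap i (j + 1))) P :=
    fun i => (AllMom.prod fun j _ => hE (wrap i j) (wrap i (j + 1))).integrable
  rw [integral_finsetSum _ fun i _ => hI i, Finset.mul_sum,
    ← Finset.sum_fiberwise_of_maps_to (g := walkKer) (t := canon (n + 1))
      (fun i _ => walkKer_mem_canon i)]
  refine Finset.sum_congr rfl fun q hq => ?_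
  have h1 : ∀ i ∈ Finset.univ.filter (fun i : Fin (n + 1) → Fin N => walkKer i = q),
      Complex.I ^ (n + 1) * ∫ ω, ∏ j ∈ Finset.range (n + 1), M ω (wrap i j) (wrap i (j + 1)) ∂P =
      ∑ p ∈ canon (n + 1), ∏ r ∈ reps p (n + 1), ((N : ℂ) *
        levyPsi γ σ (block p (n + 1) r).card 0 * (N : ℂ)⁻¹ ^ (block p (n + 1) r).card *
          blockMom P U N q (block p (n + 1) r)) := by
    intro i hi
    obtain rfl := (Finset.mem_filter.1 hi).2
    rw [entry_moments hσ (h.allMom N) hMm hM hlaw (n + 1) (wrap i) (fun j => wrap i (j + 1))]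
    refine Finset.sum_congr rfl fun p _ => Finset.prod_congr rfl fun r _ => ?_
    rw [h.blockMom_eq hN i (V := block p (n + 1) r) (Finset.filter_subset _ _)]
  rw [Finset.sum_congr rfl h1, Finset.sum_const, card_walkKer hq, nsmul_eq_mul, Finset.mul_sum]
  rfl

end exch

/-! ### Limits of block moments -/

section limits
variable {Ω : Type*} [MeasurableSpace Ω] {P : Measure Ω} [IsProbabilityMeasure P]
  {U : (N : ℕ) → Ω → Fin N → ℂ} {Γ : (k : ℕ) → (Fin k → ℕ) → ℝ}

/-- The moment bound `O(N ^ (p - d))` of Hypothesis (Γ) for block moments. -/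
lemma HypGamma.blockMom_le (h : HypGamma P U Γ) (q : ℕ → ℕ) {V : Finset ℕ} (hV : V.Nonempty) :
    ∃ C : ℝ, ∀ᶠ N in atTop, ‖blockMom P U N q V‖ ≤
      C * (N : ℝ) ^ ((V.card : ℤ) - ((ends q V).card : ℤ)) := by
  obtain ⟨C, hC⟩ := h.momBound V.card hV.card_pos (fun j => q (V.equivFin.symm j))
    (fun j => q (V.equivFin.symm j + 1))
  refine ⟨C, hC.mono fun N hN => ?_⟩
  have hprod : ∀ f : ℕ → ℂ, ∏ j : Fin V.card, f (V.equivFin.symm j) = ∏ j ∈ V, f j := by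
    intro f
    rw [V.equivFin.symm.prod_comp (fun j : V => f j), Finset.prod_coe_sort]
  have himg : ∀ f : ℕ → ℕ, Finset.univ.image (fun j : Fin V.card => f (V.equivFin.symm j)) =
      V.image f := by
    intro f
    ext v
    simp only [Finset.mem_image, Finset.mem_univ, true_and]
    constructor
    · rintro ⟨j, rfl⟩; exact ⟨_, (V.equivFin.symm j).2, rfl⟩
    · rintro ⟨j, hj, rfl⟩; exact ⟨V.equivFin ⟨j, hj⟩, by simp⟩
  have e : ∀ ω, (∏ j : Fin V.card, entry U N ω (q (V.equivFin.symm j))) *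
      ∏ j : Fin V.card, (starRingEnd ℂ) (entry U N ω (q (V.equivFin.symm j + 1))) =
      ∏ j ∈ V, (entry U N ω (q j) * (starRingEnd ℂ) (entry U N ω (q (j + 1)))) := by
    intro ω
    rw [hprod (fun j => entry U N ω (q j)),
      hprod (fun j => (starRingEnd ℂ) (entry U N ω (q (j + 1)))), Finset.prod_mul_distrib]
  simp only [e] at hN
  rw [himg q, himg (fun j => q (j + 1))] at hN
  exact hN

/-- Balanced products of entries are products of absolute values. -/
lemma prod_balanced (z : ℕ → ℂ) (q : ℕ → ℕ) (V : Finset ℕ)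
    (hb : ∀ v, (V.filter fun j => q j = v).card = (V.filter fun j => q (j + 1) = v).card) :
    ∏ j ∈ V, (z (q j) * (starRingEnd ℂ) (z (q (j + 1)))) =
      ((∏ v ∈ V.image q, ‖z v‖ ^ (2 * (V.filter fun j => q j = v).card) : ℝ) : ℂ) ∧
    ends q V = V.image q := by
  have himg : V.image (fun j => q (j + 1)) = V.image q := by
    ext v
    have h1 : ∀ f : ℕ → ℕ, v ∈ V.image f ↔ 0 < (V.filter fun j => f j = v).card := by
      intro f
      rw [Finset.card_pos, Finset.mem_image]
      simp only [Finset.Nonempty, Finset.mem_filter]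
    rw [h1, h1, hb]
  refine ⟨?_, by rw [ends, himg, Finset.union_self]⟩
  rw [Finset.prod_mul_distrib, Finset.prod_comp z q,
    Finset.prod_comp (fun v => (starRingEnd ℂ) (z v)) (fun j => q (j + 1)), himg,
    ← Finset.prod_mul_distrib, Complex.ofReal_prod]
  refine Finset.prod_congr rfl fun v _ => ?_
  rw [← hb v, ← mul_pow, Complex.mul_conj, pow_mul, ← Complex.normSq_eq_norm_sq]
  push_cast
  rfl

/-- By exchangeability, the entries with indices in `S` may be replaced by the first `S.card` ones. -/
lemma HypGamma.integral_prod_enum (h : HypGamma P U Γ) {N : ℕ} (S : Finset ℕ)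
    (hS : ∀ v ∈ S, v < N) (c : ℕ → ℕ) :
    ∫ ω, ∏ v ∈ S, ‖entry U N ω v‖ ^ c v ∂P =
      ∫ ω, ∏ j : Fin S.card, ‖entry U N ω j‖ ^ c (S.equivFin.symm j) ∂P := by
  have hN : S.card ≤ N := by
    have := Finset.card_le_card (fun v hv => Finset.mem_range.2 (hS v hv) : S ⊆ Finset.range N)
    simpa using this
  let f : Fin N → Fin N := fun a =>
    if ha : (a : ℕ) < S.card then ⟨S.equivFin.symm ⟨a, ha⟩, hS _ (S.equivFin.symm ⟨a, ha⟩).2⟩ else a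
  obtain ⟨e, he⟩ := exists_perm_extend (Finset.univ.filter fun a : Fin N => (a : ℕ) < S.card) f (by
    intro a ha b hb hab
    simp only [Finset.coe_filter, Finset.mem_univ, true_and, Set.mem_setOf_eq] at ha hb
    simp only [f, dif_pos ha, dif_pos hb, Fin.mk.injEq] at hab
    have := S.equivFin.symm.injective (Subtype.ext hab)
    exact Fin.ext (by simpa using this))
  have h1 := h.integral_perm e (g := fun z => ∏ j : Fin S.card,
    ‖coord (j : ℕ) z‖ ^ c (S.equivFin.symm j))
    (continuous_finset_prod _ fun j _ => (continuous_coord _).norm.pow _)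
  simp only [entry_eq_coord]
  rw [← h1]
  refine integral_congr_ae (ae_of_all _ fun ω => ?_)
  simp only
  rw [← Finset.prod_coe_sort S, ← S.equivFin.symm.prod_comp]
  refine Finset.prod_congr rfl fun j _ => ?_
  congr 2
  have hj : (j : ℕ) < N := j.2.trans_le hN
  rw [coord, dif_pos (hS _ (S.equivFin.symm j).2), coord, dif_pos hj, he _ (by simp)]
  simp only [f, dif_pos j.2]

/-- A balanced block moment is an expectation of products of `|U_N(v)| ^ (2 n_v)`, so its normalized
limit is a value of `Γ`, which is bounded geometrically. -/
lemma HypGamma.blockMom_lim (h : HypGamma P U Γ) : ∃ D : ℝ, 1 ≤ D ∧ ∀ (q : ℕ → ℕ) (V : Finset ℕ),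
    V.Nonempty →
    (∀ v, (V.filter fun j => q j = v).card = (V.filter fun j => q (j + 1) = v).card) →
    ∃ l : ℂ, ‖l‖ ≤ D ^ V.card ∧ Tendsto (fun N : ℕ =>
      (N : ℂ) ^ (((ends q V).card : ℤ) - (V.card : ℤ)) * blockMom P U N q V) atTop (𝓝 l) := by
  obtain ⟨C, hC⟩ := h.gammaBound
  refine ⟨max 1 |C|, le_max_left _ _, fun q V hV hb => ?_⟩
  set S := V.image q with hS
  set c : ℕ → ℕ := fun v => (V.filter fun j => q j = v).card with hc
  let n : Fin S.card → ℕ := fun j => c (S.equivFin.symm j)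
  have hn : ∀ j, 1 ≤ n j := by
    intro j
    obtain ⟨i, hi, hi'⟩ := Finset.mem_image.1 (S.equivFin.symm j).2
    exact Finset.card_pos.2 ⟨i, Finset.mem_filter.2 ⟨hi, hi'⟩⟩
  have hsum : ∑ j, n j = V.card := by
    have e1 : ∑ j, n j = ∑ v ∈ S, c v := by
      rw [← Finset.sum_coe_sort S c, ← S.equivFin.symm.sum_comp]
    rw [e1, Finset.card_eq_sum_card_image q V]
  have hScard : 1 ≤ S.card := (hV.image q).card_pos
  have hlim := h.gammaLim S.card hScard n hn
  have hpos : 0 ≤ Γ S.card n := ge_of_tendsto' hlim fun N => integral_nonneg fun ω =>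
    Finset.prod_nonneg fun j _ => by positivity
  have hbd := hC S.card hScard n hn
  refine ⟨(Γ S.card n : ℂ), ?_, ?_⟩
  · rw [Complex.norm_real, Real.norm_of_nonneg hpos]
    refine hbd.trans ((le_abs_self _).trans ?_)
    rw [abs_pow, hsum]
    exact pow_le_pow_left₀ (abs_nonneg _) (le_max_right _ _) _
  · have hlim' := (Complex.continuous_ofReal.tendsto _).comp hlim
    refine hlim'.congr' ?_
    filter_upwards [eventually_gt_atTop (S.sup id), eventually_ge_atTop 1] with N hN hN1
    have hSN : ∀ v ∈ S, v < N := fun v hv => (Finset.le_sup (f := id) hv).trans_lt hN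
    have hN0 : (N : ℝ) ≠ 0 := by positivity
    rw [Function.comp_apply]
    have e1 : blockMom P U N q V = ((∫ ω, ∏ v ∈ S, ‖entry U N ω v‖ ^ (2 * c v) ∂P : ℝ) : ℂ) := by
      rw [← integral_complex_ofReal]
      exact integral_congr_ae (ae_of_all _ fun ω =>
        (prod_balanced (fun v => entry U N ω v) q V hb).1)
    rw [e1, (prod_balanced (fun _ => 0) q V hb).2, h.integral_prod_enum S hSN (fun v => 2 * c v)]
    have e2 : ∏ j : Fin S.card, (N : ℝ) ^ (n j - 1) = (N : ℝ) ^ ((V.card : ℤ) - (S.card : ℤ)) := by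
      rw [Finset.prod_pow_eq_pow_sum, ← zpow_natCast]
      congr 1
      have : ∑ j, (n j - 1) + S.card = V.card := by
        have e3 : ∑ j, (n j - 1 + 1) = ∑ j, n j :=
          Finset.sum_congr rfl fun j _ => Nat.sub_add_cancel (hn j)
        rw [Finset.sum_add_distrib, hsum] at e3
        simpa using e3
      omega
    simp only [Finset.prod_div_distrib, e2]
    rw [integral_div, div_eq_mul_inv, ← _root_.zpow_neg, neg_sub, mul_comm]
    push_cast
    rfl

end limits

/-! ### Limits of the contributions of pairs -/

section limits
variable {Ω : Type*} [MeasurableSpace Ω] {P : Measure Ω} [IsProbabilityMeasure P]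
  {U : (N : ℕ) → Ω → Fin N → ℂ} {Γ : (k : ℕ) → (Fin k → ℕ) → ℝ}

lemma tendsto_descFactorial_div (d : ℕ) :
    Tendsto (fun N : ℕ => (N.descFactorial d : ℂ) / (N : ℂ) ^ d) atTop (𝓝 1) := by
  induction d with
  | zero => simp
  | succ d ih =>
    have h1 : Tendsto (fun N : ℕ => 1 - (d : ℂ) * (N : ℂ)⁻¹) atTop (𝓝 1) := by
      have h2 : Tendsto (fun N : ℕ => ((N : ℝ) : ℂ)⁻¹) atTop (𝓝 0) := by
        have := (Complex.continuous_ofReal.tendsto _).comp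
          (tendsto_inv_atTop_nhds_zero_nat (𝕜 := ℝ))
        simpa [Function.comp_def] using this
      simpa using (h2.const_mul (d : ℂ)).const_sub 1
    have h3 := h1.mul ih
    rw [one_mul] at h3
    refine h3.congr' ?_
    filter_upwards [eventually_ge_atTop (d + 1)] with N hN
    have hN0 : (N : ℂ) ≠ 0 := by
      have : N ≠ 0 := by omega
      exact_mod_cast this
    rw [Nat.descFactorial_succ, Nat.cast_mul, Nat.cast_sub (by omega)]
    field_simp
    ring

/-- The normalized block moment, which is bounded in `N`. -/
def normMom (P : Measure Ω) (U : (N : ℕ) → Ω → Fin N → ℂ) (N : ℕ) (q : ℕ → ℕ)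
    (V : Finset ℕ) : ℂ :=
  (N : ℂ) ^ (((ends q V).card : ℤ) - (V.card : ℤ)) * blockMom P U N q V

/-- The powers of `N` are collected in the second factor. By `card_reps_le` it is at most `1`, with
equality for tree pairs, and it tends to `0` for the other pairs. -/
lemma pairTerm_eq (γ : ℝ) (σ : Measure ℝ) (k : ℕ) (p q : ℕ → ℕ) {N : ℕ} (hN : 1 ≤ N) :
    pairTerm P U γ σ k N p q / N =
      ((N.descFactorial (reps q k).card : ℂ) / (N : ℂ) ^ (reps q k).card) *
      ((N : ℂ) ^ ((reps q k).card + (reps p k).card) /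
        (N : ℂ) ^ (∑ r ∈ reps p k, (ends q (block p k r)).card + 1)) *
      ∏ r ∈ reps p k, (levyPsi γ σ (block p k r).card 0 * normMom P U N q (block p k r)) := by
  have hN0 : (N : ℂ) ≠ 0 := by
    have : N ≠ 0 := by omega
    exact_mod_cast this
  have h1 : ∀ r ∈ reps p k, (N : ℂ) * levyPsi γ σ (block p k r).card 0 *
      (N : ℂ)⁻¹ ^ (block p k r).card * blockMom P U N q (block p k r) =
      (N : ℂ) * ((N : ℂ) ^ (ends q (block p k r)).card)⁻¹ *
        (levyPsi γ σ (block p k r).card 0 * normMom P U N q (block p k r)) := by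
    intro r _
    rw [normMom, zpow_sub₀ hN0, zpow_natCast, zpow_natCast, inv_pow]
    field_simp
  rw [pairTerm, Finset.prod_congr rfl h1, Finset.prod_mul_distrib, Finset.prod_mul_distrib,
    Finset.prod_const, Finset.prod_inv_distrib, Finset.prod_pow_eq_pow_sum]
  field_simp
  ring

lemma tendsto_pow_div_pow {a b : ℕ} (h : a < b) :
    Tendsto (fun N : ℕ => (N : ℂ) ^ a / (N : ℂ) ^ b) atTop (𝓝 0) := by
  have h1 : Tendsto (fun N : ℕ => ((N : ℝ) ^ (b - a))⁻¹) atTop (𝓝 0) :=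
    ((tendsto_pow_atTop (by omega)).comp tendsto_natCast_atTop_atTop).inv_tendsto_atTop
  have h2 := (Complex.continuous_ofReal.tendsto _).comp h1
  rw [Complex.ofReal_zero] at h2
  refine h2.congr' ?_
  filter_upwards [eventually_ge_atTop 1] with N hN
  have hN0 : (N : ℂ) ≠ 0 := by
    have : N ≠ 0 := by omega
    exact_mod_cast this
  obtain ⟨c, rfl⟩ := Nat.exists_eq_add_of_lt h
  rw [Function.comp_apply, show a + c + 1 - a = c + 1 by omega, show a + c + 1 = a + (c + 1) by ring,
    pow_add]
  push_cast
  field_simp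
  ring

lemma HypGamma.normMom_le (h : HypGamma P U Γ) (q : ℕ → ℕ) {V : Finset ℕ} (hV : V.Nonempty) :
    ∃ C : ℝ, ∀ᶠ N in atTop, ‖normMom P U N q V‖ ≤ C := by
  obtain ⟨C, hC⟩ := h.blockMom_le q hV
  refine ⟨C, ?_⟩
  filter_upwards [hC, eventually_ge_atTop 1] with N h1 hN
  have hN0 : 0 < (N : ℝ) := by exact_mod_cast hN
  rw [normMom, norm_mul, norm_zpow, Complex.norm_natCast]
  calc _ ≤ (N : ℝ) ^ (((ends q V).card : ℤ) - (V.card : ℤ)) *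
        (C * (N : ℝ) ^ ((V.card : ℤ) - ((ends q V).card : ℤ))) := by gcongr
    _ = C := by
      rw [mul_left_comm, ← zpow_add₀ hN0.ne']
      simp

lemma block_nonempty {k r : ℕ} {p : ℕ → ℕ} (hr : r ∈ reps p k) : (block p k r).Nonempty :=
  ⟨r, mem_block.2 (mem_reps.1 hr)⟩

lemma sum_card_block {k : ℕ} {p : ℕ → ℕ} (hp : p ∈ canon k) :
    ∑ r ∈ reps p k, (block p k r).card = k := by
  have := Finset.card_eq_sum_card_fiberwise (f := p) (s := Finset.range k) (t := reps p k)
    (fun j hj => canon_reps hp (Finset.mem_range.1 hj))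
  rw [Finset.card_range] at this
  exact this.symm

open Classical in
/-- Only the tree pairs contribute to the limit: for the others the power of `N` in `pairTerm_eq`
tends to `0` while the normalized block moments stay bounded. For tree pairs all blocks are balanced,
so `blockMom_lim` applies. -/
lemma HypGamma.pairTerm_lim (h : HypGamma P U Γ) (γ : ℝ) {σ : Measure ℝ} [IsFiniteMeasure σ]
    (hσ : ∃ R : ℝ, σ (Set.Icc (-R) R)ᶜ = 0) : ∃ B : ℝ, 0 ≤ B ∧ ∀ k, 0 < k → ∀ p ∈ canon k,
    ∀ q ∈ canon k, ∃ L : ℂ, ‖L‖ ≤ (if IsTreePair k p q then B ^ k else 0) ∧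
      Tendsto (fun N : ℕ => pairTerm P U γ σ k N p q / N) atTop (𝓝 L) := by
  obtain ⟨C, hC1, hC⟩ := exists_norm_levyPsi_le γ hσ
  obtain ⟨D, hD1, hD⟩ := h.blockMom_lim
  refine ⟨C ^ 2 * D, by positivity, fun k hk p hp q hq => ?_⟩
  have heq := (eventually_ge_atTop 1).mono fun N hN =>
    pairTerm_eq (P := P) (U := U) γ σ k p q hN
  have hd := tendsto_descFactorial_div (reps q k).card
  by_cases ht : IsTreePair k p q
  · rw [if_pos ht]
    have h1 : ∀ r, ∃ l : ℂ, r ∈ reps p k → ‖l‖ ≤ D ^ (block p k r).card ∧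
        Tendsto (fun N => normMom P U N q (block p k r)) atTop (𝓝 l) := by
      intro r
      by_cases hr : r ∈ reps p k
      · obtain ⟨l, hl⟩ := hD q (block p k r) (block_nonempty hr) (ht.balanced hk hp hq r)
        exact ⟨l, fun _ => hl⟩
      · exact ⟨0, fun h => absurd h hr⟩
    choose l hl using h1
    refine ⟨∏ r ∈ reps p k, (levyPsi γ σ (block p k r).card 0 * l r), ?_, ?_⟩
    · rw [norm_prod]
      calc ∏ r ∈ reps p k, ‖levyPsi γ σ (block p k r).card 0 * l r‖
          ≤ ∏ r ∈ reps p k, (C ^ 2 * D) ^ (block p k r).card := by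
            refine Finset.prod_le_prod (fun _ _ => norm_nonneg _) fun r hr => ?_
            rw [norm_mul, mul_pow]
            have h2 := hC (block p k r).card 0
            -- The block is non-empty, so its cardinality `n` satisfies `n + 1 ≤ 2 n`.
            have h3 : C ^ ((block p k r).card + 1) ≤ (C ^ 2) ^ (block p k r).card := by
              rw [← pow_mul]
              have := (block_nonempty hr).card_pos
              exact pow_le_pow_right₀ hC1 (by omega)
            refine mul_le_mul (h2.trans ?_) (hl r hr).1 (norm_nonneg _) (by positivity)
            simpa using h3
        _ = (C ^ 2 * D) ^ k := by rw [Finset.prod_pow_eq_pow_sum, sum_card_block hp]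
    · have h2 := tendsto_finset_prod (reps p k)
        (fun r hr => ((hl r hr).2.const_mul (levyPsi γ σ (block p k r).card 0)))
      have h3 := hd.mul h2
      rw [one_mul] at h3
      refine h3.congr' ?_
      filter_upwards [heq, eventually_ge_atTop 1] with N hN hN1
      have hN0 : (N : ℂ) ≠ 0 := by
        have : N ≠ 0 := by omega
        exact_mod_cast this
      rw [hN, ← show _ = _ from ht, div_self (pow_ne_zero _ hN0), mul_one]
  · rw [if_neg ht]
    refine ⟨0, by simp, ?_⟩
    have hlt : (reps q k).card + (reps p k).card <
        ∑ r ∈ reps p k, (ends q (block p k r)).card + 1 :=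
      lt_of_le_of_ne (card_reps_le hk hp) ht
    have h1 : ∀ r, ∃ K : ℝ, r ∈ reps p k →
        ∀ᶠ N in atTop, ‖normMom P U N q (block p k r)‖ ≤ K := by
      intro r
      by_cases hr : r ∈ reps p k
      · obtain ⟨K, hK⟩ := h.normMom_le q (block_nonempty hr)
        exact ⟨K, fun _ => hK⟩
      · exact ⟨0, fun h => absurd h hr⟩
    choose K hK using h1
    have h2 : ∀ᶠ N in atTop, ∀ r ∈ reps p k, ‖normMom P U N q (block p k r)‖ ≤ K r :=
      (Filter.eventually_all_finset _).2 hK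
    have h3 := (hd.mul (tendsto_pow_div_pow hlt)).norm.mul_const
      (∏ r ∈ reps p k, (‖levyPsi γ σ (block p k r).card 0‖ * K r))
    rw [mul_zero, norm_zero, zero_mul] at h3
    refine squeeze_zero_norm' ?_ h3
    filter_upwards [h2, heq] with N hN hN2
    rw [hN2, norm_mul, norm_prod]
    refine mul_le_mul_of_nonneg_left ?_ (norm_nonneg _)
    refine Finset.prod_le_prod (fun _ _ => norm_nonneg _) fun r hr => ?_
    rw [norm_mul]
    exact mul_le_mul_of_nonneg_left (hN r hr) (norm_nonneg _)

end limits

/-! ### The limiting moments -/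

/-- Since `m! (k - m)! ≤ k!`, the series is dominated by
`∑ₘ Aᵐ / m! · ∑ₗ (A m)ˡ / l! = ∑ₘ (A eᴬ)ᵐ / m! < ∞`. -/
lemma summable_growth {A : ℝ} (hA : 0 ≤ A) :
    Summable fun k : ℕ => A ^ k * (∑ m ∈ Finset.range (k + 1), (m : ℝ) ^ (k - m)) / k.factorial := by
  set g : ℕ × ℕ → ℝ := fun z => A ^ z.1 / z.1.factorial * ((A * z.1) ^ z.2 / z.2.factorial) with hg
  have hg0 : ∀ z, 0 ≤ g z := fun z => by simp only [hg]; positivity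
  have hgs : Summable g := by
    rw [summable_prod_of_nonneg hg0]
    refine ⟨fun m => by
      simpa only [hg] using
        (Real.summable_pow_div_factorial (A * m)).mul_left (A ^ m / m.factorial), ?_⟩
    have : (fun m : ℕ => ∑' l, g (m, l)) = fun m : ℕ => (A * Real.exp A) ^ m / m.factorial := by
      funext m
      simp only [hg, tsum_mul_left]
      have h1 : ∑' l : ℕ, (A * m) ^ l / l.factorial = Real.exp (A * m) := by
        rw [Real.exp_eq_exp_ℝ, NormedSpace.exp_eq_tsum_div]
      rw [h1, mul_pow, mul_comm A (m : ℝ), Real.exp_nat_mul]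
      ring
    rw [this]
    exact Real.summable_pow_div_factorial _
  have h2 : Summable fun k : ℕ => ∑ z ∈ Finset.HasAntidiagonal.antidiagonal k, g z := by
    have h3 := (Finset.HasAntidiagonal.sigmaAntidiagonalEquivProd (A := ℕ)).summable_iff.2 hgs
    have h4 := h3.sigma' (fun k => (hasSum_fintype _).summable)
    refine h4.congr fun k => ?_
    rw [tsum_fintype, ← Finset.sum_coe_sort (Finset.HasAntidiagonal.antidiagonal k) g]
    rfl
  refine Summable.of_nonneg_of_le (fun k => by positivity) (fun k => ?_) h2
  rw [Finset.Nat.sum_antidiagonal_eq_sum_range_succ_mk, Finset.mul_sum, Finset.sum_div]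
  refine Finset.sum_le_sum fun m hm => ?_
  have hmk : m ≤ k := Nat.lt_succ_iff.1 (Finset.mem_range.1 hm)
  have h5 : ((m.factorial : ℝ) * ((k - m).factorial : ℝ)) ≤ k.factorial := by
    exact_mod_cast Nat.le_of_dvd k.factorial_pos (Nat.factorial_mul_factorial_dvd_factorial hmk)
  have h6 : A ^ k = A ^ m * A ^ (k - m) := by rw [← pow_add, Nat.add_sub_cancel' hmk]
  simp only [hg]
  rw [div_mul_div_comm, h6, mul_pow, ← mul_assoc]
  exact div_le_div_of_nonneg_left (by positivity) (by positivity) h5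

section
variable {Ω : Type*} [MeasurableSpace Ω] {P : Measure Ω} [IsProbabilityMeasure P]
  {U : (N : ℕ) → Ω → Fin N → ℂ} {Γ : (k : ℕ) → (Fin k → ℕ) → ℝ}

open Classical in
/-- The limiting moments: only tree pairs contribute to the limit, each at most `Bᵏ`, which
together with the count of tree pairs gives the growth bound. -/
lemma HypGamma.moments_lim (h : HypGamma P U Γ) (γ : ℝ) {σ : Measure ℝ} [IsFiniteMeasure σ]
    (hσ : ∃ R : ℝ, σ (Set.Icc (-R) R)ᶜ = 0)
    {M : (N : ℕ) → Ω → Matrix (Fin N) (Fin N) ℂ}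
    (hMm : ∀ N, Measurable (M N)) (hM : ∀ N ω, (M N ω).IsHermitian)
    (hlaw : ∀ N, 1 ≤ N → LawAt P γ σ (U N) (M N)) :
    ∃ m : ℕ → ℝ, (∀ k, Tendsto (fun N : ℕ => (∫ ω, (M N ω ^ k).trace ∂P).re / N) atTop (𝓝 (m k))) ∧
      ∀ θ : ℝ, 0 ≤ θ → Summable fun k : ℕ => |m k| * θ ^ k / k.factorial := by
  obtain ⟨B, hB, hL⟩ := h.pairTerm_lim γ hσ
  have key : ∀ k : ℕ, ∃ m : ℝ,
      Tendsto (fun N : ℕ => (∫ ω, (M N ω ^ k).trace ∂P).re / N) atTop (𝓝 m) ∧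
      |m| ≤ (16 * B) ^ k * ∑ m ∈ Finset.range (k + 1), (m : ℝ) ^ (k - m) := by
    intro k
    rcases k with _ | n
    · refine ⟨1, ?_, by simp⟩
      refine (tendsto_congr' ?_).2 tendsto_const_nhds
      filter_upwards [eventually_ge_atTop 1] with N hN
      have : (N : ℝ) ≠ 0 := by positivity
      simp [this]
    · choose! L hLb hLt using hL (n + 1) n.succ_pos
      set S : ℂ := ∑ q ∈ canon (n + 1), ∑ p ∈ canon (n + 1), L p q with hS
      have ht : Tendsto (fun N : ℕ => (∫ ω, (M N ω ^ (n + 1)).trace ∂P) / N) atTop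
          (𝓝 ((Complex.I ^ (n + 1))⁻¹ * S)) := by
        have h1 : Tendsto (fun N : ℕ => (Complex.I ^ (n + 1))⁻¹ * ∑ q ∈ canon (n + 1),
            ∑ p ∈ canon (n + 1), pairTerm P U γ σ (n + 1) N p q / N) atTop
            (𝓝 ((Complex.I ^ (n + 1))⁻¹ * S)) :=
          (tendsto_finsetSum _ fun q hq => tendsto_finsetSum _ fun p hp =>
            hLt p hp q hq).const_mul _
        refine h1.congr' ?_
        filter_upwards [eventually_ge_atTop (n + 1)] with N hN
        simp only [← Finset.sum_div]
        rw [← h.trace_moments hσ hN (hMm N) (hM N) (hlaw N (by omega)), mul_div_assoc,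
          inv_mul_cancel_left₀ (pow_ne_zero _ Complex.I_ne_zero)]
      refine ⟨((Complex.I ^ (n + 1))⁻¹ * S).re, ?_, ?_⟩
      · refine ((Complex.continuous_re.tendsto _).comp ht).congr fun N => ?_
        simp [Complex.div_natCast_re]
      · refine (Complex.abs_re_le_norm _).trans ?_
        have h2 : ‖(Complex.I ^ (n + 1))⁻¹ * S‖ = ‖S‖ := by simp
        rw [h2]
        calc ‖S‖ ≤ ∑ q ∈ canon (n + 1), ∑ p ∈ canon (n + 1), ‖L p q‖ :=
              (norm_sum_le _ _).trans (Finset.sum_le_sum fun q _ => norm_sum_le _ _)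
          _ ≤ ∑ q ∈ canon (n + 1), ∑ p ∈ canon (n + 1),
                (if IsTreePair (n + 1) p q then B ^ (n + 1) else 0) :=
              Finset.sum_le_sum fun q hq => Finset.sum_le_sum fun p hp => hLb p hp q hq
          _ = (((canon (n + 1) ×ˢ canon (n + 1)).filter
                fun z => IsTreePair (n + 1) z.1 z.2).card : ℝ) * B ^ (n + 1) := by
              rw [Finset.sum_comm, ← Finset.sum_product', ← Finset.sum_filter, Finset.sum_const,
                nsmul_eq_mul]
          _ ≤ (16 ^ (n + 1) * ∑ m ∈ Finset.range (n + 1 + 1), (m : ℝ) ^ (n + 1 - m))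
                * B ^ (n + 1) := by
              refine mul_le_mul_of_nonneg_right ?_ (by positivity)
              exact_mod_cast card_treePairs n.succ_pos
          _ = _ := by rw [mul_pow]; ring
  choose m hm hmb using key
  refine ⟨m, hm, fun θ hθ => ?_⟩
  refine Summable.of_nonneg_of_le (fun k => by positivity) (fun k => ?_)
    (summable_growth (A := 16 * B * θ) (by positivity))
  refine div_le_div_of_nonneg_right ?_ (by positivity)
  calc |m k| * θ ^ k ≤ (16 * B) ^ k * (∑ m ∈ Finset.range (k + 1), (m : ℝ) ^ (k - m)) * θ ^ k :=
        mul_le_mul_of_nonneg_right (hmb k) (by positivity)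
    _ = _ := by rw [mul_pow (16 * B) θ]; ring
end

/-! ### Mean spectral distributions -/

lemma trace_pow_eq_sum_eigenvalues {N : ℕ} {A : Matrix (Fin N) (Fin N) ℂ} (hA : A.IsHermitian)
    (k : ℕ) : (A ^ k).trace = ((∑ i, hA.eigenvalues i ^ k : ℝ) : ℂ) := by
  conv_lhs => rw [hA.spectral_theorem]
  rw [← map_pow, Unitary.conjStarAlgAut_apply, Matrix.diagonal_pow, Matrix.trace_mul_cycle]
  simp [Matrix.trace_diagonal]

instance isProbabilityMeasure_ESD {N : ℕ} [NeZero N] {A : Matrix (Fin N) (Fin N) ℂ}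
    (hA : A.IsHermitian) : IsProbabilityMeasure (ESD hA) := by
  refine ⟨?_⟩
  simp only [ESD, Measure.smul_apply, Measure.finsetSum_apply, measure_univ, smul_eq_mul]
  simp [ENNReal.inv_mul_cancel, NeZero.ne N]

lemma integrable_ESD {N : ℕ} {A : Matrix (Fin N) (Fin N) ℂ} (hA : A.IsHermitian) (f : ℝ → ℝ) :
    Integrable f (ESD hA) := by
  rcases N.eq_zero_or_pos with rfl | hN
  · simp [ESD]
  · refine Integrable.smul_measure ?_ (by simp [hN.ne'])
    rw [integrable_finsetSum_measure]
    exact fun i _ => integrable_dirac (by simp)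

lemma integral_ESD {N : ℕ} {A : Matrix (Fin N) (Fin N) ℂ} (hA : A.IsHermitian) (f : ℝ → ℝ) :
    ∫ x, f x ∂(ESD hA) = (∑ i, f (hA.eigenvalues i)) / N := by
  rw [ESD, integral_smul_measure, integral_finsetSum_measure fun i _ => integrable_dirac (by simp)]
  simp [div_eq_inv_mul]

section
variable {Ω : Type*} [MeasurableSpace Ω] {N : ℕ} {M : Ω → Matrix (Fin N) (Fin N) ℂ}

lemma measurable_trace_pow (hM : Measurable M) (k : ℕ) : Measurable fun ω => (M ω ^ k).trace := by
  have h : ∀ k, ∀ a b, Measurable fun ω => (M ω ^ k) a b := by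
    intro k
    induction k with
    | zero => intro a b; simp only [pow_zero]; exact measurable_const
    | succ k ih =>
      intro a b
      simp only [pow_succ, Matrix.mul_apply]
      refine Finset.measurable_fun_sum _ fun c _ => (ih a c).mul ?_
      exact (measurable_pi_apply b).comp ((measurable_pi_apply c).comp hM)
  simp only [Matrix.trace, Matrix.diag]
  exact Finset.measurable_fun_sum _ fun a _ => h k a a

lemma measurable_sum_poly (hM : Measurable M) (hH : ∀ ω, (M ω).IsHermitian)
    (p : Polynomial ℝ) : Measurable fun ω => ∑ i, p.eval ((hH ω).eigenvalues i) := by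
  have h : ∀ ω, ∑ i, p.eval ((hH ω).eigenvalues i) =
      ∑ k ∈ Finset.range (p.natDegree + 1), p.coeff k * ((M ω ^ k).trace).re := by
    intro ω
    simp only [Polynomial.eval_eq_sum_range, trace_pow_eq_sum_eigenvalues (hH ω),
      Complex.ofReal_re, Finset.mul_sum]
    exact Finset.sum_comm
  simp only [h]
  exact Finset.measurable_fun_sum _ fun k _ =>
    (Complex.measurable_re.comp (measurable_trace_pow hM k)).const_mul _

/-- Linear statistics of continuous functions are pointwise limits of linear statistics of
polynomials, hence measurable. -/
lemma measurable_sum_continuous (hM : Measurable M) (hH : ∀ ω, (M ω).IsHermitian)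
    {g : ℝ → ℝ} (hg : Continuous g) : Measurable fun ω => ∑ i, g ((hH ω).eigenvalues i) := by
  have h : ∀ n : ℕ, ∃ p : Polynomial ℝ, ∀ x ∈ Set.Icc (-(n : ℝ)) n,
      |p.eval x - g x| < 1 / ((n : ℝ) + 1) := fun n =>
    exists_polynomial_near_of_continuousOn _ _ g hg.continuousOn _ (by positivity)
  choose p hp using h
  refine measurable_of_tendsto_metrizable (fun n => measurable_sum_poly hM hH (p n)) ?_
  rw [tendsto_pi_nhds]
  intro ω
  refine tendsto_finsetSum _ fun i _ => ?_
  rw [tendsto_iff_norm_sub_tendsto_zero]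
  refine squeeze_zero' (Eventually.of_forall fun n => norm_nonneg _) ?_
    tendsto_one_div_add_atTop_nhds_zero_nat
  obtain ⟨n₀, hn₀⟩ := exists_nat_ge |(hH ω).eigenvalues i|
  filter_upwards [eventually_ge_atTop n₀] with n hn
  refine (hp n _ (abs_le.1 (hn₀.trans (by exact_mod_cast hn)))).le

/-- It suffices to test the half-lines `(-∞, a]`, whose indicators are limits of continuous functions. -/
lemma measurable_ESD [NeZero N] (hM : Measurable M) (hH : ∀ ω, (M ω).IsHermitian) :
    Measurable fun ω => ESD (hH ω) := by
  refine Measurable.measure_of_isPiSystem_of_isProbabilityMeasure (borel_eq_generateFrom_Iic ℝ)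
    isPiSystem_Iic ?_
  rintro _ ⟨a, rfl⟩
  have h1 : ∀ ω, ESD (hH ω) (Set.Iic a) =
      ENNReal.ofReal ((∑ i, (Set.Iic a).indicator (1 : ℝ → ℝ) ((hH ω).eigenvalues i)) / N) := by
    intro ω
    rw [← integral_ESD, integral_indicator_one measurableSet_Iic, ofReal_measureReal]
  simp only [h1]
  refine ENNReal.measurable_ofReal.comp (Measurable.div_const ?_ _)
  -- the indicator of `(-∞, a]` is the limit of continuous ramps
  refine measurable_of_tendsto_metrizable (f := fun (n : ℕ) ω => ∑ i,
    (fun x => max 0 (1 - (n : ℝ) * max 0 (x - a))) ((hH ω).eigenvalues i))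
    (fun n => measurable_sum_continuous hM hH
      (g := fun x => max 0 (1 - (n : ℝ) * max 0 (x - a))) (by fun_prop)) ?_
  rw [tendsto_pi_nhds]
  intro ω
  refine tendsto_finsetSum _ fun i _ => ?_
  set x := (hH ω).eigenvalues i
  by_cases hx : x ≤ a
  · have : max 0 (x - a) = 0 := max_eq_left (by linarith)
    simp [this, hx]
  · push Not at hx
    have h2 : max 0 (x - a) = x - a := max_eq_right (by linarith)
    obtain ⟨n₀, hn₀⟩ := exists_nat_ge (1 / (x - a))
    have hz : (Set.Iic a).indicator (1 : ℝ → ℝ) x = 0 := by simp [hx]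
    rw [hz]
    refine (tendsto_congr' ?_).2 tendsto_const_nhds
    filter_upwards [eventually_ge_atTop n₀] with n hn
    have h3 : 1 / (x - a) ≤ n := hn₀.trans (by exact_mod_cast hn)
    rw [div_le_iff₀ (by linarith)] at h3
    simp only [h2]
    exact max_eq_left (by linarith)

/-- The mean spectral distribution of a random Hermitian matrix. -/
def meanESD (P : Measure Ω) (hH : ∀ ω, (M ω).IsHermitian) : Measure ℝ :=
  P.bind fun ω => ESD (hH ω)

variable {P : Measure Ω} [IsProbabilityMeasure P]

lemma isProbabilityMeasure_meanESD [NeZero N] (hM : Measurable M) (hH : ∀ ω, (M ω).IsHermitian) :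
    IsProbabilityMeasure (meanESD P hH) :=
  isProbabilityMeasure_bind (measurable_ESD hM hH).aemeasurable
    (Eventually.of_forall fun ω => inferInstance)

/-- The family of empirical spectral distributions as a Markov kernel. -/
def kernelESD [NeZero N] (hM : Measurable M) (hH : ∀ ω, (M ω).IsHermitian) : Kernel Ω ℝ :=
  ⟨fun ω => ESD (hH ω), measurable_ESD hM hH⟩

lemma integral_meanESD [NeZero N] (hM : Measurable M) (hH : ∀ ω, (M ω).IsHermitian) {f : ℝ → ℝ}
    (hf : Integrable f (meanESD P hH)) :
    ∫ x, f x ∂(meanESD P hH) = ∫ ω, ∫ x, f x ∂(ESD (hH ω)) ∂P := by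
  have h1 : meanESD P hH = (kernelESD hM hH ∘ₖ Kernel.const Unit P) () := by
    rw [Kernel.comp_apply]; rfl
  rw [h1] at hf ⊢
  rw [Kernel.integral_comp hf]
  rfl

lemma integrable_meanESD [NeZero N] (hM : Measurable M) (hH : ∀ ω, (M ω).IsHermitian) {f : ℝ → ℝ}
    (hf : Measurable f)
    (hi : Integrable (fun ω => ∫ x, ‖f x‖ ∂(ESD (hH ω))) P) : Integrable f (meanESD P hH) := by
  have h1 : meanESD P hH = kernelESD hM hH ∘ₘ P := rfl
  rw [h1, Measure.integrable_comp_iff hf.aestronglyMeasurable]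
  exact ⟨Eventually.of_forall fun ω => integrable_ESD _ _, hi⟩

lemma allMom_trace_pow (hE : ∀ a b, AllMom P fun ω => M ω a b) (k : ℕ) :
    AllMom P fun ω => (M ω ^ k).trace := by
  have h : ∀ k, ∀ a b, AllMom P fun ω => (M ω ^ k) a b := by
    intro k
    induction k with
    | zero => intro a b; simp only [pow_zero]; exact AllMom.const _
    | succ k ih =>
      intro a b
      simp only [pow_succ, Matrix.mul_apply]
      exact AllMom.sum fun c _ => (ih a c).mul (hE c b)
  simp only [Matrix.trace, Matrix.diag]
  exact AllMom.sum fun a _ => h k a a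

/-- Since `|x ^ k| ≤ 1 + x ^ (2 k)`, it is enough that the trace of an even power is integrable. -/
lemma integrable_pow_meanESD [NeZero N] (hM : Measurable M) (hH : ∀ ω, (M ω).IsHermitian)
    (hE : ∀ a b, AllMom P fun ω => M ω a b) (k : ℕ) :
    Integrable (fun x : ℝ => x ^ k) (meanESD P hH) := by
  refine integrable_meanESD hM hH (by fun_prop) ?_
  simp only [integral_ESD]
  refine Integrable.div_const ?_ _
  have h1 : Integrable (fun ω => (N : ℝ) + ((M ω ^ (2 * k)).trace).re) P :=
    (integrable_const _).add (allMom_trace_pow hE (2 * k)).integrable.re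
  refine h1.mono' (measurable_sum_continuous hM hH
    (g := fun x => ‖x ^ k‖) (by fun_prop)).aestronglyMeasurable (Eventually.of_forall fun ω => ?_)
  have h2 : ∀ x : ℝ, ‖x ^ k‖ ≤ 1 + x ^ (2 * k) := fun x => by
    rw [Real.norm_eq_abs, mul_comm, pow_mul, ← sq_abs (x ^ k)]
    nlinarith [sq_nonneg (|x ^ k| - 1), abs_nonneg (x ^ k)]
  rw [Real.norm_of_nonneg (by positivity), trace_pow_eq_sum_eigenvalues (hH ω), Complex.ofReal_re]
  calc ∑ i, ‖(hH ω).eigenvalues i ^ k‖ ≤ ∑ i, (1 + (hH ω).eigenvalues i ^ (2 * k)) :=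
        Finset.sum_le_sum fun i _ => h2 _
    _ = _ := by simp [Finset.sum_add_distrib]

lemma integral_pow_meanESD [NeZero N] (hM : Measurable M) (hH : ∀ ω, (M ω).IsHermitian)
    (hE : ∀ a b, AllMom P fun ω => M ω a b) (k : ℕ) :
    ∫ x, x ^ k ∂(meanESD P hH) = (∫ ω, (M ω ^ k).trace ∂P).re / N := by
  rw [integral_meanESD hM hH (integrable_pow_meanESD hM hH hE k)]
  simp only [integral_ESD, trace_pow_eq_sum_eigenvalues (hH _)]
  rw [integral_complex_ofReal, Complex.ofReal_re, integral_div]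

end

/-! ### Convergence -/

theorem stmt3
    {Ω : Type*} [MeasurableSpace Ω] (P : Measure Ω) [IsProbabilityMeasure P]
    (γ : ℝ) (σ : Measure ℝ) [IsFiniteMeasure σ]
    -- σ has compact support:
    (hσc : ∃ R : ℝ, σ (Set.Icc (-R) R)ᶜ = 0)
    (Γ : (k : ℕ) → (Fin k → ℕ) → ℝ)
    (U : (N : ℕ) → Ω → Fin N → ℂ) (hU : HypGamma P U Γ)
    (M : (N : ℕ) → Ω → Matrix (Fin N) (Fin N) ℂ)
    (hMmeas : ∀ N, Measurable (M N))
    (hHerm : ∀ N ω, (M N ω).IsHermitian)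
    (hlaw : HasMatrixLaw P γ σ U M) :
    ∃ Λ : Measure ℝ, IsProbabilityMeasure Λ ∧
      -- Λ has finite exponential moments of all orders:
      (∀ θ : ℝ, 0 < θ → Integrable (fun x => Real.exp (θ * |x|)) Λ) ∧
      -- in particular Λ is determined by its moments:
      (∀ Λ' : Measure ℝ, IsProbabilityMeasure Λ' →
        (∀ k : ℕ, Integrable (fun x => x ^ k) Λ') →
        (∀ k : ℕ, ∫ x, x ^ k ∂Λ' = ∫ x, x ^ k ∂Λ) → Λ' = Λ) ∧
      -- the mean spectral distributions converge weakly to Λ: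
      ∀ f : BoundedContinuousFunction ℝ ℝ,
        Tendsto (fun N => ∫ ω, (∫ x, f x ∂(ESD (hHerm N ω))) ∂P) atTop
          (𝓝 (∫ x, f x ∂Λ)) := by
  have hlawAt : ∀ N, 1 ≤ N → LawAt P γ σ (U N) (M N) := by
    intro N hN A hA
    have h1 := hlaw N hN A hA
    simp only [trM, quad, Complex.div_natCast_re, levyPsi_zero]
    exact h1
  have hE : ∀ N, 1 ≤ N → ∀ a b, AllMom P fun ω => M N ω a b := fun N hN a b =>
    allMom_entry hσc (fun i => hU.allMom N i) (hMmeas N) (hHerm N) (hlawAt N hN) a b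
  obtain ⟨m, hm, hms⟩ := hU.moments_lim γ hσc hMmeas hHerm hlawAt
  -- The index is shifted by one: for `N = 0` the spectral distribution is the zero measure.
  set μ : ℕ → Measure ℝ := fun N => meanESD P (hHerm (N + 1)) with hμ
  have hprob : ∀ N, IsProbabilityMeasure (μ N) := fun N =>
    isProbabilityMeasure_meanESD (hMmeas (N + 1)) (hHerm (N + 1))
  obtain ⟨Λ, hΛ, hexp, hdet, hconv⟩ := method_of_moments μ
    (fun N k => integrable_pow_meanESD (hMmeas _) (hHerm _) (hE _ (by omega)) k) m
    (fun k => by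
      have h1 := (tendsto_add_atTop_iff_nat 1).2 (hm k)
      refine h1.congr fun N => ?_
      rw [hμ, integral_pow_meanESD (hMmeas _) (hHerm _) (hE _ (by omega)) k])
    hms
  refine ⟨Λ, hΛ, hexp, hdet, fun f => ?_⟩
  rw [← tendsto_add_atTop_iff_nat 1]
  refine (hconv f).congr fun N => ?_
  exact integral_meanESD (hMmeas _) (hHerm _) (f.integrable (μ N))

end
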